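/- arXiv:2510.26088 — 2 statements merged into one kernel-verified Lean document; each statement's English description precedes it below -/
import Mathlib

section
/- Let T ∈ (0,∞) and let (s,u) and (σ,v) be solutions of problem (P) on (0,T] with initial data (s₀,φ) ∈ W and (σ₀,ψ) ∈ W, respectively. Let M > 0 be such that 0 ≤ φ(x) ≤ M(s₀ − x) on [0,s₀] and 0 ≤ ψ(x) ≤ M(σ₀ − x) on [0,σ₀]. Then for every ε > 0 there exists η > 0, depending only on ε, p, s₀, sup_{t∈(0,T]} u(t,0), T, and M, such that if |s₀ − σ₀| + ‖φ − ψ‖_{L^∞} ≤ η (with φ, ψ extended by zero outside their intervals), then sup_{t∈(0,T]} |s(t) − σ(t)| + sup_{t∈(0,T]} ‖u(t) − v(t)‖_{L^∞} ≤ ε (with u(t,·), v(t,·) extended by zero). -/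
open Set MeasureTheory Filter Topology Real
open scoped ENNReal

noncomputable section

/-- `(s₀, φ)` belongs to the class `W`: `s₀ ∈ (0,∞)`, `φ` is Lipschitz on `[0,s₀]`,
not identically zero, nonnegative there, and vanishes at `s₀`. -/
def memW (s₀ : ℝ) (φ : ℝ → ℝ) : Prop :=
  0 < s₀ ∧ (∃ K : NNReal, LipschitzOnWith K φ (Icc 0 s₀)) ∧
    (∃ x ∈ Icc 0 s₀, φ x ≠ 0) ∧ (∀ x ∈ Icc 0 s₀, 0 ≤ φ x) ∧ φ s₀ = 0

/-- `(s,u)` is a solution of the one-phase Stefan problem (P) on `(0,T]` (finite `T`)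
with exponent `p` and initial data `(s₀,φ)`. -/
structure IsSolOn (p s₀ : ℝ) (φ : ℝ → ℝ) (T : ℝ) (s : ℝ → ℝ) (u : ℝ → ℝ → ℝ) : Prop where
  T_pos : 0 < T
  s_cont : ContinuousOn s (Icc 0 T)
  s_diff : ∀ t ∈ Ioc 0 T, DifferentiableAt ℝ s t
  s_deriv_cont : ContinuousOn (deriv s) (Ioc 0 T)
  s_pos : ∀ t ∈ Icc 0 T, 0 < s t
  ut_diff : ∀ t ∈ Ioc 0 T, ∀ x ∈ Ioo 0 (s t), DifferentiableAt ℝ (fun τ => u τ x) t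
  ux_diff : ∀ t ∈ Ioc 0 T, ∀ x ∈ Ioo 0 (s t), DifferentiableAt ℝ (u t) x
  uxx_diff : ∀ t ∈ Ioc 0 T, ∀ x ∈ Ioo 0 (s t), DifferentiableAt ℝ (deriv (u t)) x
  ut_cont : ContinuousOn (fun q : ℝ × ℝ => deriv (fun τ => u τ q.2) q.1)
      {q : ℝ × ℝ | q.1 ∈ Ioc 0 T ∧ q.2 ∈ Ioo 0 (s q.1)}
  uxx_cont : ContinuousOn (fun q : ℝ × ℝ => deriv (deriv (u q.1)) q.2)
      {q : ℝ × ℝ | q.1 ∈ Ioc 0 T ∧ q.2 ∈ Ioo 0 (s q.1)}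
  ux_cont : ContinuousOn (fun q : ℝ × ℝ => deriv (u q.1) q.2)
      {q : ℝ × ℝ | q.1 ∈ Ioc 0 T ∧ q.2 ∈ Icc 0 (s q.1)}
  u_cont : ContinuousOn (fun q : ℝ × ℝ => u q.1 q.2)
      {q : ℝ × ℝ | q.1 ∈ Icc 0 T ∧ q.2 ∈ Icc 0 (s q.1)}
  u_nonneg : ∀ t ∈ Icc 0 T, ∀ x ∈ Icc 0 (s t), 0 ≤ u t x
  heat : ∀ t ∈ Ioc 0 T, ∀ x ∈ Ioo 0 (s t),
      deriv (fun τ => u τ x) t = deriv (deriv (u t)) x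
  bc_zero : ∀ t ∈ Ioc 0 T, -deriv (u t) 0 = u t 0 ^ p
  bc_free : ∀ t ∈ Ioc 0 T, u t (s t) = 0
  stefan : ∀ t ∈ Ioc 0 T, deriv s t = -deriv (u t) (s t)
  init : ∀ x ∈ Icc 0 s₀, u 0 x = φ x
  init_s : s 0 = s₀

/-- `(s,u)` is a global-in-time solution of problem (P). -/
def IsGlobalSol (p s₀ : ℝ) (φ : ℝ → ℝ) (s : ℝ → ℝ) (u : ℝ → ℝ → ℝ) : Prop :=
  ∀ T : ℝ, 0 < T → IsSolOn p s₀ φ T s u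

/-- `Tm ∈ (0,∞]` is the maximal existence time of the solution `(s,u)` of (P) with
initial data `(s₀,φ)`: the solution exists on `(0,T]` for every `T < Tm`, and for
`T > Tm` problem (P) admits no solution on `(0,T]`. -/
def IsMaxSol (p s₀ : ℝ) (φ : ℝ → ℝ) (Tm : ℝ≥0∞) (s : ℝ → ℝ) (u : ℝ → ℝ → ℝ) : Prop :=
  0 < Tm ∧
    (∀ T : ℝ, 0 < T → ENNReal.ofReal T < Tm → IsSolOn p s₀ φ T s u) ∧
    (∀ T : ℝ, Tm < ENNReal.ofReal T → ¬∃ σ v, IsSolOn p s₀ φ T σ v)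

/-- The sup norm `‖u(t)‖_{L^∞(0,s(t))}`. -/
def supNorm (s : ℝ → ℝ) (u : ℝ → ℝ → ℝ) (t : ℝ) : ℝ :=
  sSup (u t '' Ioo 0 (s t))

/-- The `L¹` norm `‖u(t)‖_{L¹(0,s(t))}` of the nonnegative function `u(t,·)`. -/
def L1Norm (s : ℝ → ℝ) (u : ℝ → ℝ → ℝ) (t : ℝ) : ℝ :=
  ∫ x in (0:ℝ)..(s t), u t x

/-- The energy `E(s(t),u(t))`. -/
def energy (p : ℝ) (s : ℝ → ℝ) (u : ℝ → ℝ → ℝ) (t : ℝ) : ℝ :=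
  1 / 2 * (∫ x in (0:ℝ)..(s t), (deriv (u t) x) ^ 2) - u t 0 ^ (p + 1) / (p + 1)

/-- The extension of a function on `[0,a]` by zero outside `[0,a]`. -/
def extZero (a : ℝ) (f : ℝ → ℝ) : ℝ → ℝ := fun x => if x ∈ Icc 0 a then f x else 0

/-!
Each solution has an enthalpy `∫_x^{s t} (1 + u t y) dy`, which solves the heat equation and has
the Stefan condition built in. The maximum principle for the difference of two enthalpies bounds
`s - σ` by the distance of the initial data plus the time integral of the difference of the boundary
fluxes. Conversely a barrier, growing exponentially in `t` and decaying in `x`, bounds `u - v` by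
the gap between the free boundaries, since both temperatures are at most linear near them.
Measuring everything against `exp (L * t)` with `L` large makes this feedback loop contracting, so
the distance of the solutions is at most a constant times the distance of the data. The flux
`u ^ p` is only locally Lipschitz; a continuity argument in `t` shows that the traces at `x = 0`
never separate by more than `1`, so that one Lipschitz constant serves throughout.
-/

section OneSidedDerivatives

variable {f f' : ℝ → ℝ} {a d k : ℝ}

theorem nonpos_of_hasDerivWithinAt_Ici (h : HasDerivWithinAt f d (Ici a) a)
    (hmax : ∀ᶠ x in 𝓝[>] a, f x ≤ f a) : d ≤ 0 := by
  have hlocal : IsLocalMaxOn f (Ici a) a := by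
    rw [IsLocalMaxOn, IsMaxFilter, ← Ioi_insert, nhdsWithin_insert, eventually_sup]
    exact ⟨eventually_pure.2 le_rfl, hmax⟩
  have hone : (1 : ℝ) ∈ posTangentConeAt (Ici a) a :=
    mem_posTangentConeAt_of_segment_subset
      ((convex_Ici a).segment_subset self_mem_Ici (by simp))
  simpa using hlocal.hasFDerivWithinAt_nonpos h.hasFDerivWithinAt hone

theorem nonneg_of_hasDerivWithinAt_Iic (h : HasDerivWithinAt f d (Iic a) a)
    (hmax : ∀ᶠ x in 𝓝[<] a, f x ≤ f a) : 0 ≤ d := by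
  have hlocal : IsLocalMaxOn f (Iic a) a := by
    rw [IsLocalMaxOn, IsMaxFilter, ← Iio_insert, nhdsWithin_insert, eventually_sup]
    exact ⟨eventually_pure.2 le_rfl, hmax⟩
  have hneg_one : (-1 : ℝ) ∈ posTangentConeAt (Iic a) a :=
    mem_posTangentConeAt_of_segment_subset
      ((convex_Iic a).segment_subset self_mem_Iic (by simp))
  simpa using hlocal.hasFDerivWithinAt_nonpos h.hasFDerivWithinAt hneg_one

theorem nonpos_of_isLocalMax_of_hasDerivAt_hasDerivAt (hmax : IsLocalMax f a)
    (hf : ∀ᶠ x in 𝓝 a, HasDerivAt f (f' x) x) (hf' : HasDerivAt f' d a) : d ≤ 0 := by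
  by_contra! hd
  have hderiv : deriv f =ᶠ[𝓝 a] f' := hf.mono fun _ hx => hx.deriv
  have hmin : IsLocalMin f a :=
    isLocalMin_of_deriv_deriv_pos (by rwa [hderiv.deriv_eq, hf'.deriv]) hmax.deriv_eq_zero
      hf.self_of_nhds.continuousAt
  have hconst : f =ᶠ[𝓝 a] fun _ => f a :=
    hmax.mp (hmin.mono fun _ hge hle => le_antisymm hle hge)
  have hzero : d = 0 := by
    rw [← hf'.deriv, ← hderiv.deriv_eq, hconst.deriv.deriv_eq]
    simp
  exact hd.ne' hzero

theorem hasDerivAt_mul_exp_mul_sub (E k a x : ℝ) :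
    HasDerivAt (fun y => E * exp (k * (y - a))) (k * (E * exp (k * (x - a)))) x :=
  ((((hasDerivAt_id x).sub_const a).const_mul k).exp.const_mul E).congr_deriv (by simp; ring)

theorem deriv_right_le_of_le_mul_exp (h : HasDerivWithinAt f d (Ici a) a)
    (hle : ∀ᶠ x in 𝓝[>] a, f x ≤ f a * exp (k * (x - a))) : d ≤ k * f a := by
  have hsub := h.sub (hasDerivAt_mul_exp_mul_sub (f a) k a a).hasDerivWithinAt
  have := nonpos_of_hasDerivWithinAt_Ici hsub (hle.mono fun x hx => by simpa using hx)
  simpa using this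

theorem le_deriv_left_of_le_mul_exp (h : HasDerivWithinAt f d (Iic a) a)
    (hle : ∀ᶠ x in 𝓝[<] a, f x ≤ f a * exp (k * (x - a))) : k * f a ≤ d := by
  have hsub := h.sub (hasDerivAt_mul_exp_mul_sub (f a) k a a).hasDerivWithinAt
  have := nonneg_of_hasDerivWithinAt_Iic hsub (hle.mono fun x hx => by simpa using hx)
  simpa using this

theorem second_deriv_le_of_le_mul_exp (hf : ∀ᶠ x in 𝓝 a, HasDerivAt f (f' x) x)
    (hf' : HasDerivAt f' d a) (hle : ∀ᶠ x in 𝓝 a, f x ≤ f a * exp (k * (x - a))) :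
    d ≤ k ^ 2 * f a := by
  have hmax : IsLocalMax (fun x => f x - f a * exp (k * (x - a))) a :=
    hle.mono fun x hx => by simpa using hx
  have := nonpos_of_isLocalMax_of_hasDerivAt_hasDerivAt hmax
    (hf.mono fun x hx => hx.sub (hasDerivAt_mul_exp_mul_sub (f a) k a x))
    (hf'.sub ((hasDerivAt_mul_exp_mul_sub (f a) k a a).const_mul k))
  simp only [sub_self, mul_zero, exp_zero, mul_one] at this
  linarith

end OneSidedDerivatives

section MaximumPrinciple

/-- The closed region `0 ≤ t ≤ T`, `0 ≤ x ≤ m t` below a moving boundary, in the coordinates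
`(t, x)`. -/
def movingRegion (T : ℝ) (m : ℝ → ℝ) : Set (ℝ × ℝ) :=
  {q | q.1 ∈ Icc 0 T ∧ q.2 ∈ Icc 0 (m q.1)}

/-- `f`, with spatial derivative `fx`, is a subsolution of the heat equation below the moving
boundary `m`, nonpositive at time zero. Time derivatives are taken from the left only. Wherever
`f > 0` on the lateral boundary, a strict Robin condition with coefficient `k` prevents `f` from
touching a multiple of `exp (k * x)` from below; on the boundary `x = 0` it suffices instead that
`f` does not increase in time. -/
structure IsHeatSubsolution (T : ℝ) (m : ℝ → ℝ) (k : ℝ) (f fx : ℝ → ℝ → ℝ) : Prop where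
  continuousOn : ContinuousOn (fun q : ℝ × ℝ => f q.1 q.2) (movingRegion T m)
  initial : ∀ x ∈ Icc 0 (m 0), f 0 x ≤ 0
  hasDerivAt : ∀ t ∈ Ioc 0 T, ∀ x ∈ Ioo 0 (m t), HasDerivAt (f t) (fx t x) x
  heat_le : ∀ t ∈ Ioc 0 T, ∀ x ∈ Ioo 0 (m t), ∃ ft fxx,
    HasDerivWithinAt (fun τ => f τ x) ft (Iic t) t ∧ HasDerivAt (fx t) fxx x ∧ ft ≤ fxx
  left_boundary : ∀ t ∈ Ioc 0 T, f t 0 ≤ 0 ∨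
    (∃ ft ≤ 0, HasDerivWithinAt (fun τ => f τ 0) ft (Iic t) t) ∨
    ∃ d > k * f t 0, HasDerivWithinAt (f t) d (Ici 0) 0
  right_boundary : ∀ t ∈ Ioc 0 T, f t (m t) ≤ 0 ∨
    ∃ d < k * f t (m t), HasDerivWithinAt (f t) d (Iic (m t)) (m t)

variable {T k : ℝ} {m : ℝ → ℝ} {f fx : ℝ → ℝ → ℝ}

theorem isCompact_movingRegion (hm : ContinuousOn m (Icc 0 T)) :
    IsCompact (movingRegion T m) := by
  obtain ⟨b, hb⟩ := isCompact_Icc.bddAbove_image hm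
  have hstrip : IsClosed {q : ℝ × ℝ | q.1 ∈ Icc 0 T} := isClosed_Icc.preimage continuous_fst
  have hclosed : IsClosed (movingRegion T m) := by
    have hle := hstrip.isClosed_le continuousOn_snd (hm.comp continuousOn_fst fun _ hq => hq)
    have := hle.inter (isClosed_Ici.preimage (continuous_snd (X := ℝ) (Y := ℝ)) (t := Ici 0))
    convert this using 1
    ext q
    simp only [movingRegion, mem_ofPred_eq, mem_Icc, mem_inter_iff, mem_preimage, mem_Ici]
    tauto
  have hbox : IsCompact (Icc 0 T ×ˢ Icc 0 b) := isCompact_Icc.prod isCompact_Icc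
  exact hbox.of_isClosed_subset hclosed fun q hq =>
    ⟨hq.1, hq.2.1, hq.2.2.trans (hb (mem_image_of_mem m hq.1))⟩

theorem exists_forall_le_mul_exp_sub {X : Type*} [TopologicalSpace X] {A : Set X}
    (hA : IsCompact A) (hne : A.Nonempty) {g ℓ : X → ℝ} (hg : ContinuousOn g A)
    (hℓ : ContinuousOn ℓ A) :
    ∃ q ∈ A, ∀ q' ∈ A, g q' ≤ g q * exp (ℓ q' - ℓ q) := by
  obtain ⟨q, hq, hmax⟩ := hA.exists_isMaxOn hne (hg.mul hℓ.neg.rexp)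
  refine ⟨q, hq, fun q' hq' => ?_⟩
  calc g q' = g q' * exp (-ℓ q') * exp (ℓ q') := by
        rw [mul_assoc, ← exp_add, neg_add_cancel, exp_zero, mul_one]
    _ ≤ g q * exp (-ℓ q) * exp (ℓ q') := mul_le_mul_of_nonneg_right (hmax hq') (exp_pos _).le
    _ = g q * exp (ℓ q' - ℓ q) := by rw [mul_assoc, ← exp_add, neg_add_eq_sub]

theorem eventually_mem_movingRegion_of_lt (hm : ContinuousOn m (Icc 0 T)) {t x : ℝ}
    (ht : t ∈ Ioc 0 T) (hx : 0 ≤ x) (hxm : x < m t) :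
    ∀ᶠ τ in 𝓝[<] t, (τ, x) ∈ movingRegion T m := by
  have hIcc : Icc 0 T ∈ 𝓝[<] t :=
    mem_of_superset (Ioo_mem_nhdsLT ht.1) fun τ hτ => ⟨hτ.1.le, hτ.2.le.trans ht.2⟩
  have hlt : ∀ᶠ τ in 𝓝[<] t, x < m τ :=
    ((hm t (Ioc_subset_Icc_self ht)).eventually (lt_mem_nhds hxm)).filter_mono
      (nhdsWithin_le_iff.2 hIcc)
  filter_upwards [hlt, hIcc] with τ hτ hτI using ⟨hτI, hx, hτ.le⟩

/-- Comparing `f` with the smallest multiple of `exp ((k² + 1) t + k x)` above it, the point of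
contact can be neither interior nor on the lateral boundary. -/
theorem IsHeatSubsolution.nonpos (h : IsHeatSubsolution T m k f fx)
    (hm : ContinuousOn m (Icc 0 T)) (hmpos : ∀ t ∈ Icc 0 T, 0 < m t) :
    ∀ t ∈ Icc 0 T, ∀ x ∈ Icc 0 (m t), f t x ≤ 0 := by
  intro t₁ ht₁ x₁ hx₁
  obtain ⟨⟨t, x⟩, ⟨ht, hx⟩, htouch⟩ := exists_forall_le_mul_exp_sub (isCompact_movingRegion hm)
    ⟨(t₁, x₁), ht₁, hx₁⟩ h.continuousOn (ℓ := fun q => (k ^ 2 + 1) * q.1 + k * q.2) (by fun_prop)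
  dsimp only at ht hx htouch
  suffices hcontact : f t x ≤ 0 from
    (htouch (t₁, x₁) ⟨ht₁, hx₁⟩).trans (mul_nonpos_of_nonpos_of_nonneg hcontact (exp_pos _).le)
  by_contra! hpos
  have htpos : 0 < t := ht.1.lt_of_ne' fun h0 => hpos.not_ge (h0 ▸ h.initial x (h0 ▸ hx))
  have ht' : t ∈ Ioc 0 T := ⟨htpos, ht.2⟩
  have hspace : ∀ y ∈ Icc 0 (m t), f t y ≤ f t x * exp (k * (y - x)) := fun y hy => by
    convert htouch (t, y) ⟨ht, hy⟩ using 3; ring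
  have htime : ∀ ft, x < m t → HasDerivWithinAt (fun τ => f τ x) ft (Iic t) t →
      (k ^ 2 + 1) * f t x ≤ ft := fun ft hxm hft => by
    refine le_deriv_left_of_le_mul_exp (f := fun τ => f τ x) hft ?_
    filter_upwards [eventually_mem_movingRegion_of_lt hm ht' hx.1 hxm] with τ hτ
    convert htouch (τ, x) hτ using 3; ring
  rcases hx.1.eq_or_lt with rfl | hx0
  · rcases h.left_boundary t ht' with hf | ⟨ft, hft, hderiv⟩ | ⟨d, hd, hderiv⟩
    · exact hpos.not_ge hf
    · have := htime ft (hmpos t ht) hderiv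
      nlinarith [sq_nonneg k]
    · refine hd.not_ge (deriv_right_le_of_le_mul_exp hderiv ?_)
      filter_upwards [Icc_mem_nhdsGT (hmpos t ht)] with y hy using hspace y hy
  rcases hx.2.eq_or_lt with rfl | hxm
  · rcases h.right_boundary t ht' with hf | ⟨d, hd, hderiv⟩
    · exact hpos.not_ge hf
    · refine hd.not_ge (le_deriv_left_of_le_mul_exp hderiv ?_)
      filter_upwards [Icc_mem_nhdsLT hx0] with y hy using hspace y hy
  · obtain ⟨ft, fxx, hft, hfxx, hle⟩ := h.heat_le t ht' x ⟨hx0, hxm⟩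
    have hfxx_le : fxx ≤ k ^ 2 * f t x := second_deriv_le_of_le_mul_exp
      (Filter.mem_of_superset (Ioo_mem_nhds hx0 hxm) (h.hasDerivAt t ht')) hfxx
      (Filter.mem_of_superset (Icc_mem_nhds hx0 hxm) hspace)
    linarith [htime ft hxm hft]

end MaximumPrinciple

section ZeroExtension

variable {a b A B C x : ℝ} {f g : ℝ → ℝ}

theorem extZero_of_mem (hx : x ∈ Icc 0 a) : extZero a f x = f x := if_pos hx

theorem extZero_of_lt (hx : a < x) : extZero a f x = 0 := if_neg fun h => hx.not_ge h.2

theorem extZero_mem_Icc (ha : 0 ≤ a) (hC : 0 ≤ C)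
    (hf : ∀ y ∈ Icc 0 a, 0 ≤ f y) (hfa : ∀ y ∈ Icc 0 a, f y ≤ C * (a - y)) (x : ℝ) :
    extZero a f x ∈ Icc 0 (C * a) := by
  unfold extZero
  split_ifs with hx
  · exact ⟨hf x hx, (hfa x hx).trans (mul_le_mul_of_nonneg_left (sub_le_self a hx.1) hC)⟩
  · exact ⟨le_rfl, mul_nonneg hC ha⟩

theorem abs_extZero_sub_extZero_le (hC : 0 ≤ C) (hf : ∀ y ∈ Icc 0 a, 0 ≤ f y)
    (hg : ∀ y ∈ Icc 0 b, 0 ≤ g y) (hfa : ∀ y ∈ Icc 0 a, f y ≤ C * (a - y))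
    (hgb : ∀ y ∈ Icc 0 b, g y ≤ C * (b - y)) (hfg : ∀ y ∈ Icc 0 (min a b), |f y - g y| ≤ B)
    (hab : |a - b| ≤ A) (hx : 0 ≤ x) :
    |extZero a f x - extZero b g x| ≤ max B (C * A) := by
  have hzero : 0 ≤ max B (C * A) :=
    le_max_of_le_right (mul_nonneg hC ((abs_nonneg _).trans hab))
  obtain ⟨hba, hab⟩ := abs_sub_le_iff.1 hab
  rcases le_or_gt x a with hxa | hxa <;> rcases le_or_gt x b with hxb | hxb
  · rw [extZero_of_mem ⟨hx, hxa⟩, extZero_of_mem ⟨hx, hxb⟩]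
    exact le_max_of_le_left (hfg x ⟨hx, le_min hxa hxb⟩)
  · rw [extZero_of_mem ⟨hx, hxa⟩, extZero_of_lt hxb, sub_zero, abs_of_nonneg (hf x ⟨hx, hxa⟩)]
    exact le_max_of_le_right ((hfa x ⟨hx, hxa⟩).trans (by gcongr; linarith))
  · rw [extZero_of_lt hxa, extZero_of_mem ⟨hx, hxb⟩, zero_sub, abs_neg,
      abs_of_nonneg (hg x ⟨hx, hxb⟩)]
    exact le_max_of_le_right ((hgb x ⟨hx, hxb⟩).trans (by gcongr; linarith))
  · rwa [extZero_of_lt hxa, extZero_of_lt hxb, sub_zero, abs_zero]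

end ZeroExtension

section SingleSolution

/-- The continuous extension of `u` to the plane: a point is first moved to the time interval
`[0, T]`, then to the space interval `[0, s t]`. -/
def clampExt (T : ℝ) (s : ℝ → ℝ) (u : ℝ → ℝ → ℝ) (t y : ℝ) : ℝ :=
  u (max 0 (min t T)) (max 0 (min y (s (max 0 (min t T)))))

/-- The enthalpy `∫_x^{s t} (1 + u t y) dy` to the right of `x`. Its `x`-derivative is `-(1 + u)`
and its left time derivative is the heat flux `-u_x`, so it solves the heat equation, with the
Stefan condition built in. The use of `clampExt` makes it meaningful for `x > s t` as well. -/
def enthalpy (T : ℝ) (s : ℝ → ℝ) (u : ℝ → ℝ → ℝ) (t x : ℝ) : ℝ :=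
  (∫ y in x..s t, clampExt T s u t y) + (s t - x)

theorem clampExt_of_mem {T t x : ℝ} {s : ℝ → ℝ} {u : ℝ → ℝ → ℝ} (ht : t ∈ Icc 0 T)
    (hx : x ∈ Icc 0 (s t)) : clampExt T s u t x = u t x := by
  rw [clampExt, min_eq_left ht.2, max_eq_right ht.1, min_eq_left hx.2, max_eq_right hx.1]

theorem enthalpy_boundary (T : ℝ) (s : ℝ → ℝ) (u : ℝ → ℝ → ℝ) (t : ℝ) :
    enthalpy T s u t (s t) = 0 := by
  simp [enthalpy]

namespace IsSolOn

variable {p s₀ T T' : ℝ} {φ s : ℝ → ℝ} {u : ℝ → ℝ → ℝ} {t x : ℝ}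

theorem mono_time (h : IsSolOn p s₀ φ T s u) (hT' : 0 < T') (hle : T' ≤ T) :
    IsSolOn p s₀ φ T' s u where
  T_pos := hT'
  s_cont := h.s_cont.mono (Icc_subset_Icc_right hle)
  s_diff := fun t ht => h.s_diff t (Ioc_subset_Ioc_right hle ht)
  s_deriv_cont := h.s_deriv_cont.mono (Ioc_subset_Ioc_right hle)
  s_pos := fun t ht => h.s_pos t (Icc_subset_Icc_right hle ht)
  ut_diff := fun t ht => h.ut_diff t (Ioc_subset_Ioc_right hle ht)
  ux_diff := fun t ht => h.ux_diff t (Ioc_subset_Ioc_right hle ht)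
  uxx_diff := fun t ht => h.uxx_diff t (Ioc_subset_Ioc_right hle ht)
  ut_cont := h.ut_cont.mono fun _ hq => ⟨Ioc_subset_Ioc_right hle hq.1, hq.2⟩
  uxx_cont := h.uxx_cont.mono fun _ hq => ⟨Ioc_subset_Ioc_right hle hq.1, hq.2⟩
  ux_cont := h.ux_cont.mono fun _ hq => ⟨Ioc_subset_Ioc_right hle hq.1, hq.2⟩
  u_cont := h.u_cont.mono fun _ hq => ⟨Icc_subset_Icc_right hle hq.1, hq.2⟩
  u_nonneg := fun t ht => h.u_nonneg t (Icc_subset_Icc_right hle ht)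
  heat := fun t ht => h.heat t (Ioc_subset_Ioc_right hle ht)
  bc_zero := fun t ht => h.bc_zero t (Ioc_subset_Ioc_right hle ht)
  bc_free := fun t ht => h.bc_free t (Ioc_subset_Ioc_right hle ht)
  stefan := fun t ht => h.stefan t (Ioc_subset_Ioc_right hle ht)
  init := h.init
  init_s := h.init_s

theorem init_pos (h : IsSolOn p s₀ φ T s u) : 0 < s₀ :=
  h.init_s ▸ h.s_pos 0 (left_mem_Icc.2 h.T_pos.le)

theorem init_nonneg (h : IsSolOn p s₀ φ T s u) : ∀ x ∈ Icc 0 s₀, 0 ≤ φ x := fun x hx =>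
  h.init x hx ▸ h.u_nonneg 0 (left_mem_Icc.2 h.T_pos.le) x (h.init_s.symm ▸ hx)

theorem continuousOn_slice (h : IsSolOn p s₀ φ T s u) (ht : t ∈ Icc 0 T) :
    ContinuousOn (u t) (Icc 0 (s t)) :=
  h.u_cont.comp (f := fun x => ((t, x) : ℝ × ℝ)) (by fun_prop) fun _ hx => ⟨ht, hx⟩

theorem continuousOn_deriv_slice (h : IsSolOn p s₀ φ T s u) (ht : t ∈ Ioc 0 T) :
    ContinuousOn (deriv (u t)) (Icc 0 (s t)) :=
  h.ux_cont.comp (f := fun x => ((t, x) : ℝ × ℝ)) (by fun_prop) fun _ hx => ⟨ht, hx⟩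

theorem continuousOn_trace (h : IsSolOn p s₀ φ T s u) :
    ContinuousOn (fun t => u t 0) (Icc 0 T) :=
  h.u_cont.comp (f := fun t => ((t, 0) : ℝ × ℝ)) (by fun_prop) fun t ht =>
    ⟨ht, left_mem_Icc.2 (h.s_pos t ht).le⟩

theorem trace_nonneg (h : IsSolOn p s₀ φ T s u) (ht : t ∈ Icc 0 T) : 0 ≤ u t 0 :=
  h.u_nonneg t ht 0 (left_mem_Icc.2 (h.s_pos t ht).le)

theorem boundary_eq_zero (h : IsSolOn p s₀ φ T s u) : ∀ t ∈ Icc 0 T, u t (s t) = 0 := by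
  have hcont : ContinuousOn (fun t => u t (s t)) (Icc 0 T) :=
    h.u_cont.comp (continuousOn_id.prodMk h.s_cont) fun t ht =>
      ⟨ht, right_mem_Icc.2 (h.s_pos t ht).le⟩
  have hzero : EqOn (fun t => u t (s t)) 0 (Ioc 0 T) := h.bc_free
  exact hzero.of_subset_closure hcont continuousOn_const Ioc_subset_Icc_self
    (closure_Ioc h.T_pos.ne).ge

theorem hasDerivWithinAt_Ici_zero (h : IsSolOn p s₀ φ T s u) (ht : t ∈ Ioc 0 T) :
    HasDerivWithinAt (u t) (deriv (u t) 0) (Ici 0) 0 := by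
  have ht' := Ioc_subset_Icc_self ht
  have hpos := h.s_pos t ht'
  have hmem : 0 ∈ Icc 0 (s t) := left_mem_Icc.2 hpos.le
  exact hasDerivWithinAt_Ici_of_tendsto_deriv
    (fun x hx => (h.ux_diff t ht x hx).differentiableWithinAt)
    ((h.continuousOn_slice ht' 0 hmem).mono Ioo_subset_Icc_self) (Ioo_mem_nhdsGT hpos)
    ((h.continuousOn_deriv_slice ht 0 hmem).mono_left (nhdsWithin_le_iff.2 (Icc_mem_nhdsGT hpos)))

theorem hasDerivWithinAt_Iic_boundary (h : IsSolOn p s₀ φ T s u) (ht : t ∈ Ioc 0 T) :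
    HasDerivWithinAt (u t) (deriv (u t) (s t)) (Iic (s t)) (s t) := by
  have ht' := Ioc_subset_Icc_self ht
  have hpos := h.s_pos t ht'
  have hmem : s t ∈ Icc 0 (s t) := right_mem_Icc.2 hpos.le
  exact hasDerivWithinAt_Iic_of_tendsto_deriv
    (fun x hx => (h.ux_diff t ht x hx).differentiableWithinAt)
    ((h.continuousOn_slice ht' _ hmem).mono Ioo_subset_Icc_self) (Ioo_mem_nhdsLT hpos)
    ((h.continuousOn_deriv_slice ht _ hmem).mono_left (nhdsWithin_le_iff.2 (Icc_mem_nhdsLT hpos)))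

theorem deriv_boundary_nonneg (h : IsSolOn p s₀ φ T s u) (ht : t ∈ Ioc 0 T) : 0 ≤ deriv s t := by
  have ht' := Ioc_subset_Icc_self ht
  rw [h.stefan t ht]
  refine nonneg_of_hasDerivWithinAt_Iic (h.hasDerivWithinAt_Iic_boundary ht).neg ?_
  filter_upwards [Icc_mem_nhdsLT (h.s_pos t ht')] with x hx
  simpa [h.bc_free t ht] using h.u_nonneg t ht' x hx

theorem monotoneOn_boundary (h : IsSolOn p s₀ φ T s u) : MonotoneOn s (Icc 0 T) := by
  refine monotoneOn_of_deriv_nonneg (convex_Icc 0 T) h.s_cont (fun t ht => ?_) fun t ht => ?_ <;>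
    rw [interior_Icc] at ht
  · exact (h.s_diff t (Ioo_subset_Ioc_self ht)).differentiableWithinAt
  · exact h.deriv_boundary_nonneg (Ioo_subset_Ioc_self ht)

theorem init_le_boundary (h : IsSolOn p s₀ φ T s u) (ht : t ∈ Icc 0 T) : s₀ ≤ s t :=
  h.init_s ▸ h.monotoneOn_boundary (left_mem_Icc.2 h.T_pos.le) ht ht.1

theorem mem_Ioo_boundary (h : IsSolOn p s₀ φ T s u) {t₁ : ℝ} (ht₁ : 0 ≤ t₁) (ht : t ∈ Icc t₁ T)
    (hx : x ∈ Ioo 0 (s t₁)) : x ∈ Ioo 0 (s t) :=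
  ⟨hx.1, hx.2.trans_le
    (h.monotoneOn_boundary ⟨ht₁, ht.1.trans ht.2⟩ ⟨ht₁.trans ht.1, ht.2⟩ ht.1)⟩

theorem nonneg_of_init_le_mul_sub (h : IsSolOn p s₀ φ T s u) {C : ℝ}
    (hφ : ∀ x ∈ Icc 0 s₀, φ x ≤ C * (s₀ - x)) : 0 ≤ C := by
  have hzero : 0 ∈ Icc 0 s₀ := left_mem_Icc.2 h.init_pos.le
  refine nonneg_of_mul_nonneg_left ((h.init_nonneg 0 hzero).trans (hφ 0 hzero)) ?_
  simpa using h.init_pos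

theorem le_mul_sub (h : IsSolOn p s₀ φ T s u) {C : ℝ} (hφ : ∀ x ∈ Icc 0 s₀, φ x ≤ C * (s₀ - x))
    (htrace : ∀ t ∈ Ioc 0 T, u t 0 ≤ C * s₀) :
    ∀ t ∈ Icc 0 T, ∀ x ∈ Icc 0 (s t), u t x ≤ C * (s t - x) := by
  have hC := h.nonneg_of_init_le_mul_sub hφ
  suffices hsub : IsHeatSubsolution T s 0 (fun t x => u t x - C * (s t - x))
      fun t x => deriv (u t) x + C from
    fun t ht x hx => sub_nonpos.1 (hsub.nonpos h.s_cont h.s_pos t ht x hx)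
  refine ⟨?_, fun x hx => ?_, fun t ht x hx => ?_, fun t ht x hx => ?_, fun t ht => .inl ?_,
    fun t ht => .inl ?_⟩
  · exact h.u_cont.sub (continuousOn_const.mul
      ((h.s_cont.comp continuousOn_fst fun _ hq => hq.1).sub continuousOn_snd))
  · rw [h.init_s] at hx ⊢
    rw [h.init x hx]
    exact sub_nonpos.2 (hφ x hx)
  · exact ((h.ux_diff t ht x hx).hasDerivAt.sub
      (((hasDerivAt_id x).const_sub (s t)).const_mul C)).congr_deriv (by ring)
  · refine ⟨deriv (fun τ => u τ x) t - C * deriv s t, deriv (deriv (u t)) x, ?_,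
      (h.uxx_diff t ht x hx).hasDerivAt.add_const C, ?_⟩
    · exact ((h.ut_diff t ht x hx).hasDerivAt.sub
        (((h.s_diff t ht).hasDerivAt.sub_const x).const_mul C)).hasDerivWithinAt
    · rw [h.heat t ht x hx]
      exact sub_le_self _ (mul_nonneg hC (h.deriv_boundary_nonneg ht))
  · rw [sub_zero]
    exact sub_nonpos.2 ((htrace t ht).trans
      (mul_le_mul_of_nonneg_left (h.init_le_boundary (Ioc_subset_Icc_self ht)) hC))
  · simp [h.bc_free t ht]

theorem clamp_mem (h : IsSolOn p s₀ φ T s u) (t x : ℝ) :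
    max 0 (min t T) ∈ Icc 0 T ∧
      max 0 (min x (s (max 0 (min t T)))) ∈ Icc 0 (s (max 0 (min t T))) := by
  have ht : max 0 (min t T) ∈ Icc 0 T := ⟨le_max_left _ _, max_le h.T_pos.le (min_le_right _ _)⟩
  exact ⟨ht, le_max_left _ _, max_le (h.s_pos _ ht).le (min_le_right _ _)⟩

theorem continuous_clampExt (h : IsSolOn p s₀ φ T s u) :
    Continuous (Function.uncurry (clampExt T s u)) := by
  have hs : Continuous fun q : ℝ × ℝ => s (max 0 (min q.1 T)) :=
    h.s_cont.comp_continuous (by fun_prop) fun q => (h.clamp_mem q.1 0).1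
  exact h.u_cont.comp_continuous
    (f := fun q : ℝ × ℝ => (max 0 (min q.1 T), max 0 (min q.2 (s (max 0 (min q.1 T))))))
    ((by fun_prop : Continuous fun q : ℝ × ℝ => max 0 (min q.1 T)).prodMk
      (continuous_const.max (continuous_snd.min hs))) fun q => h.clamp_mem q.1 q.2

theorem continuous_clampExt_slice (h : IsSolOn p s₀ φ T s u) (t : ℝ) :
    Continuous (clampExt T s u t) :=
  h.continuous_clampExt.comp (by fun_prop : Continuous fun y : ℝ => (t, y))

theorem intervalIntegrable_clampExt (h : IsSolOn p s₀ φ T s u) (t a b : ℝ) :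
    IntervalIntegrable (clampExt T s u t) volume a b :=
  (h.continuous_clampExt_slice t).intervalIntegrable a b

theorem clampExt_nonneg (h : IsSolOn p s₀ φ T s u) (t x : ℝ) : 0 ≤ clampExt T s u t x :=
  h.u_nonneg _ (h.clamp_mem t x).1 _ (h.clamp_mem t x).2

theorem clampExt_boundary (h : IsSolOn p s₀ φ T s u) (ht : t ∈ Icc 0 T) :
    clampExt T s u t (s t) = 0 := by
  rw [clampExt_of_mem ht (right_mem_Icc.2 (h.s_pos t ht).le), h.boundary_eq_zero t ht]

theorem clampExt_zero_eq_extZero (h : IsSolOn p s₀ φ T s u) (hx : 0 ≤ x) :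
    clampExt T s u 0 x = extZero s₀ φ x := by
  have hzero : 0 ∈ Icc 0 T := left_mem_Icc.2 h.T_pos.le
  rcases le_or_gt x s₀ with hle | hlt
  · rw [extZero_of_mem ⟨hx, hle⟩, clampExt_of_mem hzero (by rw [h.init_s]; exact ⟨hx, hle⟩),
      h.init x ⟨hx, hle⟩]
  · have hclamp : clampExt T s u 0 x = clampExt T s u 0 (s 0) := by
      simp [clampExt, h.T_pos.le, h.init_s, hlt.le]
    rw [extZero_of_lt hlt, hclamp, h.clampExt_boundary hzero]

theorem continuousOn_enthalpy (h : IsSolOn p s₀ φ T s u) :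
    ContinuousOn (fun q : ℝ × ℝ => enthalpy T s u q.1 q.2) {q | q.1 ∈ Icc 0 T} := by
  have hs : ContinuousOn (fun q : ℝ × ℝ => s q.1) {q | q.1 ∈ Icc 0 T} :=
    h.s_cont.comp continuousOn_fst fun _ hq => hq
  have hprim := intervalIntegral.continuous_parametric_primitive_of_continuous (μ := volume)
    (a₀ := 0) h.continuous_clampExt
  have hsplit : (fun q : ℝ × ℝ => enthalpy T s u q.1 q.2) = fun q =>
      (∫ y in 0..s q.1, clampExt T s u q.1 y) - (∫ y in 0..q.2, clampExt T s u q.1 y) +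
        (s q.1 - q.2) := by
    funext q
    rw [enthalpy, intervalIntegral.integral_interval_sub_left
      (h.intervalIntegrable_clampExt _ _ _) (h.intervalIntegrable_clampExt _ _ _)]
  rw [hsplit]
  exact ((hprim.comp_continuousOn (continuousOn_fst.prodMk hs)).sub hprim.continuousOn).add
    (hs.sub continuousOn_snd)

theorem hasDerivAt_enthalpy (h : IsSolOn p s₀ φ T s u) (t x : ℝ) :
    HasDerivAt (enthalpy T s u t) (-clampExt T s u t x - 1) x := by
  have hcont := h.continuous_clampExt_slice t
  have hintegral := intervalIntegral.integral_hasDerivAt_left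
    (h.intervalIntegrable_clampExt t x (s t))
    hcont.stronglyMeasurable.stronglyMeasurableAtFilter hcont.continuousAt
  exact (hintegral.add ((hasDerivAt_id x).const_sub (s t))).congr_deriv (by ring)

theorem hasDerivAt_enthalpy_of_mem (h : IsSolOn p s₀ φ T s u) (ht : t ∈ Icc 0 T)
    (hx : x ∈ Icc 0 (s t)) : HasDerivAt (enthalpy T s u t) (-u t x - 1) x :=
  (h.hasDerivAt_enthalpy t x).congr_deriv (by rw [clampExt_of_mem ht hx])

theorem sub_le_enthalpy (h : IsSolOn p s₀ φ T s u) (hx : x ≤ s t) :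
    s t - x ≤ enthalpy T s u t x :=
  le_add_of_nonneg_left (intervalIntegral.integral_nonneg hx fun y _ => h.clampExt_nonneg t y)

theorem hasDerivAt_clampExt_time (h : IsSolOn p s₀ φ T s u) {t₁ : ℝ} (ht₁ : 0 < t₁)
    (hx : x ∈ Ioo 0 (s t₁)) (ht : t ∈ Ioo t₁ T) :
    HasDerivAt (fun τ => clampExt T s u τ x) (deriv (fun τ => u τ x) t) t := by
  have htime : Icc t₁ T ⊆ Ioc 0 T := fun τ hτ => ⟨ht₁.trans_le hτ.1, hτ.2⟩
  have ht' := Ioo_subset_Icc_self ht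
  refine (h.ut_diff t (htime ht') x
    (h.mem_Ioo_boundary ht₁.le ht' hx)).hasDerivAt.congr_of_eventuallyEq ?_
  filter_upwards [Icc_mem_nhds ht.1 ht.2] with τ hτ
  exact clampExt_of_mem (Ioc_subset_Icc_self (htime hτ))
    (Ioo_subset_Icc_self (h.mem_Ioo_boundary ht₁.le hτ hx))

theorem hasDerivAt_integral_clampExt (h : IsSolOn p s₀ φ T s u) {t₁ a b : ℝ} (ht₁ : 0 < t₁)
    (ha : 0 < a) (hab : a ≤ b) (hb : b < s t₁) (ht : t ∈ Ioo t₁ T) :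
    HasDerivAt (fun τ => ∫ y in a..b, clampExt T s u τ y) (deriv (u t) b - deriv (u t) a) t := by
  have htime : Icc t₁ T ⊆ Ioc 0 T := fun τ hτ => ⟨ht₁.trans_le hτ.1, hτ.2⟩
  have hspace : Icc a b ⊆ Ioo 0 (s t₁) := fun y hy => ⟨ha.trans_le hy.1, hy.2.trans_lt hb⟩
  have hsub : uIoc a b ⊆ Icc a b := uIoc_of_le hab ▸ Ioc_subset_Icc_self
  have ht' := Ioo_subset_Icc_self ht
  have hcont : ContinuousOn (fun q : ℝ × ℝ => deriv (fun τ => u τ q.2) q.1)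
      (Icc t₁ T ×ˢ Icc a b) :=
    h.ut_cont.mono fun q hq => ⟨htime hq.1, h.mem_Ioo_boundary ht₁.le hq.1 (hspace hq.2)⟩
  obtain ⟨B, hB⟩ := (isCompact_Icc.prod isCompact_Icc).exists_bound_of_continuousOn hcont
  have hslice : ContinuousOn (fun y => deriv (fun τ => u τ y) t) (Icc a b) :=
    hcont.comp (f := fun y => (t, y)) (by fun_prop) fun y hy => ⟨ht', hy⟩
  obtain ⟨hint, hmain⟩ := intervalIntegral.hasDerivAt_integral_of_dominated_loc_of_deriv_le
    (μ := volume) (F := clampExt T s u) (Ioo_mem_nhds ht.1 ht.2)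
    (.of_forall fun τ => (h.continuous_clampExt_slice τ).aestronglyMeasurable)
    (h.intervalIntegrable_clampExt t a b)
    ((hslice.mono hsub).aestronglyMeasurable measurableSet_uIoc)
    (.of_forall fun y hy τ hτ => hB (τ, y) ⟨Ioo_subset_Icc_self hτ, hsub hy⟩)
    intervalIntegrable_const
    (.of_forall fun y hy τ hτ => h.hasDerivAt_clampExt_time ht₁ (hspace (hsub hy)) hτ)
  refine hmain.congr_deriv (intervalIntegral.integral_eq_sub_of_hasDerivAt (fun y hy => ?_) hint)
  have hy' := h.mem_Ioo_boundary ht₁.le ht' (hspace (uIcc_of_le hab ▸ hy))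
  rw [h.heat t (htime ht') y hy']
  exact (h.uxx_diff t (htime ht') y hy').hasDerivAt

theorem continuous_integral_clampExt (h : IsSolOn p s₀ φ T s u) (t : ℝ) :
    Continuous fun q : ℝ × ℝ => ∫ y in q.1..q.2, clampExt T s u t y := by
  have hcont := intervalIntegral.continuous_primitive (h.intervalIntegrable_clampExt t) 0
  refine ((hcont.comp continuous_snd).sub (hcont.comp continuous_fst)).congr fun q => ?_
  exact intervalIntegral.integral_interval_sub_left (h.intervalIntegrable_clampExt _ _ _)
    (h.intervalIntegrable_clampExt _ _ _)

theorem abs_integral_clampExt_sub_sub_le (h : IsSolOn p s₀ φ T s u) {t₀ D ε : ℝ} (ht : 0 < t)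
    (htt₀ : t < t₀) (ht₀ : t₀ ≤ T) (hx : 0 ≤ x) (hxs : x < s t)
    (hflux : ∀ᶠ q in 𝓝[>] x ×ˢ 𝓝[<] s t,
      ∀ τ ∈ Ioo t t₀, |deriv (u τ) q.2 - deriv (u τ) q.1 - D| ≤ ε) :
    |(∫ y in x..s t, clampExt T s u t₀ y) - (∫ y in x..s t, clampExt T s u t y) - (t₀ - t) * D| ≤
      ε * (t₀ - t) := by
  have hcont : Continuous fun q : ℝ × ℝ => |(∫ y in q.1..q.2, clampExt T s u t₀ y) -
      (∫ y in q.1..q.2, clampExt T s u t y) - (t₀ - t) * D| :=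
    (((h.continuous_integral_clampExt t₀).sub (h.continuous_integral_clampExt t)).sub
      continuous_const).abs
  have hle : 𝓝[>] x ×ˢ 𝓝[<] s t ≤ 𝓝 (x, s t) :=
    (Filter.prod_mono nhdsWithin_le_nhds nhdsWithin_le_nhds).trans_eq nhds_prod_eq.symm
  refine le_of_tendsto ((hcont.tendsto (x, s t)).mono_left hle) ?_
  have hbetween : ∀ᶠ q in 𝓝[>] x ×ˢ 𝓝[<] s t, x < q.1 ∧ q.1 ≤ q.2 ∧ q.2 < s t := by
    obtain ⟨c, hxc, hcs⟩ := exists_between hxs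
    filter_upwards [prod_mem_prod (Ioo_mem_nhdsGT hxc) (Ioo_mem_nhdsLT hcs)] with q hq
      using ⟨hq.1.1, hq.1.2.le.trans hq.2.1.le, hq.2.2⟩
  filter_upwards [hflux, hbetween] with q hq ⟨hxq, hqq, hqs⟩
  have hcont_time : Continuous fun τ => ∫ y in q.1..q.2, clampExt T s u τ y :=
    intervalIntegral.continuous_parametric_intervalIntegral_of_continuous'
      h.continuous_clampExt q.1 q.2
  obtain ⟨τ, hτ, hslope⟩ := exists_hasDerivAt_eq_slope _ _ htt₀ hcont_time.continuousOn
    fun τ hτ => h.hasDerivAt_integral_clampExt ht (hx.trans_lt hxq) hqq hqs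
      (Ioo_subset_Ioo_right ht₀ hτ)
  have hpos : 0 < t₀ - t := sub_pos.2 htt₀
  rw [eq_div_iff hpos.ne', mul_comm] at hslope
  rw [← hslope, ← mul_sub, abs_mul, abs_of_pos hpos, mul_comm]
  exact mul_le_mul_of_nonneg_right (hq τ hτ) hpos.le

theorem eventually_abs_flux_sub_le (h : IsSolOn p s₀ φ T s u) {ε : ℝ} (hε : 0 < ε)
    (ht : t ∈ Ioc 0 T) (hx : x ∈ Ico 0 (s t)) :
    ∀ᶠ t' in 𝓝[<] t, ∀ᶠ q in 𝓝[>] x ×ˢ 𝓝[<] s t', ∀ τ ∈ Ioo t' t,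
      |deriv (u τ) q.2 - deriv (u τ) q.1 - (deriv (u t) (s t) - deriv (u t) x)| ≤ ε := by
  have hpos := h.s_pos t (Ioc_subset_Icc_self ht)
  obtain ⟨r₁, hr₁, hboundary⟩ := Metric.continuousOn_iff.1 h.ux_cont (t, s t)
    ⟨ht, right_mem_Icc.2 hpos.le⟩ (ε / 2) (half_pos hε)
  obtain ⟨r₂, hr₂, hinterior⟩ := Metric.continuousOn_iff.1 h.ux_cont (t, x)
    ⟨ht, Ico_subset_Icc_self hx⟩ (ε / 2) (half_pos hε)
  have hs : Tendsto s (𝓝[<] t) (𝓝 (s t)) :=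
    (h.s_diff t ht).continuousAt.tendsto.mono_left nhdsWithin_le_nhds
  filter_upwards [hs.eventually (lt_mem_nhds hx.2), hs (Metric.ball_mem_nhds _ hr₁),
    Ioo_mem_nhdsLT ht.1, nhdsWithin_le_nhds (Metric.ball_mem_nhds t (lt_min hr₁ hr₂))]
    with t' hxt' hst' ht' hdist
  have hright : ∀ᶠ a in 𝓝[>] x, a ∈ Metric.ball x r₂ ∧ a ∈ Ioo x (s t') :=
    inter_mem (nhdsWithin_le_nhds (Metric.ball_mem_nhds x hr₂)) (Ioo_mem_nhdsGT hxt')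
  have hleft : ∀ᶠ b in 𝓝[<] s t', b ∈ Metric.ball (s t) r₁ ∧ b ∈ Ioo x (s t') :=
    inter_mem (nhdsWithin_le_nhds (Metric.isOpen_ball.mem_nhds hst')) (Ioo_mem_nhdsLT hxt')
  filter_upwards [hright.prod_mk hleft] with ⟨a, b⟩ ⟨⟨har, ha⟩, hbr, hb⟩ τ hτ
  have hτ' : τ ∈ Ioc 0 T := ⟨ht'.1.trans hτ.1, hτ.2.le.trans ht.2⟩
  have hmem : ∀ y ∈ Ioo x (s t'), y ∈ Icc 0 (s τ) := fun y hy => Ioo_subset_Icc_self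
    (h.mem_Ioo_boundary ht'.1.le ⟨hτ.1.le, hτ'.2⟩ ⟨hx.1.trans_lt hy.1, hy.2⟩)
  have hτt : dist τ t < min r₁ r₂ := by
    rw [Metric.mem_ball, Real.dist_eq, abs_sub_comm, abs_of_pos (sub_pos.2 ht'.2)] at hdist
    rw [Real.dist_eq, abs_sub_comm, abs_of_pos (sub_pos.2 hτ.2)]
    linarith [hτ.1]
  have hb_flux := hboundary (τ, b) ⟨hτ', hmem b hb⟩
    (max_lt (hτt.trans_le (min_le_left _ _)) hbr)
  have ha_flux := hinterior (τ, a) ⟨hτ', hmem a ha⟩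
    (max_lt (hτt.trans_le (min_le_right _ _)) har)
  rw [Real.dist_eq] at ha_flux hb_flux
  calc |deriv (u τ) b - deriv (u τ) a - (deriv (u t) (s t) - deriv (u t) x)|
      = |(deriv (u τ) b - deriv (u t) (s t)) - (deriv (u τ) a - deriv (u t) x)| := by ring_nf
    _ ≤ ε := (abs_sub _ _).trans (by linarith)

theorem hasDerivWithinAt_integral_clampExt_sub (h : IsSolOn p s₀ φ T s u) (ht : t ∈ Ioc 0 T)
    (hx : x ∈ Ico 0 (s t)) :
    HasDerivWithinAt (fun τ => ∫ y in x..s τ, (clampExt T s u t y - clampExt T s u τ y))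
      (deriv s t + deriv (u t) x) (Iic t) t := by
  rw [← hasDerivWithinAt_sdiff_singleton, Iic_sdiff_right, hasDerivWithinAt_iff_isLittleO,
    Asymptotics.isLittleO_iff]
  intro ε hε
  have hs : Tendsto s (𝓝[<] t) (𝓝 (s t)) :=
    (h.s_diff t ht).continuousAt.tendsto.mono_left nhdsWithin_le_nhds
  filter_upwards [h.eventually_abs_flux_sub_le hε ht hx, hs.eventually (lt_mem_nhds hx.2),
    Ioo_mem_nhdsLT ht.1] with τ hflux hxτ hτ
  have hbound := h.abs_integral_clampExt_sub_sub_le hτ.1 hτ.2 ht.2 hx.1 hxτ hflux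
  rw [← intervalIntegral.integral_sub (h.intervalIntegrable_clampExt _ _ _)
    (h.intervalIntegrable_clampExt _ _ _)] at hbound
  simp only [sub_self, intervalIntegral.integral_zero, sub_zero, smul_eq_mul, Real.norm_eq_abs]
  rw [abs_sub_comm τ t, abs_of_pos (sub_pos.2 hτ.2), h.stefan t ht]
  convert hbound using 2
  ring

theorem hasDerivWithinAt_enthalpy (h : IsSolOn p s₀ φ T s u) (ht : t ∈ Ioc 0 T)
    (hx : x ∈ Ico 0 (s t)) :
    HasDerivWithinAt (fun τ => enthalpy T s u τ x) (-deriv (u t) x) (Iic t) t := by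
  have hs := (h.s_diff t ht).hasDerivAt
  have hcont := h.continuous_clampExt_slice t
  have hfrozen : HasDerivAt (fun τ => ∫ y in x..s τ, clampExt T s u t y) 0 t := by
    have hprim := intervalIntegral.integral_hasDerivAt_right
      (h.intervalIntegrable_clampExt t x (s t))
      hcont.stronglyMeasurable.stronglyMeasurableAtFilter hcont.continuousAt
    refine (hprim.comp t hs).congr_deriv ?_
    rw [h.clampExt_boundary (Ioc_subset_Icc_self ht), zero_mul]
  refine (((hfrozen.hasDerivWithinAt.sub (h.hasDerivWithinAt_integral_clampExt_sub ht hx)).add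
    (hs.sub_const x).hasDerivWithinAt).congr_deriv (by ring)).congr_of_eventuallyEq
    (.of_forall fun τ => ?_) ?_
  all_goals
    simp [enthalpy, intervalIntegral.integral_sub, h.intervalIntegrable_clampExt]

end IsSolOn

end SingleSolution

section Barrier

/-- A supersolution of the heat equation for `(2 c) ^ 2 ≤ L`, between `B e^{Lt}` and `2 B e^{Lt}`.
Its decay in `x` compensates the flux of a Robin condition with coefficient `c` at `x = 0`. -/
def barrier (B L c t x : ℝ) : ℝ := B * exp (L * t) * (1 + exp (-(2 * c) * x))

variable {B L c t x : ℝ}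

theorem hasDerivAt_exp_mul (k x : ℝ) : HasDerivAt (fun y => exp (k * y)) (k * exp (k * x)) x := by
  simpa using hasDerivAt_mul_exp_mul_sub 1 k 0 x

theorem hasDerivAt_barrier_space :
    HasDerivAt (barrier B L c t) (B * exp (L * t) * (-(2 * c) * exp (-(2 * c) * x))) x :=
  ((hasDerivAt_exp_mul _ x).const_add 1).const_mul _

theorem hasDerivAt_barrier_space_space :
    HasDerivAt (fun y => B * exp (L * t) * (-(2 * c) * exp (-(2 * c) * y)))
      (B * exp (L * t) * (-(2 * c) * (-(2 * c) * exp (-(2 * c) * x)))) x :=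
  ((hasDerivAt_exp_mul _ x).const_mul _).const_mul _

theorem hasDerivAt_barrier_time :
    HasDerivAt (fun τ => barrier B L c τ x) (B * (L * exp (L * t)) * (1 + exp (-(2 * c) * x))) t :=
  ((hasDerivAt_exp_mul L t).const_mul B).mul_const _

theorem barrier_supersolution (hB : 0 ≤ B) (hL : (2 * c) ^ 2 ≤ L) :
    B * exp (L * t) * (-(2 * c) * (-(2 * c) * exp (-(2 * c) * x))) ≤
      B * (L * exp (L * t)) * (1 + exp (-(2 * c) * x)) :=
  calc B * exp (L * t) * (-(2 * c) * (-(2 * c) * exp (-(2 * c) * x)))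
      = B * exp (L * t) * ((2 * c) ^ 2 * exp (-(2 * c) * x)) := by ring
    _ ≤ B * exp (L * t) * (L * (1 + exp (-(2 * c) * x))) := by
        have hL0 : 0 ≤ L := (sq_nonneg _).trans hL
        gcongr
        linarith
    _ = B * (L * exp (L * t)) * (1 + exp (-(2 * c) * x)) := by ring

theorem mul_exp_le_barrier (hB : 0 ≤ B) : B * exp (L * t) ≤ barrier B L c t x :=
  le_mul_of_one_le_right (by positivity) (by linarith [exp_pos (-(2 * c) * x)])

theorem barrier_le_two_mul_exp (hB : 0 ≤ B) (hc : 0 ≤ c) (hx : 0 ≤ x) :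
    barrier B L c t x ≤ 2 * B * exp (L * t) := by
  have hexp : exp (-(2 * c) * x) ≤ 1 := exp_le_one_iff.2 (by nlinarith)
  calc barrier B L c t x ≤ B * exp (L * t) * (1 + 1) := by rw [barrier]; gcongr
    _ = 2 * B * exp (L * t) := by ring

end Barrier

section Comparison

namespace IsSolOn

variable {p s₀ σ₀ T c L B S : ℝ} {φ ψ s σ : ℝ → ℝ} {u v : ℝ → ℝ → ℝ}

theorem isHeatSubsolution_sub_sub_barrier (h₁ : IsSolOn p s₀ φ T s u) (h₂ : IsSolOn p σ₀ ψ T σ v)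
    (hB : 0 ≤ B) (hL : (2 * c) ^ 2 ≤ L)
    (hflux : ∀ t ∈ Ioc 0 T, v t 0 ≤ u t 0 → u t 0 ^ p - v t 0 ^ p ≤ c * (u t 0 - v t 0))
    (hcontact : ∀ t ∈ Ioc 0 T, σ t ≤ s t → u t (σ t) ≤ B * exp (L * t))
    (hinit : ∀ x ∈ Icc 0 (min s₀ σ₀), φ x - ψ x ≤ B) :
    IsHeatSubsolution T (fun t => min (s t) (σ t)) (-(c + 1))
      (fun t x => u t x - v t x - barrier B L c t x)
      (fun t x => deriv (u t) x - deriv (v t) x -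
        B * exp (L * t) * (-(2 * c) * exp (-(2 * c) * x))) where
  continuousOn := by
    refine ContinuousOn.sub (ContinuousOn.sub ?_ ?_) (by unfold barrier; fun_prop)
    · exact h₁.u_cont.mono fun q hq => ⟨hq.1, Icc_subset_Icc_right (min_le_left _ _) hq.2⟩
    · exact h₂.u_cont.mono fun q hq => ⟨hq.1, Icc_subset_Icc_right (min_le_right _ _) hq.2⟩
  initial x hx := by
    rw [h₁.init_s, h₂.init_s] at hx
    rw [h₁.init x (Icc_subset_Icc_right (min_le_left _ _) hx),
      h₂.init x (Icc_subset_Icc_right (min_le_right _ _) hx)]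
    have hbarrier : B * exp (L * 0) ≤ barrier B L c 0 x := mul_exp_le_barrier hB
    rw [mul_zero, exp_zero, mul_one] at hbarrier
    linarith [hinit x hx]
  hasDerivAt t ht x hx :=
    ((h₁.ux_diff t ht x (Ioo_subset_Ioo_right (min_le_left _ _) hx)).hasDerivAt.sub
      (h₂.ux_diff t ht x (Ioo_subset_Ioo_right (min_le_right _ _) hx)).hasDerivAt).sub
      hasDerivAt_barrier_space
  heat_le t ht x hx := by
    have hx₁ := Ioo_subset_Ioo_right (min_le_left _ _) hx
    have hx₂ := Ioo_subset_Ioo_right (min_le_right _ _) hx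
    refine ⟨_, _, (((h₁.ut_diff t ht x hx₁).hasDerivAt.sub
      (h₂.ut_diff t ht x hx₂).hasDerivAt).sub hasDerivAt_barrier_time).hasDerivWithinAt,
      ((h₁.uxx_diff t ht x hx₁).hasDerivAt.sub (h₂.uxx_diff t ht x hx₂).hasDerivAt).sub
      hasDerivAt_barrier_space_space, ?_⟩
    rw [h₁.heat t ht x hx₁, h₂.heat t ht x hx₂]
    exact sub_le_sub_left (barrier_supersolution hB hL) _
  left_boundary t ht := by
    refine or_iff_not_imp_left.2 fun hpos => Or.inr ⟨_, ?_, ((h₁.hasDerivWithinAt_Ici_zero ht).sub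
      (h₂.hasDerivWithinAt_Ici_zero ht)).sub hasDerivAt_barrier_space.hasDerivWithinAt⟩
    have hBL : 0 ≤ B * exp (L * t) := by positivity
    simp only [barrier, mul_zero, exp_zero, not_le, mul_one] at hpos ⊢
    have hflux_t := hflux t ht (by linarith)
    nlinarith [h₁.bc_zero t ht, h₂.bc_zero t ht]
  right_boundary t ht := by
    have htI := Ioc_subset_Icc_self ht
    refine Or.inl (sub_nonpos.2 (le_trans ?_ (mul_exp_le_barrier hB)))
    rcases le_total (s t) (σ t) with hle | hle
    · rw [min_eq_left hle, h₁.bc_free t ht, zero_sub]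
      have hv := h₂.u_nonneg t htI (s t) ⟨(h₁.s_pos t htI).le, hle⟩
      exact (neg_nonpos.2 hv).trans (by positivity)
    · rw [min_eq_right hle, h₂.bc_free t ht, sub_zero]
      exact hcontact t ht hle

theorem sub_le_two_mul_exp (h₁ : IsSolOn p s₀ φ T s u) (h₂ : IsSolOn p σ₀ ψ T σ v)
    (hc : 0 ≤ c) (hB : 0 ≤ B) (hL : (2 * c) ^ 2 ≤ L)
    (hflux : ∀ t ∈ Ioc 0 T, v t 0 ≤ u t 0 → u t 0 ^ p - v t 0 ^ p ≤ c * (u t 0 - v t 0))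
    (hcontact : ∀ t ∈ Ioc 0 T, σ t ≤ s t → u t (σ t) ≤ B * exp (L * t))
    (hinit : ∀ x ∈ Icc 0 (min s₀ σ₀), φ x - ψ x ≤ B) :
    ∀ t ∈ Icc 0 T, ∀ x ∈ Icc 0 (min (s t) (σ t)), u t x - v t x ≤ 2 * B * exp (L * t) :=
  fun t ht x hx => (sub_nonpos.1 ((isHeatSubsolution_sub_sub_barrier h₁ h₂ hB hL hflux hcontact
    hinit).nonpos (h₁.s_cont.inf h₂.s_cont) (fun τ hτ => lt_min (h₁.s_pos τ hτ) (h₂.s_pos τ hτ))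
    t ht x hx)).trans (barrier_le_two_mul_exp hB hc hx.1)

theorem hasDerivWithinAt_enthalpy_sub (h₁ : IsSolOn p s₀ φ T s u) (h₂ : IsSolOn p σ₀ ψ T σ v)
    (hL : L ≠ 0) {t x : ℝ} (ht : t ∈ Ioc 0 T) (hx : x ∈ Ico 0 (min (s t) (σ t))) :
    HasDerivWithinAt
      (fun τ => enthalpy T s u τ x - enthalpy T σ v τ x - S - c / L * exp (L * τ))
      (-deriv (u t) x - -deriv (v t) x - c * exp (L * t)) (Iic t) t := by
  have hgrowth : HasDerivAt (fun τ => c / L * exp (L * τ)) (c * exp (L * t)) t :=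
    ((hasDerivAt_exp_mul L t).const_mul (c / L)).congr_deriv (by field_simp)
  exact (((h₁.hasDerivWithinAt_enthalpy ht (Ico_subset_Ico_right (min_le_left _ _) hx)).sub
    (h₂.hasDerivWithinAt_enthalpy ht (Ico_subset_Ico_right (min_le_right _ _) hx))).sub_const
    S).sub hgrowth.hasDerivWithinAt

theorem isHeatSubsolution_enthalpy_sub (h₁ : IsSolOn p s₀ φ T s u) (h₂ : IsSolOn p σ₀ ψ T σ v)
    (hc : 0 ≤ c) (hL : 0 < L) (hS : 0 ≤ S)
    (hflux : ∀ t ∈ Ioc 0 T, u t 0 ^ p - v t 0 ^ p ≤ c * exp (L * t))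
    (hinit : ∀ x ∈ Icc 0 (min s₀ σ₀), enthalpy T s u 0 x - enthalpy T σ v 0 x ≤ S) :
    IsHeatSubsolution T (fun t => min (s t) (σ t)) 1
      (fun t x => enthalpy T s u t x - enthalpy T σ v t x - S - c / L * exp (L * t))
      (fun t x => -u t x - 1 - (-v t x - 1)) where
  continuousOn := (((h₁.continuousOn_enthalpy.mono fun q hq => hq.1).sub
    (h₂.continuousOn_enthalpy.mono fun q hq => hq.1)).sub continuousOn_const).sub (by fun_prop)
  initial x hx := by
    rw [h₁.init_s, h₂.init_s] at hx
    have : 0 ≤ c / L * exp (L * 0) := by positivity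
    linarith [hinit x hx]
  hasDerivAt t ht x hx :=
    have htI := Ioc_subset_Icc_self ht
    have hxI := Ioo_subset_Icc_self hx
    (((h₁.hasDerivAt_enthalpy_of_mem htI (Icc_subset_Icc_right (min_le_left _ _) hxI)).sub
      (h₂.hasDerivAt_enthalpy_of_mem htI (Icc_subset_Icc_right (min_le_right _ _) hxI))).sub_const
      S).sub_const _
  heat_le t ht x hx := by
    refine ⟨_, _, hasDerivWithinAt_enthalpy_sub h₁ h₂ hL.ne' ht (Ioo_subset_Ico_self hx),
      ((h₁.ux_diff t ht x
        (Ioo_subset_Ioo_right (min_le_left _ _) hx)).hasDerivAt.neg.sub_const 1).sub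
      ((h₂.ux_diff t ht x
        (Ioo_subset_Ioo_right (min_le_right _ _) hx)).hasDerivAt.neg.sub_const 1),
      sub_le_self _ (by positivity)⟩
  left_boundary t ht := by
    have htI := Ioc_subset_Icc_self ht
    refine Or.inr (Or.inl ⟨_, ?_, hasDerivWithinAt_enthalpy_sub h₁ h₂ hL.ne' ht
      ⟨le_rfl, lt_min (h₁.s_pos t htI) (h₂.s_pos t htI)⟩⟩)
    linarith [h₁.bc_zero t ht, h₂.bc_zero t ht, hflux t ht]
  right_boundary t ht := by
    have : 0 ≤ c / L * exp (L * t) := by positivity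
    rcases le_total (s t) (σ t) with hle | hle
    · rw [min_eq_left hle, enthalpy_boundary]
      exact Or.inl (by linarith [h₂.sub_le_enthalpy hle])
    · rw [min_eq_right hle]
      refine or_iff_not_imp_left.2 fun hpos => ⟨_, ?_, (((h₁.hasDerivAt_enthalpy t (σ t)).sub
        (h₂.hasDerivAt_enthalpy t (σ t))).sub_const S |>.sub_const _).hasDerivWithinAt⟩
      rw [h₂.clampExt_boundary (Ioc_subset_Icc_self ht)]
      linarith [h₁.clampExt_nonneg t (σ t)]

theorem boundary_sub_le (h₁ : IsSolOn p s₀ φ T s u) (h₂ : IsSolOn p σ₀ ψ T σ v)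
    (hc : 0 ≤ c) (hL : 0 < L) (hS : 0 ≤ S)
    (hflux : ∀ t ∈ Ioc 0 T, u t 0 ^ p - v t 0 ^ p ≤ c * exp (L * t))
    (hinit : ∀ x ∈ Icc 0 (min s₀ σ₀), enthalpy T s u 0 x - enthalpy T σ v 0 x ≤ S) :
    ∀ t ∈ Icc 0 T, s t - σ t ≤ S + c / L * exp (L * t) := by
  intro t ht
  rcases le_total (s t) (σ t) with hle | hle
  · have : 0 ≤ c / L * exp (L * t) := by positivity
    linarith
  · have henthalpy := (isHeatSubsolution_enthalpy_sub h₁ h₂ hc hL hS hflux hinit).nonpos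
      (h₁.s_cont.inf h₂.s_cont) (fun τ hτ => lt_min (h₁.s_pos τ hτ) (h₂.s_pos τ hτ))
      t ht (σ t) ⟨(h₂.s_pos t ht).le, (min_eq_right hle).ge⟩
    rw [enthalpy_boundary] at henthalpy
    linarith [h₁.sub_le_enthalpy hle]

end IsSolOn

end Comparison

section ComparablePair

/-- Two solutions on `(0, T]` with everything that their comparison depends on: `c` is a Lipschitz
constant of the boundary flux, `C` bounds both solutions linearly near their free boundaries, and
`η` and `S` measure the distance of the initial temperatures and of the initial enthalpies. -/
structure ComparablePair (p c C η S s₀ : ℝ) (φ : ℝ → ℝ) (σ₀ : ℝ) (ψ : ℝ → ℝ) (T : ℝ)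
    (s : ℝ → ℝ) (u : ℝ → ℝ → ℝ) (σ : ℝ → ℝ) (v : ℝ → ℝ → ℝ) : Prop where
  left : IsSolOn p s₀ φ T s u
  right : IsSolOn p σ₀ ψ T σ v
  flux_const_nonneg : 0 ≤ c
  flux_lipschitz : ∀ t ∈ Ioc 0 T, |u t 0 ^ p - v t 0 ^ p| ≤ c * |u t 0 - v t 0|
  left_le : ∀ t ∈ Icc 0 T, ∀ x ∈ Icc 0 (s t), u t x ≤ C * (s t - x)
  right_le : ∀ t ∈ Icc 0 T, ∀ x ∈ Icc 0 (σ t), v t x ≤ C * (σ t - x)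
  init_gap : ∀ x ∈ Icc 0 (min s₀ σ₀), |φ x - ψ x| ≤ η
  enthalpy_gap : ∀ x ∈ Icc 0 (min s₀ σ₀), |enthalpy T s u 0 x - enthalpy T σ v 0 x| ≤ S

/-- The exponential rate at which the distance of two comparable solutions is allowed to grow. -/
def growthRate (c C : ℝ) : ℝ := (2 * c) ^ 2 + 4 * (C * c) + c + 1

theorem growthRate_pos {c C : ℝ} (hc : 0 ≤ c) (hC : 0 ≤ C) : 0 < growthRate c C := by
  unfold growthRate
  positivity

theorem sq_le_growthRate {c C : ℝ} (hc : 0 ≤ c) (hC : 0 ≤ C) : (2 * c) ^ 2 ≤ growthRate c C := by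
  unfold growthRate
  linarith [mul_nonneg hC hc]

theorem mul_div_growthRate_le {c C N : ℝ} (hc : 0 ≤ c) (hC : 0 ≤ C) (hN : 0 ≤ N) :
    C * (c * N / growthRate c C) ≤ N / 4 := by
  have hle : 4 * (C * c) ≤ growthRate c C := by
    unfold growthRate
    linarith [sq_nonneg (2 * c)]
  rw [← mul_div_assoc, div_le_iff₀ (growthRate_pos hc hC)]
  linarith [mul_le_mul_of_nonneg_right hle hN]

theorem div_growthRate_le {c C N : ℝ} (hc : 0 ≤ c) (hC : 0 ≤ C) (hN : 0 ≤ N) :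
    c * N / growthRate c C ≤ N := by
  have hle : c ≤ growthRate c C := by
    unfold growthRate
    linarith [sq_nonneg (2 * c), mul_nonneg hC hc]
  rw [div_le_iff₀ (growthRate_pos hc hC), mul_comm N]
  gcongr

namespace ComparablePair

variable {p c C η S s₀ σ₀ T L N : ℝ} {φ ψ s σ : ℝ → ℝ} {u v : ℝ → ℝ → ℝ}

theorem symm (h : ComparablePair p c C η S s₀ φ σ₀ ψ T s u σ v) :
    ComparablePair p c C η S σ₀ ψ s₀ φ T σ v s u where
  left := h.right
  right := h.left
  flux_const_nonneg := h.flux_const_nonneg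
  flux_lipschitz t ht := by simpa only [abs_sub_comm] using h.flux_lipschitz t ht
  left_le := h.right_le
  right_le := h.left_le
  init_gap x hx := by simpa only [abs_sub_comm] using h.init_gap x (min_comm σ₀ s₀ ▸ hx)
  enthalpy_gap x hx := by simpa only [abs_sub_comm] using h.enthalpy_gap x (min_comm σ₀ s₀ ▸ hx)

theorem zero_mem_Icc_min (h : ComparablePair p c C η S s₀ φ σ₀ ψ T s u σ v) :
    (0 : ℝ) ∈ Icc 0 (min s₀ σ₀) :=
  left_mem_Icc.2 (le_min h.left.init_pos.le h.right.init_pos.le)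

theorem init_gap_nonneg (h : ComparablePair p c C η S s₀ φ σ₀ ψ T s u σ v) : 0 ≤ η :=
  (abs_nonneg _).trans (h.init_gap 0 h.zero_mem_Icc_min)

theorem enthalpy_gap_nonneg (h : ComparablePair p c C η S s₀ φ σ₀ ψ T s u σ v) : 0 ≤ S :=
  (abs_nonneg _).trans (h.enthalpy_gap 0 h.zero_mem_Icc_min)

theorem slope_nonneg (h : ComparablePair p c C η S s₀ φ σ₀ ψ T s u σ v) : 0 ≤ C := by
  have hT := left_mem_Icc.2 h.left.T_pos.le
  have hs := h.left.s_pos 0 hT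
  have hx := left_mem_Icc.2 hs.le
  have := (h.left.u_nonneg 0 hT 0 hx).trans (h.left_le 0 hT 0 hx)
  rw [sub_zero] at this
  exact nonneg_of_mul_nonneg_left this hs

theorem trace_const_nonneg (h : ComparablePair p c C η S s₀ φ σ₀ ψ T s u σ v)
    (htrace : ∀ t ∈ Icc 0 T, |u t 0 - v t 0| ≤ N * exp (L * t)) : 0 ≤ N :=
  nonneg_of_mul_nonneg_left ((abs_nonneg _).trans (htrace 0 (left_mem_Icc.2 h.left.T_pos.le)))
    (exp_pos _)

theorem boundary_sub_le (h : ComparablePair p c C η S s₀ φ σ₀ ψ T s u σ v) (hL : 0 < L)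
    (htrace : ∀ t ∈ Icc 0 T, |u t 0 - v t 0| ≤ N * exp (L * t)) :
    ∀ t ∈ Icc 0 T, s t - σ t ≤ (S + c * N / L) * exp (L * t) := by
  intro t ht
  have hc := h.flux_const_nonneg
  have hN := h.trace_const_nonneg htrace
  have hflux : ∀ τ ∈ Ioc 0 T, u τ 0 ^ p - v τ 0 ^ p ≤ c * N * exp (L * τ) := fun τ hτ =>
    calc u τ 0 ^ p - v τ 0 ^ p ≤ |u τ 0 ^ p - v τ 0 ^ p| := le_abs_self _
      _ ≤ c * |u τ 0 - v τ 0| := h.flux_lipschitz τ hτ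
      _ ≤ c * (N * exp (L * τ)) :=
          mul_le_mul_of_nonneg_left (htrace τ (Ioc_subset_Icc_self hτ)) hc
      _ = c * N * exp (L * τ) := (mul_assoc _ _ _).symm
  calc s t - σ t ≤ S + c * N / L * exp (L * t) :=
        h.left.boundary_sub_le h.right (mul_nonneg hc hN) hL h.enthalpy_gap_nonneg hflux
          (fun x hx => (le_abs_self _).trans (h.enthalpy_gap x hx)) t ht
    _ ≤ S * exp (L * t) + c * N / L * exp (L * t) := by
        gcongr
        exact le_mul_of_one_le_right h.enthalpy_gap_nonneg
          (one_le_exp (mul_nonneg hL.le ht.1))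
    _ = (S + c * N / L) * exp (L * t) := (add_mul _ _ _).symm

theorem abs_boundary_sub_le (h : ComparablePair p c C η S s₀ φ σ₀ ψ T s u σ v) (hL : 0 < L)
    (htrace : ∀ t ∈ Icc 0 T, |u t 0 - v t 0| ≤ N * exp (L * t)) :
    ∀ t ∈ Icc 0 T, |s t - σ t| ≤ (S + c * N / L) * exp (L * t) := fun t ht =>
  abs_sub_le_iff.2 ⟨h.boundary_sub_le hL htrace t ht, h.symm.boundary_sub_le hL
    (fun τ hτ => abs_sub_comm (u τ 0) (v τ 0) ▸ htrace τ hτ) t ht⟩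

theorem sub_le (h : ComparablePair p c C η S s₀ φ σ₀ ψ T s u σ v) (hL : 0 < L)
    (hcL : (2 * c) ^ 2 ≤ L) (htrace : ∀ t ∈ Icc 0 T, |u t 0 - v t 0| ≤ N * exp (L * t)) :
    ∀ t ∈ Icc 0 T, ∀ x ∈ Icc 0 (min (s t) (σ t)),
      u t x - v t x ≤ 2 * (η + C * (S + c * N / L)) * exp (L * t) := by
  have hc := h.flux_const_nonneg
  have hC := h.slope_nonneg
  have hη := h.init_gap_nonneg
  have hS := h.enthalpy_gap_nonneg
  have hN := h.trace_const_nonneg htrace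
  have hshift : 0 ≤ C * (S + c * N / L) := by positivity
  refine h.left.sub_le_two_mul_exp h.right hc (add_nonneg hη hshift) hcL
    (fun t ht hle => ?_) (fun t ht hle => ?_) (fun x hx => ?_)
  · have hlip := (le_abs_self _).trans (h.flux_lipschitz t ht)
    rwa [abs_of_nonneg (sub_nonneg.2 hle)] at hlip
  · have htI := Ioc_subset_Icc_self ht
    calc u t (σ t) ≤ C * (s t - σ t) := h.left_le t htI _ ⟨(h.right.s_pos t htI).le, hle⟩
      _ ≤ C * ((S + c * N / L) * exp (L * t)) :=
          mul_le_mul_of_nonneg_left (h.boundary_sub_le hL htrace t htI) hC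
      _ = C * (S + c * N / L) * exp (L * t) := (mul_assoc _ _ _).symm
      _ ≤ (η + C * (S + c * N / L)) * exp (L * t) := by gcongr; exact le_add_of_nonneg_left hη
  · exact ((le_abs_self _).trans (h.init_gap x hx)).trans (le_add_of_nonneg_right hshift)

theorem abs_sub_le (h : ComparablePair p c C η S s₀ φ σ₀ ψ T s u σ v) (hL : 0 < L)
    (hcL : (2 * c) ^ 2 ≤ L) (htrace : ∀ t ∈ Icc 0 T, |u t 0 - v t 0| ≤ N * exp (L * t)) :
    ∀ t ∈ Icc 0 T, ∀ x ∈ Icc 0 (min (s t) (σ t)),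
      |u t x - v t x| ≤ 2 * (η + C * (S + c * N / L)) * exp (L * t) := fun t ht x hx =>
  abs_sub_le_iff.2 ⟨h.sub_le hL hcL htrace t ht x hx, h.symm.sub_le hL hcL
    (fun τ hτ => abs_sub_comm (u τ 0) (v τ 0) ▸ htrace τ hτ) t ht x (min_comm (s t) (σ t) ▸ hx)⟩

theorem abs_trace_sub_le (h : ComparablePair p c C η S s₀ φ σ₀ ψ T s u σ v) :
    ∀ t ∈ Icc 0 T, |u t 0 - v t 0| ≤ 4 * (η + C * S) * exp (growthRate c C * t) := by
  have hc := h.flux_const_nonneg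
  have hC := h.slope_nonneg
  set L := growthRate c C
  obtain ⟨t₀, ht₀, hmax⟩ := exists_forall_le_mul_exp_sub isCompact_Icc
    (nonempty_Icc.2 h.left.T_pos.le)
    (h.left.continuousOn_trace.sub h.right.continuousOn_trace).abs
    (ℓ := fun t => L * t) (by fun_prop)
  set N := |u t₀ 0 - v t₀ 0| * exp (-(L * t₀)) with hN
  have htrace : ∀ t ∈ Icc 0 T, |u t 0 - v t 0| ≤ N * exp (L * t) := fun t ht => by
    rw [hN, mul_assoc, ← exp_add, neg_add_eq_sub]
    exact hmax t ht
  have hattained : |u t₀ 0 - v t₀ 0| = N * exp (L * t₀) := by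
    rw [hN, mul_assoc, ← exp_add, neg_add_cancel, exp_zero, mul_one]
  have hself : N ≤ 2 * (η + C * (S + c * N / L)) :=
    le_of_mul_le_mul_right (hattained.symm.trans_le (h.abs_sub_le (growthRate_pos hc hC)
      (sq_le_growthRate hc hC) htrace t₀ ht₀ 0
      ⟨le_rfl, le_min (h.left.s_pos t₀ ht₀).le (h.right.s_pos t₀ ht₀).le⟩)) (exp_pos _)
  have habsorb : C * (c * N / L) ≤ N / 4 := mul_div_growthRate_le hc hC (by positivity)
  exact fun t ht => (htrace t ht).trans (by gcongr; linarith)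

theorem abs_boundary_sub_le_growth (h : ComparablePair p c C η S s₀ φ σ₀ ψ T s u σ v) :
    ∀ t ∈ Icc 0 T, |s t - σ t| ≤ (S + 4 * (η + C * S)) * exp (growthRate c C * t) := by
  have hc := h.flux_const_nonneg
  have hC := h.slope_nonneg
  have hN := h.trace_const_nonneg h.abs_trace_sub_le
  exact fun t ht => (h.abs_boundary_sub_le (growthRate_pos hc hC) h.abs_trace_sub_le t ht).trans
    (by gcongr; exact div_growthRate_le hc hC hN)

theorem abs_sub_le_growth (h : ComparablePair p c C η S s₀ φ σ₀ ψ T s u σ v) :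
    ∀ t ∈ Icc 0 T, ∀ x ∈ Icc 0 (min (s t) (σ t)),
      |u t x - v t x| ≤ 4 * (η + C * S) * exp (growthRate c C * t) := by
  have hc := h.flux_const_nonneg
  have hC := h.slope_nonneg
  have habsorb := mul_div_growthRate_le hc hC (h.trace_const_nonneg h.abs_trace_sub_le)
  exact fun t ht x hx => (h.abs_sub_le (growthRate_pos hc hC) (sq_le_growthRate hc hC)
    h.abs_trace_sub_le t ht x hx).trans (by gcongr ?_ * _; linarith)

theorem abs_extZero_sub_le_growth (h : ComparablePair p c C η S s₀ φ σ₀ ψ T s u σ v)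
    {t x : ℝ} (ht : t ∈ Icc 0 T) (hx : 0 ≤ x) :
    |extZero (s t) (u t) x - extZero (σ t) (v t) x| ≤
      (1 + C) * ((S + 4 * (η + C * S)) * exp (growthRate c C * t)) := by
  have hS := h.enthalpy_gap_nonneg
  have hC := h.slope_nonneg
  have hboundary := h.abs_boundary_sub_le_growth t ht
  have hgap := (abs_nonneg _).trans hboundary
  refine (abs_extZero_sub_extZero_le hC (h.left.u_nonneg t ht) (h.right.u_nonneg t ht)
    (h.left_le t ht) (h.right_le t ht) (h.abs_sub_le_growth t ht) hboundary hx).trans ?_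
  refine max_le (le_trans ?_ (le_mul_of_one_le_left hgap (le_add_of_nonneg_right hC))) ?_
  · gcongr
    exact le_add_of_nonneg_left hS
  · gcongr
    exact le_add_of_nonneg_left zero_le_one

theorem gap_le {δ a T' t : ℝ} (h : ComparablePair p c C δ (a * δ) s₀ φ σ₀ ψ T s u σ v)
    (ha : 0 ≤ a) (ht : t ∈ Icc 0 T) (hT' : T ≤ T') :
    |s t - σ t| ≤ (1 + C) * ((a + 4 * (1 + C * a)) * exp (growthRate c C * T')) * δ ∧
      ∀ x, 0 ≤ x → |extZero (s t) (u t) x - extZero (σ t) (v t) x| ≤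
        (1 + C) * ((a + 4 * (1 + C * a)) * exp (growthRate c C * T')) * δ := by
  have hC := h.slope_nonneg
  have hδ := h.init_gap_nonneg
  have hL := (growthRate_pos h.flux_const_nonneg hC).le
  have hbound : (1 + C) * ((a * δ + 4 * (δ + C * (a * δ))) * exp (growthRate c C * t)) ≤
      (1 + C) * ((a + 4 * (1 + C * a)) * exp (growthRate c C * T')) * δ :=
    calc (1 + C) * ((a * δ + 4 * (δ + C * (a * δ))) * exp (growthRate c C * t))
        = (1 + C) * ((a + 4 * (1 + C * a)) * exp (growthRate c C * t)) * δ := by ring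
      _ ≤ (1 + C) * ((a + 4 * (1 + C * a)) * exp (growthRate c C * T')) * δ := by
          gcongr
          exact ht.2.trans hT'
  have hboundary := h.abs_boundary_sub_le_growth t ht
  exact ⟨(hboundary.trans (le_mul_of_one_le_left ((abs_nonneg _).trans hboundary)
    (le_add_of_nonneg_right hC))).trans hbound,
    fun x hx => (h.abs_extZero_sub_le_growth ht hx).trans hbound⟩

end ComparablePair

end ComparablePair

section Stability

theorem abs_rpow_sub_rpow_le {p K a b : ℝ} (hp : 1 ≤ p) (ha : a ∈ Icc 0 K) (hb : b ∈ Icc 0 K) :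
    |a ^ p - b ^ p| ≤ p * K ^ (p - 1) * |a - b| := by
  refine (convex_Icc 0 K).norm_image_sub_le_of_norm_hasDerivWithin_le (f := fun x : ℝ => x ^ p)
    (fun x _ => (hasDerivAt_rpow_const (Or.inr hp)).hasDerivWithinAt) (fun x hx => ?_) hb ha
  have hpow : 0 ≤ x ^ (p - 1) := rpow_nonneg hx.1 _
  rw [norm_of_nonneg (by positivity)]
  exact mul_le_mul_of_nonneg_left (rpow_le_rpow hx.1 hx.2 (by linarith)) (by linarith)

theorem forall_Icc_le_of_forall_lt {g : ℝ → ℝ} {a b α : ℝ} (hg : ContinuousOn g (Icc a b))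
    (ha : g a ≤ α) (himprove : ∀ t ∈ Ico a b, (∀ τ ∈ Icc a t, g τ ≤ α) → g t < α) :
    ∀ t ∈ Icc a b, g t ≤ α := by
  have hclosed : IsClosed ({t | g t ≤ α} ∩ Icc a b) := by
    rw [inter_comm]
    exact hg.preimage_isClosed_of_isClosed isClosed_Icc isClosed_Iic
  refine fun t ht => hclosed.Icc_subset_of_forall_mem_nhdsGT_of_Icc_subset ha
    (fun τ hτ hle => ?_) ht
  have hnear : ∀ᶠ r in 𝓝[>] τ, g r < α :=
    ((hg τ (Ico_subset_Icc_self hτ)).mono_of_mem_nhdsWithin (mem_of_superset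
      (Icc_mem_nhdsGT hτ.2) (Icc_subset_Icc_left hτ.1))).tendsto.eventually_lt_const
      (himprove τ hτ hle)
  exact hnear.mono fun r hr => hr.le

namespace IsSolOn

variable {p s₀ σ₀ T C K δ : ℝ} {φ ψ s σ : ℝ → ℝ} {u v : ℝ → ℝ → ℝ}

theorem enthalpy_zero_eq (h : IsSolOn p s₀ φ T s u) {x X : ℝ} (hX : s₀ ≤ X) :
    enthalpy T s u 0 x = (∫ y in x..X, clampExt T s u 0 y) + (s₀ - x) := by
  have htail : ∫ y in s₀..X, clampExt T s u 0 y = 0 := by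
    refine intervalIntegral.integral_zero_ae (Eventually.of_forall fun y hy => ?_)
    rw [uIoc_of_le hX] at hy
    rw [h.clampExt_zero_eq_extZero (h.init_pos.le.trans hy.1.le), extZero_of_lt hy.1]
  rw [enthalpy, h.init_s, ← intervalIntegral.integral_add_adjacent_intervals
    (h.intervalIntegrable_clampExt 0 x s₀) (h.intervalIntegrable_clampExt 0 s₀ X), htail, add_zero]

theorem abs_enthalpy_zero_sub_le (h₁ : IsSolOn p s₀ φ T s u) (h₂ : IsSolOn p σ₀ ψ T σ v)
    (hδ : δ ≤ 1) (hgap : |s₀ - σ₀| ≤ δ)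
    (hext : ∀ x, 0 ≤ x → |extZero s₀ φ x - extZero σ₀ ψ x| ≤ δ) :
    ∀ x ∈ Icc 0 (min s₀ σ₀), |enthalpy T s u 0 x - enthalpy T σ v 0 x| ≤ (2 + s₀) * δ := by
  intro x hx
  set X := max s₀ σ₀
  have hxX : x ≤ X := hx.2.trans min_le_max
  have hXle : X ≤ s₀ + 1 :=
    max_le (by linarith) (by linarith [(abs_sub_le_iff.1 hgap).2])
  have hintegral : |(∫ y in x..X, clampExt T s u 0 y) - ∫ y in x..X, clampExt T σ v 0 y| ≤
      δ * (X - x) := by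
    rw [← intervalIntegral.integral_sub (h₁.intervalIntegrable_clampExt _ _ _)
      (h₂.intervalIntegrable_clampExt _ _ _), ← norm_eq_abs, ← abs_of_nonneg (sub_nonneg.2 hxX)]
    refine intervalIntegral.norm_integral_le_of_norm_le_const fun y hy => ?_
    have hy0 : 0 ≤ y := hx.1.trans (uIoc_of_le hxX ▸ hy).1.le
    rw [h₁.clampExt_zero_eq_extZero hy0, h₂.clampExt_zero_eq_extZero hy0]
    exact hext y hy0
  rw [h₁.enthalpy_zero_eq (le_max_left s₀ σ₀), h₂.enthalpy_zero_eq (le_max_right s₀ σ₀)]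
  calc |(∫ y in x..X, clampExt T s u 0 y) + (s₀ - x) -
        ((∫ y in x..X, clampExt T σ v 0 y) + (σ₀ - x))|
      = |((∫ y in x..X, clampExt T s u 0 y) - ∫ y in x..X, clampExt T σ v 0 y) +
          (s₀ - σ₀)| := by ring_nf
    _ ≤ δ * (X - x) + δ := (abs_add_le _ _).trans (add_le_add hintegral hgap)
    _ ≤ (2 + s₀) * δ := by nlinarith [(abs_nonneg _).trans hgap, hx.1]

theorem comparablePair (hp : 1 ≤ p) (h₁ : IsSolOn p s₀ φ T s u) (h₂ : IsSolOn p σ₀ ψ T σ v)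
    (hu : ∀ t ∈ Ioc 0 T, u t 0 ≤ K) (hv : ∀ t ∈ Ioc 0 T, v t 0 ≤ K)
    (hKs : K ≤ C * s₀) (hKσ : K ≤ C * σ₀)
    (hφ : ∀ x ∈ Icc 0 s₀, φ x ≤ C * (s₀ - x)) (hψ : ∀ x ∈ Icc 0 σ₀, ψ x ≤ C * (σ₀ - x))
    (hδ : δ ≤ 1) (hgap : |s₀ - σ₀| ≤ δ)
    (hext : ∀ x, 0 ≤ x → |extZero s₀ φ x - extZero σ₀ ψ x| ≤ δ) :
    ComparablePair p (p * K ^ (p - 1)) C δ ((2 + s₀) * δ) s₀ φ σ₀ ψ T s u σ v where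
  left := h₁
  right := h₂
  flux_const_nonneg := by
    have hK : 0 ≤ K := (h₁.trace_nonneg (right_mem_Icc.2 h₁.T_pos.le)).trans
      (hu T (right_mem_Ioc.2 h₁.T_pos))
    exact mul_nonneg (zero_le_one.trans hp) (rpow_nonneg hK _)
  flux_lipschitz t ht := abs_rpow_sub_rpow_le hp
    ⟨h₁.trace_nonneg (Ioc_subset_Icc_self ht), hu t ht⟩
    ⟨h₂.trace_nonneg (Ioc_subset_Icc_self ht), hv t ht⟩
  left_le := h₁.le_mul_sub hφ fun t ht => (hu t ht).trans hKs
  right_le := h₂.le_mul_sub hψ fun t ht => (hv t ht).trans hKσ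
  init_gap x hx := by
    have hx' := hext x hx.1
    rwa [extZero_of_mem (Icc_subset_Icc_right (min_le_left _ _) hx),
      extZero_of_mem (Icc_subset_Icc_right (min_le_right _ _) hx)] at hx'
  enthalpy_gap := h₁.abs_enthalpy_zero_sub_le h₂ hδ hgap hext

theorem abs_trace_sub_le_of_extZero (h₁ : IsSolOn p s₀ φ T s u) (h₂ : IsSolOn p σ₀ ψ T σ v)
    {t : ℝ} (ht : t ∈ Icc 0 T)
    (hext : ∀ x, 0 ≤ x → |extZero (s t) (u t) x - extZero (σ t) (v t) x| ≤ δ) :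
    |u t 0 - v t 0| ≤ δ := by
  simpa only [extZero_of_mem (left_mem_Icc.2 (h₁.s_pos t ht).le),
    extZero_of_mem (left_mem_Icc.2 (h₂.s_pos t ht).le)] using hext 0 le_rfl

theorem abs_trace_zero_sub_le (h₁ : IsSolOn p s₀ φ T s u) (h₂ : IsSolOn p σ₀ ψ T σ v)
    (hext : ∀ x, 0 ≤ x → |extZero s₀ φ x - extZero σ₀ ψ x| ≤ δ) : |u 0 0 - v 0 0| ≤ δ := by
  have hs₀ := left_mem_Icc.2 h₁.init_pos.le
  have hσ₀ := left_mem_Icc.2 h₂.init_pos.le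
  simpa only [extZero_of_mem hs₀, extZero_of_mem hσ₀, ← h₁.init 0 hs₀, ← h₂.init 0 hσ₀]
    using hext 0 le_rfl

end IsSolOn

theorem exists_conditional_stability_const {p : ℝ} (hp : 1 ≤ p) (s₀ K T M : ℝ) :
    ∃ G > 0, ∀ {T' δ σ₀ : ℝ} {φ ψ s σ : ℝ → ℝ} {u v : ℝ → ℝ → ℝ}, T' ≤ T →
      IsSolOn p s₀ φ T' s u → IsSolOn p σ₀ ψ T' σ v →
      (∀ t ∈ Ioc 0 T', u t 0 ≤ K) → (∀ t ∈ Icc 0 T', |u t 0 - v t 0| ≤ 1) →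
      (∀ x ∈ Icc 0 s₀, φ x ≤ M * (s₀ - x)) → (∀ x ∈ Icc 0 σ₀, ψ x ≤ M * (σ₀ - x)) →
      δ ≤ 1 → δ ≤ s₀ / 2 → |s₀ - σ₀| ≤ δ →
      (∀ x, 0 ≤ x → |extZero s₀ φ x - extZero σ₀ ψ x| ≤ δ) →
      ∀ t ∈ Icc 0 T', |s t - σ t| ≤ G * δ ∧
        ∀ x, 0 ≤ x → |extZero (s t) (u t) x - extZero (σ t) (v t) x| ≤ G * δ := by
  rcases le_or_gt s₀ 0 with hs₀ | hs₀
  · exact ⟨1, one_pos, fun _ h₁ => absurd h₁.init_pos hs₀.not_gt⟩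
  set K' := |K| + 1
  set C := max M (2 * K' / s₀)
  have : 0 < C := lt_max_of_lt_right (by positivity)
  have hK'C : K' ≤ C * (s₀ / 2) := by
    have := (div_le_iff₀ hs₀).1 (le_max_right M (2 * K' / s₀))
    linarith
  set L := growthRate (p * K' ^ (p - 1)) C
  set G := (1 + C) * ((2 + s₀ + 4 * (1 + C * (2 + s₀))) * exp (L * T))
  refine ⟨G, by positivity, fun {T' δ σ₀ φ ψ s σ u v} hT' h₁ h₂ hu hclose hφ hψ hδ₁ hδ₂ hgap hext
    t ht => ?_⟩
  have hu' : ∀ t ∈ Ioc 0 T', u t 0 ≤ K' := fun t ht => (hu t ht).trans (by linarith [le_abs_self K])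
  have hv' : ∀ t ∈ Ioc 0 T', v t 0 ≤ K' := fun t ht => by
    linarith [hu t ht, (abs_sub_le_iff.1 (hclose t (Ioc_subset_Icc_self ht))).2, le_abs_self K]
  have hpair := h₁.comparablePair hp h₂ hu' hv' (hK'C.trans (by gcongr; linarith))
    (hK'C.trans (by gcongr; linarith [(abs_sub_le_iff.1 hgap).1]))
    (fun x hx => (hφ x hx).trans
      (mul_le_mul_of_nonneg_right (le_max_left _ _) (sub_nonneg.2 hx.2)))
    (fun x hx => (hψ x hx).trans
      (mul_le_mul_of_nonneg_right (le_max_left _ _) (sub_nonneg.2 hx.2))) hδ₁ hgap hext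
  exact hpair.gap_le (by positivity) ht hT'

theorem exists_stability_const {p : ℝ} (hp : 1 ≤ p) (s₀ K T M : ℝ) :
    ∃ η > 0, ∃ G > 0, ∀ {δ σ₀ : ℝ} {φ ψ s σ : ℝ → ℝ} {u v : ℝ → ℝ → ℝ},
      IsSolOn p s₀ φ T s u → IsSolOn p σ₀ ψ T σ v → (∀ t ∈ Ioc 0 T, u t 0 ≤ K) →
      (∀ x ∈ Icc 0 s₀, φ x ≤ M * (s₀ - x)) → (∀ x ∈ Icc 0 σ₀, ψ x ≤ M * (σ₀ - x)) →
      δ ≤ η → |s₀ - σ₀| ≤ δ → (∀ x, 0 ≤ x → |extZero s₀ φ x - extZero σ₀ ψ x| ≤ δ) →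
      ∀ t ∈ Icc 0 T, |s t - σ t| ≤ G * δ ∧
        ∀ x, 0 ≤ x → |extZero (s t) (u t) x - extZero (σ t) (v t) x| ≤ G * δ := by
  rcases le_or_gt s₀ 0 with hs₀ | hs₀
  · exact ⟨1, one_pos, 1, one_pos, fun h₁ => absurd h₁.init_pos hs₀.not_gt⟩
  obtain ⟨G, hG, hcond⟩ := exists_conditional_stability_const hp s₀ K T M
  refine ⟨min (1 / 2) (min (s₀ / 2) (1 / (2 * G))), by positivity, G, hG,
    fun {δ σ₀ φ ψ s σ u v} h₁ h₂ hu hφ hψ hδ hgap hext => ?_⟩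
  obtain ⟨hδ_half, hδs₀, hδG⟩ : δ ≤ 1 / 2 ∧ δ ≤ s₀ / 2 ∧ G * δ ≤ 1 / 2 := by
    obtain ⟨hδ_half, hδs₀, hδG⟩ := le_min_iff.1 hδ |>.imp_right le_min_iff.1
    rw [le_div_iff₀ (by positivity)] at hδG
    exact ⟨hδ_half, hδs₀, by linarith⟩
  have hδ₁ : δ ≤ 1 := by linarith
  have htrace_lt : ∀ t ∈ Ico 0 T, (∀ τ ∈ Icc 0 t, |u τ 0 - v τ 0| ≤ 1) → |u t 0 - v t 0| < 1 := by
    intro t ht hclose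
    rcases ht.1.eq_or_lt with rfl | htpos
    · linarith [h₁.abs_trace_zero_sub_le h₂ hext]
    · have hgap_t := hcond ht.2.le (h₁.mono_time htpos ht.2.le) (h₂.mono_time htpos ht.2.le)
        (fun τ hτ => hu τ (Ioc_subset_Ioc_right ht.2.le hτ)) hclose hφ hψ hδ₁ hδs₀ hgap hext t
        (right_mem_Icc.2 htpos.le)
      linarith [h₁.abs_trace_sub_le_of_extZero h₂ (Ico_subset_Icc_self ht) hgap_t.2]
  have hclose : ∀ t ∈ Icc 0 T, |u t 0 - v t 0| ≤ 1 := forall_Icc_le_of_forall_lt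
    (h₁.continuousOn_trace.sub h₂.continuousOn_trace).abs
    (by linarith [h₁.abs_trace_zero_sub_le h₂ hext]) htrace_lt
  exact hcond le_rfl h₁ h₂ hu hclose hφ hψ hδ₁ hδs₀ hgap hext

/-- The sup distance on `[0, ∞)` of the zero extensions of `f` from `[0, a]` and `g` from `[0, b]`.
It has the junk value `0` when their difference is unbounded. -/
def extDist (a : ℝ) (f : ℝ → ℝ) (b : ℝ) (g : ℝ → ℝ) : ℝ :=
  sSup ((fun x => |extZero a f x - extZero b g x|) '' Ici 0)

theorem extDist_nonneg (a : ℝ) (f : ℝ → ℝ) (b : ℝ) (g : ℝ → ℝ) : 0 ≤ extDist a f b g :=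
  Real.sSup_nonneg (by rintro _ ⟨x, -, rfl⟩; exact abs_nonneg _)

theorem extDist_le {a b r : ℝ} {f g : ℝ → ℝ}
    (h : ∀ x, 0 ≤ x → |extZero a f x - extZero b g x| ≤ r) : extDist a f b g ≤ r :=
  csSup_le (nonempty_Ici.image _) (by rintro _ ⟨x, hx, rfl⟩; exact h x hx)

theorem IsSolOn.abs_extZero_init_sub_le_extDist {p s₀ σ₀ T M : ℝ} {φ ψ s σ : ℝ → ℝ}
    {u v : ℝ → ℝ → ℝ} (h₁ : IsSolOn p s₀ φ T s u) (h₂ : IsSolOn p σ₀ ψ T σ v)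
    (hφ : ∀ x ∈ Icc 0 s₀, φ x ≤ M * (s₀ - x)) (hψ : ∀ x ∈ Icc 0 σ₀, ψ x ≤ M * (σ₀ - x))
    {x : ℝ} (hx : 0 ≤ x) : |extZero s₀ φ x - extZero σ₀ ψ x| ≤ extDist s₀ φ σ₀ ψ := by
  have hM := h₁.nonneg_of_init_le_mul_sub hφ
  refine le_csSup ⟨max (M * s₀) (M * σ₀), ?_⟩ (mem_image_of_mem _ hx)
  rintro _ ⟨y, -, rfl⟩
  have hy₁ := extZero_mem_Icc h₁.init_pos.le hM h₁.init_nonneg hφ y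
  have hy₂ := extZero_mem_Icc h₂.init_pos.le hM h₂.init_nonneg hψ y
  exact abs_sub_le_of_nonneg_of_le hy₁.1 (le_max_of_le_left hy₁.2) hy₂.1
    (le_max_of_le_right hy₂.2)

end Stability

theorem stmt_7_general {p : ℝ} (hp : 1 ≤ p) (s₀ K T M : ℝ) :
    ∃ η > 0, ∃ G > 0, ∀ (φ : ℝ → ℝ) (s : ℝ → ℝ) (u : ℝ → ℝ → ℝ)
      (σ₀ : ℝ) (ψ : ℝ → ℝ) (σ : ℝ → ℝ) (v : ℝ → ℝ → ℝ),
      IsSolOn p s₀ φ T s u → IsSolOn p σ₀ ψ T σ v →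
      (∀ t ∈ Ioc 0 T, u t 0 ≤ K) →
      (∀ x ∈ Icc 0 s₀, φ x ≤ M * (s₀ - x)) →
      (∀ x ∈ Icc 0 σ₀, ψ x ≤ M * (σ₀ - x)) →
      |s₀ - σ₀| + extDist s₀ φ σ₀ ψ ≤ η →
      sSup ((fun t => |s t - σ t|) '' Ioc 0 T) +
        sSup ((fun t => extDist (s t) (u t) (σ t) (v t)) '' Ioc 0 T) ≤
          G * (|s₀ - σ₀| + extDist s₀ φ σ₀ ψ) := by
  obtain ⟨η, hη, G, hG, hstab⟩ := exists_stability_const hp s₀ K T M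
  refine ⟨η, hη, 2 * G, by positivity, fun φ s u σ₀ ψ σ v h₁ h₂ hu hφ hψ hδ => ?_⟩
  have hdist := extDist_nonneg s₀ φ σ₀ ψ
  have hgap := hstab h₁ h₂ hu hφ hψ hδ (le_add_of_nonneg_right hdist) fun x hx =>
    (h₁.abs_extZero_init_sub_le_extDist h₂ hφ hψ hx).trans (le_add_of_nonneg_left (abs_nonneg _))
  have hbound : 0 ≤ G * (|s₀ - σ₀| + extDist s₀ φ σ₀ ψ) := by positivity
  rw [mul_assoc, two_mul]
  refine add_le_add (Real.sSup_le ?_ hbound) (Real.sSup_le ?_ hbound)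
  · rintro _ ⟨t, ht, rfl⟩
    exact (hgap t (Ioc_subset_Icc_self ht)).1
  · rintro _ ⟨t, ht, rfl⟩
    exact extDist_le (hgap t (Ioc_subset_Icc_self ht)).2

/-- Proposition 2.2: continuous dependence on the initial data; `η` depends only on
`ε`, `p`, `s₀`, the bound `K` on `sup_{t∈(0,T]} u(t,0)`, `T`, and `M`. -/
theorem stmt_7 (p : ℝ) (hp : 1 < p) (ε : ℝ) (hε : 0 < ε) (s₀ K T M : ℝ)
    (hT : 0 < T) (hM : 0 < M) :
    ∃ η : ℝ, 0 < η ∧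
      ∀ (φ : ℝ → ℝ) (s : ℝ → ℝ) (u : ℝ → ℝ → ℝ)
        (σ₀ : ℝ) (ψ : ℝ → ℝ) (σ : ℝ → ℝ) (v : ℝ → ℝ → ℝ),
        memW s₀ φ → memW σ₀ ψ →
        IsSolOn p s₀ φ T s u → IsSolOn p σ₀ ψ T σ v →
        (∀ t ∈ Ioc 0 T, u t 0 ≤ K) →
        (∀ x ∈ Icc 0 s₀, φ x ≤ M * (s₀ - x)) →
        (∀ x ∈ Icc 0 σ₀, ψ x ≤ M * (σ₀ - x)) →
        |s₀ - σ₀| + sSup ((fun x => |extZero s₀ φ x - extZero σ₀ ψ x|) '' Ici 0) ≤ η →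
        sSup ((fun t => |s t - σ t|) '' Ioc 0 T) +
          sSup ((fun t => sSup ((fun x =>
            |extZero (s t) (u t) x - extZero (σ t) (v t) x|) '' Ici 0)) '' Ioc 0 T) ≤ ε := by
  obtain ⟨η, hη, G, hG, hstab⟩ := stmt_7_general hp.le s₀ K T M
  exact ⟨min η (ε / G), lt_min hη (div_pos hε hG),
    fun φ s u σ₀ ψ σ v _ _ h₁ h₂ hu hφ hψ hδ =>
      (hstab φ s u σ₀ ψ σ v h₁ h₂ hu hφ hψ (hδ.trans (min_le_left _ _))).trans
        ((le_div_iff₀' hG).1 (hδ.trans (min_le_right _ _)))⟩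
end
end

section
/- For any T ∈ (0,∞) and any (s₀,φ) ∈ W, problem (P) with initial data (s₀,φ) admits at most one solution (s,u) on (0,T]: if (s,u) and (σ,v) are both solutions of (P) on (0,T] with initial data (s₀,φ), then s = σ on [0,T] and u = v on ⋃_{t∈[0,T]} {t}×[0,s(t)]. -/
open Set MeasureTheory Filter Topology Real
open scoped ENNReal

noncomputable section

/-!
The enthalpy of a solution is the density `(1 + u) 1_{x < s}`, and the distance of two solutions is
`F t = ∫ |E₁ - E₂| e^{-A x} dx`, where `E₁`, `E₂` are their enthalpies and `A` is a Lipschitz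
constant of `y ↦ y ^ p` on the range of the temperatures at `x = 0`. The upper left Dini derivative
of `F` is at most `A² F`: the weight absorbs the difference of the fluxes at `x = 0`, diffusion
contracts by Kato's inequality, and the Stefan condition cancels the motion of the free boundaries.
Since `F 0 = 0`, Grönwall's inequality gives `F = 0`.

The absolute value is regularised to `√(z² + δ²) - δ`. The only error term that does not obviously
vanish with `δ` sits at the inner free boundary, say `s ≤ σ`. It does vanish if `v > 0` there; if
`v = 0` inside the domain of `v`, then `v` has a minimum, so `v_x = 0 ≥ u_x`, which is the good
sign; and if `s = σ`, it vanishes when the speeds agree. Times at which the free boundaries meet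
with different speeds are isolated and are treated by continuity.
-/

/-! ### Upper left Dini derivatives -/

theorem eventually_nhdsLT_forall_Ioo {p : ℝ → Prop} {t : ℝ} (hp : ∀ᶠ r in 𝓝[<] t, p r) :
    ∀ᶠ r in 𝓝[<] t, ∀ x ∈ Ioo r t, p x := by
  obtain ⟨l, hl, hlt⟩ := mem_nhdsLT_iff_exists_Ioo_subset.1 hp
  filter_upwards [Ioo_mem_nhdsLT hl] with r hr x hx using hlt ⟨hr.1.trans hx.1, hx.2⟩

/-- The upper left Dini derivative of `F` at `t` is at most `c`. -/
def UpperLeftDiniLE (F : ℝ → ℝ) (t c : ℝ) : Prop :=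
  ∀ c' > c, ∀ᶠ r in 𝓝[<] t, F t - F r ≤ c' * (t - r)

namespace UpperLeftDiniLE

variable {F : ℝ → ℝ} {a b c K ε : ℝ}

/-- The time reversal `x ↦ -F (-x)` turns left difference quotients into right ones. -/
theorem neg_le_gronwallBound (hab : a ≤ b) (hF : ContinuousOn F (Icc a b))
    (h : ∀ t ∈ Ioc a b, UpperLeftDiniLE F t (K * F t + ε)) :
    -F a ≤ gronwallBound (-F b) (-K) ε (b - a) := by
  have neg_mem {x : ℝ} (hx : x ∈ Ico (-b) (-a)) : -x ∈ Ioc a b :=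
    ⟨by linarith [hx.2], by linarith [hx.1]⟩
  have reversed_continuous : ContinuousOn (fun x => -F (-x)) (Icc (-b) (-a)) :=
    (hF.comp continuousOn_neg fun x hx => ⟨by linarith [hx.2], by linarith [hx.1]⟩).neg
  have reversed_slope : ∀ x ∈ Ico (-b) (-a), ∀ c, K * F (-x) + ε < c →
      ∃ᶠ z in 𝓝[>] x, (z - x)⁻¹ * (-F (-z) - -F (-x)) < c := by
    intro x hx c hc
    obtain ⟨c', hc', hc'c⟩ := exists_between hc
    have tendsto_neg_left : Tendsto Neg.neg (𝓝[>] x) (𝓝[<] (-x)) := tendsto_neg_nhdsGT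
    refine Eventually.frequently ?_
    filter_upwards [tendsto_neg_left.eventually (h (-x) (neg_mem hx) c' hc'),
      self_mem_nhdsWithin] with z hz hxz
    have hxz' : 0 < z - x := sub_pos.2 hxz
    rw [inv_mul_lt_iff₀ hxz']
    nlinarith
  have bound := le_gronwallBound_of_liminf_deriv_right_le (δ := -F b) (K := -K) (ε := ε)
    reversed_continuous reversed_slope (by simp) (fun x _ => by simp) (-a)
    ⟨neg_le_neg hab, le_rfl⟩
  rwa [neg_neg, sub_neg_eq_add, neg_add_eq_sub] at bound

theorem le_exp_mul (hab : a ≤ b) (hF : ContinuousOn F (Icc a b))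
    (h : ∀ t ∈ Ioc a b, UpperLeftDiniLE F t (K * F t)) : F b ≤ exp (K * (b - a)) * F a := by
  have bound : -F a ≤ -F b * exp (-K * (b - a)) := by
    simpa only [gronwallBound_ε0] using
      neg_le_gronwallBound (ε := 0) hab hF (by simpa only [add_zero] using h)
  calc F b = exp (K * (b - a)) * (F b * exp (-K * (b - a))) := by
        rw [mul_left_comm, ← exp_add, neg_mul, add_neg_cancel, exp_zero, mul_one]
    _ ≤ exp (K * (b - a)) * F a := by gcongr; linarith

theorem sub_le (hab : a ≤ b) (hF : ContinuousOn F (Icc a b))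
    (h : ∀ t ∈ Ioo a b, UpperLeftDiniLE F t c) : F b - F a ≤ c * (b - a) := by
  rcases hab.eq_or_lt with rfl | hab'
  · simp
  have bound_before : ∀ y ∈ Ioo a b, F y ≤ F a + c * (y - a) := by
    intro y hy
    have bound := neg_le_gronwallBound (K := 0) (ε := c) hy.1.le
      (hF.mono (Icc_subset_Icc_right hy.2.le))
      fun t ht => by simpa using h t ⟨ht.1, ht.2.trans_lt hy.2⟩
    rw [neg_zero, gronwallBound_K0] at bound
    linarith
  have bound_at := ContinuousWithinAt.closure_le (s := Ioo a b) (x := b) (f := F)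
    (g := fun y => F a + c * (y - a)) (by rw [closure_Ioo hab'.ne]; exact right_mem_Icc.2 hab)
    ((hF b (right_mem_Icc.2 hab)).mono Ioo_subset_Icc_self) (by fun_prop) bound_before
  linarith

end UpperLeftDiniLE

section Averages

variable {α : Type*} {l : Filter α} {t₀ y₀ : ℝ} {t y : α → ℝ}

theorem tendsto_integral_div_sub {Φ : ℝ → ℝ → ℝ} (hΦ : Continuous (Function.uncurry Φ))
    (ht : Tendsto t l (𝓝[<] t₀)) (hy : Tendsto y l (𝓝 y₀)) :
    Tendsto (fun i => (∫ τ in (t i)..t₀, Φ (y i) τ) / (t₀ - t i)) l (𝓝 (Φ y₀ t₀)) := by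
  have mean_value (i : α) : ∃ τ ∈ uIcc (t i) t₀, t i < t₀ →
      (∫ τ in (t i)..t₀, Φ (y i) τ) / (t₀ - t i) = Φ (y i) τ := by
    by_cases hi : t i < t₀
    · obtain ⟨τ, hτ, eq⟩ := exists_eq_interval_average hi.ne
        (hΦ.uncurry_left (y i)).continuousOn
      exact ⟨τ, Ioo_subset_Icc_self hτ, fun _ => by rw [eq, interval_average_eq_div]⟩
    · exact ⟨t i, left_mem_uIcc, fun h => absurd h hi⟩
  choose τ hτ eq using mean_value
  have ht' : Tendsto t l (𝓝 t₀) := ht.mono_right nhdsWithin_le_nhds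
  have hτ' : Tendsto τ l (𝓝 t₀) := by
    have lower : Tendsto (fun i => min (t i) t₀) l (𝓝 (min t₀ t₀)) := ht'.min tendsto_const_nhds
    have upper : Tendsto (fun i => max (t i) t₀) l (𝓝 (max t₀ t₀)) := ht'.max tendsto_const_nhds
    rw [min_self] at lower
    rw [max_self] at upper
    exact tendsto_of_tendsto_of_tendsto_of_le_of_le lower upper
      (fun i => (hτ i).1) (fun i => (hτ i).2)
  refine ((hΦ.tendsto (y₀, t₀)).comp (hy.prodMk_nhds hτ')).congr' ?_
  filter_upwards [ht.eventually self_mem_nhdsWithin] with i hi using (eq i hi).symm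

theorem tendsto_integral_div_sub_of_hasDerivAt {f s : ℝ → ℝ} {s' : ℝ} (hf : Continuous f)
    (hs : HasDerivAt s s' t₀) :
    Tendsto (fun t => (∫ x in (s t)..(s t₀), f x) / (t₀ - t)) (𝓝[<] t₀)
      (𝓝 (f (s t₀) * s')) := by
  have primitive : HasDerivAt (fun t => ∫ x in (s t₀)..(s t), f x) (f (s t₀) * s') t₀ :=
    (intervalIntegral.integral_hasDerivAt_right (hf.intervalIntegrable _ _)
      hf.stronglyMeasurable.stronglyMeasurableAtFilter hf.continuousAt).comp t₀ hs
  refine ((hasDerivAt_iff_tendsto_slope_left_right.1 primitive).1).congr fun t => ?_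
  rw [slope_def_field, intervalIntegral.integral_same, sub_zero,
    intervalIntegral.integral_symm, ← neg_sub t₀ t, neg_div_neg_eq]

end Averages

/-! ### Stefan flows -/

/-- The integral `∫ θ w'` over `[0, y]`, written after integration by parts so that it makes sense
for continuous `w`; here `θ'` stands for the derivative of `θ`. With `w` the temperature gradient,
this is the rate of change of `∫ θ u` for a solution `u` of the heat equation. -/
def weakFlux (θ θ' w : ℝ → ℝ) (y : ℝ) : ℝ :=
  θ y * w y - θ 0 * w 0 - ∫ x in (0 : ℝ)..y, θ' x * w x

theorem continuous_weakFlux {θ θ' : ℝ → ℝ} {w : ℝ → ℝ → ℝ} (hθ : Continuous θ)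
    (hθ' : Continuous θ') (hw : Continuous (Function.uncurry w)) :
    Continuous (Function.uncurry fun y τ => weakFlux θ θ' (w τ) y) := by
  have hint : Continuous fun q : ℝ × ℝ => ∫ x in (0 : ℝ)..q.1, θ' x * w q.2 x :=
    (intervalIntegral.continuous_parametric_primitive_of_continuous
      (f := fun τ x => θ' x * w τ x) ((hθ'.comp continuous_snd).mul hw)).comp continuous_swap
  exact (((hθ.comp continuous_fst).mul (hw.comp continuous_swap)).sub
    (continuous_const.mul ((hw.uncurry_right 0).comp continuous_snd))).sub hint

theorem integral_mul_eq_integral_weakFlux {θ θ' g : ℝ → ℝ} {w : ℝ → ℝ → ℝ} {t t₀ y : ℝ}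
    (hθ : Continuous θ) (hθ' : Continuous θ') (hw : Continuous (Function.uncurry w))
    (hg : Continuous g) (hy : 0 ≤ y) (hdθ : ∀ x ∈ Ioo 0 y, HasDerivAt θ (θ' x) x)
    (hdw : ∀ x ∈ Ioo 0 y, HasDerivAt (fun z => ∫ τ in t..t₀, w τ z) (g x) x) :
    ∫ x in (0 : ℝ)..y, θ x * g x = ∫ τ in t..t₀, weakFlux θ θ' (w τ) y := by
  have hθw : Continuous (Function.uncurry fun τ x => θ' x * w τ x) :=
    (hθ'.comp continuous_snd).mul hw
  have swap : ∫ x in (0 : ℝ)..y, θ' x * ∫ τ in t..t₀, w τ x =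
      ∫ τ in t..t₀, ∫ x in (0 : ℝ)..y, θ' x * w τ x := by
    simp only [← intervalIntegral.integral_const_mul]
    exact intervalIntegral_intervalIntegral_swap
      (((hθw.comp continuous_swap).continuousOn.integrableOn_compact
        (isCompact_uIcc.prod isCompact_uIcc)).mono_set
        (prod_mono uIoc_subset_uIcc uIoc_subset_uIcc))
  have integral_continuous : Continuous fun x => ∫ τ in t..t₀, w τ x :=
    intervalIntegral.continuous_parametric_intervalIntegral_of_continuous'
      (f := fun x τ => w τ x) (hw.comp continuous_swap) _ _
  have parts := intervalIntegral.integral_mul_deriv_eq_deriv_mul_of_hasDerivAt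
    (a := 0) (b := y) hθ.continuousOn integral_continuous.continuousOn
    (by simpa only [min_eq_left hy, max_eq_right hy] using hdθ)
    (by simpa only [min_eq_left hy, max_eq_right hy] using hdw)
    (hθ'.intervalIntegrable _ _) (hg.intervalIntegrable _ _)
  have int_w (z : ℝ) : IntervalIntegrable (fun τ => θ z * w τ z) volume t t₀ :=
    ((hw.uncurry_right z).const_mul _).intervalIntegrable _ _
  have int_integral : IntervalIntegrable (fun τ => ∫ x in (0 : ℝ)..y, θ' x * w τ x)
      volume t t₀ :=
    (intervalIntegral.continuous_parametric_intervalIntegral_of_continuous' hθw _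
      _).intervalIntegrable _ _
  simp only [weakFlux]
  rw [parts, swap, intervalIntegral.integral_sub ((int_w y).sub (int_w 0)) int_integral,
    intervalIntegral.integral_sub (int_w y) (int_w 0), intervalIntegral.integral_const_mul,
    intervalIntegral.integral_const_mul]

theorem deriv_nonpos_of_nonneg_of_eq_zero {f f' : ℝ → ℝ} {c d : ℝ} (hcd : c < d)
    (hf : ContinuousOn f (Icc c d)) (hf' : Tendsto f' (𝓝[<] d) (𝓝 (f' d)))
    (hder : ∀ x ∈ Ioo c d, HasDerivAt f (f' x) x) (hnn : ∀ x ∈ Ioo c d, 0 ≤ f x)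
    (hd : f d = 0) : f' d ≤ 0 := by
  have left_deriv : HasDerivWithinAt f (f' d) (Iic d) d := by
    refine hasDerivWithinAt_Iic_of_tendsto_deriv
      (fun x hx => (hder x hx).differentiableAt.differentiableWithinAt)
      ((hf d (right_mem_Icc.2 hcd.le)).mono Ioo_subset_Icc_self) (Ioo_mem_nhdsLT hcd)
      (hf'.congr' ?_)
    filter_upwards [Ioo_mem_nhdsLT hcd] with x hx using (hder x hx).deriv.symm
  refine le_of_tendsto
    ((hasDerivWithinAt_iff_tendsto_slope' self_notMem_Iio).1 left_deriv.Iio_of_Iic) ?_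
  filter_upwards [Ioo_mem_nhdsLT hcd] with x hx
  rw [slope_comm, slope_def_field, hd, zero_sub]
  exact div_nonpos_of_nonpos_of_nonneg (neg_nonpos.2 (hnn x hx)) (sub_pos.2 hx.2).le

/-- A one-phase Stefan flow on the time interval `[a, b]`, without boundary condition at `x = 0`:
the free boundary `s`, the temperature `U` and its gradient `P`, both extended continuously to the
whole plane. The heat equation is integrated in time. -/
structure StefanFlow (a b : ℝ) (s : ℝ → ℝ) (U P : ℝ → ℝ → ℝ) : Prop where
  temp_continuous : Continuous (Function.uncurry U)
  grad_continuous : Continuous (Function.uncurry P)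
  boundary_pos : ∀ t ∈ Icc a b, 0 < s t
  temp_nonneg : ∀ t ∈ Icc a b, ∀ x ∈ Icc 0 (s t), 0 ≤ U t x
  hasDerivAt_temp : ∀ t ∈ Icc a b, ∀ x ∈ Ioo 0 (s t), HasDerivAt (U t) (P t x) x
  temp_boundary : ∀ t ∈ Icc a b, U t (s t) = 0
  hasDerivAt_boundary : ∀ t ∈ Icc a b, HasDerivAt s (-P t (s t)) t
  heat : ∀ t ∈ Icc a b, ∀ t₀ ∈ Icc a b, t ≤ t₀ → ∀ x, (∀ τ ∈ Icc t t₀, x ∈ Ioo 0 (s τ)) →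
    HasDerivAt (fun y => ∫ τ in t..t₀, P τ y) (U t₀ x - U t x) x

namespace StefanFlow

variable {a b t t₀ x : ℝ} {s : ℝ → ℝ} {U P : ℝ → ℝ → ℝ}

theorem grad_boundary_nonpos (h : StefanFlow a b s U P) (ht : t ∈ Icc a b) : P t (s t) ≤ 0 :=
  deriv_nonpos_of_nonneg_of_eq_zero (h.boundary_pos t ht)
    (h.temp_continuous.uncurry_left t).continuousOn
    ((h.grad_continuous.uncurry_left t).continuousAt.mono_left nhdsWithin_le_nhds)
    (h.hasDerivAt_temp t ht) (fun x hx => h.temp_nonneg t ht x (Ioo_subset_Icc_self hx))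
    (h.temp_boundary t ht)

theorem grad_eq_zero (h : StefanFlow a b s U P) (ht : t ∈ Icc a b) (hx : x ∈ Ioo 0 (s t))
    (hU : U t x = 0) : P t x = 0 := by
  have local_min : IsLocalMin (U t) x := by
    filter_upwards [Ioo_mem_nhds hx.1 hx.2] with y hy
    exact hU.trans_le (h.temp_nonneg t ht y (Ioo_subset_Icc_self hy))
  exact local_min.hasDerivAt_eq_zero (h.hasDerivAt_temp t ht x hx)

theorem boundary_continuousOn (h : StefanFlow a b s U P) : ContinuousOn s (Icc a b) :=
  fun _ ht => (h.hasDerivAt_boundary _ ht).continuousAt.continuousWithinAt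

theorem boundary_monotoneOn (h : StefanFlow a b s U P) : MonotoneOn s (Icc a b) :=
  monotoneOn_of_hasDerivWithinAt_nonneg (convex_Icc a b) h.boundary_continuousOn
    (fun _ ht => (h.hasDerivAt_boundary _ (interior_subset ht)).hasDerivWithinAt)
    fun _ ht => neg_nonneg.2 (h.grad_boundary_nonpos (interior_subset ht))

variable {l : Filter ℝ} {θ θ' y : ℝ → ℝ} {y₀ : ℝ}

theorem tendsto_integral_mul_sub_div (h : StefanFlow a b s U P) (hθ : Continuous θ)
    (hθ' : Continuous θ') (ht₀ : t₀ ∈ Ioc a b) (hl : l ≤ 𝓝[<] t₀) (hy : Tendsto y l (𝓝 y₀))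
    (hy₀ : ∀ᶠ t in l, y t ∈ Icc 0 (s t))
    (hdθ : ∀ᶠ t in l, ∀ x ∈ Ioo 0 (y t), HasDerivAt θ (θ' x) x) :
    Tendsto (fun t => (∫ x in (0 : ℝ)..(y t), θ x * (U t₀ x - U t x)) / (t₀ - t)) l
      (𝓝 (weakFlux θ θ' (P t₀) y₀)) := by
  refine (tendsto_integral_div_sub (continuous_weakFlux hθ hθ' h.grad_continuous)
    (tendsto_id'.2 hl) hy).congr' ?_
  filter_upwards [hy₀, hdθ, hl (Ioo_mem_nhdsLT ht₀.1)] with t hyt hdt ht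
  have ht' : t ∈ Icc a b := ⟨ht.1.le, ht.2.le.trans ht₀.2⟩
  have int_eq := integral_mul_eq_integral_weakFlux hθ hθ' h.grad_continuous
    ((h.temp_continuous.uncurry_left t₀).sub (h.temp_continuous.uncurry_left t)) hyt.1 hdt
    fun x hx => h.heat t ht' t₀ (Ioc_subset_Icc_self ht₀) ht.2.le x fun τ hτ =>
      ⟨hx.1, (hx.2.trans_le hyt.2).trans_le <|
        h.boundary_monotoneOn ht' ⟨ht'.1.trans hτ.1, hτ.2.trans ht₀.2⟩ hτ.1⟩
  exact congrArg (· / (t₀ - t)) int_eq.symm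

end StefanFlow

/-! ### Regularised absolute value -/

section SmoothAbs

/-- A regularisation of `|z|` by a smooth convex even function, which agrees with `|z|` at
`δ = 0`. -/
def smoothAbs (δ z : ℝ) : ℝ := √(z ^ 2 + δ ^ 2) - δ

/-- The derivative of `smoothAbs δ`, a regularisation of the sign of `z`. -/
def smoothSign (δ z : ℝ) : ℝ := z / √(z ^ 2 + δ ^ 2)

/-- The derivative of `smoothSign δ`. -/
def smoothSignDeriv (δ z : ℝ) : ℝ := δ ^ 2 / √(z ^ 2 + δ ^ 2) ^ 3

variable {δ : ℝ}

theorem sqrt_sq_add_sq_pos (hδ : 0 < δ) (z : ℝ) : 0 < √(z ^ 2 + δ ^ 2) :=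
  Real.sqrt_pos.2 (by positivity)

theorem abs_le_sqrt_sq_add_sq (δ z : ℝ) : |z| ≤ √(z ^ 2 + δ ^ 2) :=
  Real.abs_le_sqrt (le_add_of_nonneg_right (sq_nonneg δ))

theorem continuous_uncurry_smoothAbs : Continuous (Function.uncurry smoothAbs) := by
  unfold Function.uncurry smoothAbs
  fun_prop

theorem continuous_smoothSign (hδ : 0 < δ) : Continuous (smoothSign δ) :=
  continuous_id.div (by fun_prop) fun z => (sqrt_sq_add_sq_pos hδ z).ne'

theorem continuous_smoothSignDeriv (hδ : 0 < δ) : Continuous (smoothSignDeriv δ) :=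
  continuous_const.div (by fun_prop) fun z => (pow_pos (sqrt_sq_add_sq_pos hδ z) 3).ne'

theorem smoothSignDeriv_nonneg (δ z : ℝ) : 0 ≤ smoothSignDeriv δ z := by
  unfold smoothSignDeriv
  positivity

theorem hasDerivAt_sqrt_sq_add_sq (hδ : 0 < δ) (z : ℝ) :
    HasDerivAt (fun z => √(z ^ 2 + δ ^ 2)) (smoothSign δ z) z := by
  have hsq : HasDerivAt (fun z : ℝ => z ^ 2 + δ ^ 2) (2 * z) z := by
    simpa using (hasDerivAt_pow 2 z).add_const (δ ^ 2)
  have hsqrt := hsq.sqrt (by positivity)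
  rwa [mul_div_mul_left _ _ two_ne_zero] at hsqrt

theorem hasDerivAt_smoothAbs (hδ : 0 < δ) (z : ℝ) :
    HasDerivAt (smoothAbs δ) (smoothSign δ z) z :=
  (hasDerivAt_sqrt_sq_add_sq hδ z).sub_const δ

theorem hasDerivAt_smoothSign (hδ : 0 < δ) (z : ℝ) :
    HasDerivAt (smoothSign δ) (smoothSignDeriv δ z) z := by
  have hpos := sqrt_sq_add_sq_pos hδ z
  have hsq : √(z ^ 2 + δ ^ 2) ^ 2 = z ^ 2 + δ ^ 2 := Real.sq_sqrt (by positivity)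
  refine ((hasDerivAt_id z).div (hasDerivAt_sqrt_sq_add_sq hδ z) hpos.ne').congr_deriv ?_
  unfold smoothSign smoothSignDeriv
  rw [id]
  field_simp
  linarith

theorem abs_smoothSign_le_one (δ z : ℝ) : |smoothSign δ z| ≤ 1 := by
  unfold smoothSign
  rw [abs_div, abs_of_nonneg (Real.sqrt_nonneg _)]
  exact div_le_one_of_le₀ (abs_le_sqrt_sq_add_sq δ z) (Real.sqrt_nonneg _)

theorem smoothSign_neg (δ z : ℝ) : smoothSign δ (-z) = -smoothSign δ z := by
  rw [smoothSign, smoothSign, neg_sq, neg_div]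

theorem smoothAbs_neg (δ z : ℝ) : smoothAbs δ (-z) = smoothAbs δ z := by
  rw [smoothAbs, smoothAbs, neg_sq]

theorem smoothAbs_zero_left (z : ℝ) : smoothAbs 0 z = |z| := by
  simp [smoothAbs, Real.sqrt_sq_eq_abs]

theorem abs_sub_le_smoothAbs (δ z : ℝ) : |z| - δ ≤ smoothAbs δ z :=
  sub_le_sub_right (abs_le_sqrt_sq_add_sq δ z) δ

theorem smoothAbs_le_abs (hδ : 0 ≤ δ) (z : ℝ) : smoothAbs δ z ≤ |z| := by
  have : √(z ^ 2 + δ ^ 2) ≤ |z| + δ :=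
    Real.sqrt_le_iff.2 ⟨by positivity, by nlinarith [sq_abs z, abs_nonneg z]⟩
  unfold smoothAbs
  linarith

theorem smoothAbs_sub_le (hδ : 0 < δ) (z y : ℝ) :
    smoothAbs δ z - smoothAbs δ y ≤ smoothSign δ z * (z - y) := by
  have hz := sqrt_sq_add_sq_pos hδ z
  have hz_sq : √(z ^ 2 + δ ^ 2) ^ 2 = z ^ 2 + δ ^ 2 := Real.sq_sqrt (by positivity)
  have hy_sq : √(y ^ 2 + δ ^ 2) ^ 2 = y ^ 2 + δ ^ 2 := Real.sq_sqrt (by positivity)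
  have cauchy_schwarz : z * y + δ ^ 2 ≤ √(z ^ 2 + δ ^ 2) * √(y ^ 2 + δ ^ 2) := by
    refine le_of_abs_le (abs_le_of_sq_le_sq ?_ (by positivity))
    rw [mul_pow, hz_sq, hy_sq]
    nlinarith [sq_nonneg (δ * (z - y))]
  unfold smoothAbs smoothSign
  rw [div_mul_eq_mul_div, le_div_iff₀ hz]
  nlinarith

end SmoothAbs

section BoundaryDefect

/-- The contribution of the inner free boundary to the growth of the regularised distance of two
Stefan flows: there `y` is the temperature of the outer flow and `q` is the gradient of the inner
flow minus the one of the outer flow. -/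
def boundaryDefect (δ y q : ℝ) : ℝ := (1 - smoothSign δ y) * max 0 q

theorem tendsto_boundaryDefect {α : Type*} {l : Filter α} {y q : α → ℝ} {y₀ q₀ : ℝ}
    (hy : Tendsto y l (𝓝 y₀)) (hq : Tendsto q l (𝓝 q₀)) (h : 0 < y₀ ∨ q₀ ≤ 0) :
    Tendsto (fun r : ℝ × α => boundaryDefect r.1 (y r.2) (q r.2)) (𝓝 0 ×ˢ l) (𝓝 0) := by
  have hmax : Tendsto (fun r : ℝ × α => max 0 (q r.2)) (𝓝 0 ×ˢ l) (𝓝 (max 0 q₀)) :=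
    tendsto_const_nhds.max (hq.comp tendsto_snd)
  rcases h with hy₀ | hq₀
  · have smoothSign_continuousAt : ContinuousAt (Function.uncurry smoothSign) (0, y₀) := by
      refine continuousAt_snd.div (by fun_prop) ?_
      simpa using (Real.sqrt_pos.2 (pow_pos hy₀ 2)).ne'
    have smoothSign_limit : smoothSign 0 y₀ = 1 := by
      rw [smoothSign, zero_pow two_ne_zero, add_zero, Real.sqrt_sq hy₀.le, div_self hy₀.ne']
    have hsign : Tendsto (fun r : ℝ × α => smoothSign r.1 (y r.2)) (𝓝 0 ×ˢ l) (𝓝 1) :=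
      smoothSign_limit ▸
        smoothSign_continuousAt.tendsto.comp (tendsto_fst.prodMk_nhds (hy.comp tendsto_snd))
    simpa [boundaryDefect] using ((tendsto_const_nhds (x := (1 : ℝ))).sub hsign).mul hmax
  · rw [max_eq_left hq₀] at hmax
    refine bdd_le_mul_tendsto_zero' 2 (Eventually.of_forall fun r => ?_) hmax
    have := abs_le.1 (abs_smoothSign_le_one r.1 (y r.2))
    exact abs_le.2 ⟨by linarith, by linarith⟩

end BoundaryDefect

/-! ### Exponential weights and Kato's inequality -/

section ExpWeight

/-- The exponential weight; its decay rate `A` is what absorbs the boundary condition at `x = 0`. -/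
def expWeight (A x : ℝ) : ℝ := exp (-A * x)

variable {A δ y : ℝ} {f f' W Q : ℝ → ℝ}

theorem expWeight_pos (A x : ℝ) : 0 < expWeight A x := exp_pos _

theorem expWeight_zero (A : ℝ) : expWeight A 0 = 1 := by rw [expWeight, mul_zero, exp_zero]

theorem expWeight_le_one {x : ℝ} (hA : 0 ≤ A) (hx : 0 ≤ x) : expWeight A x ≤ 1 :=
  exp_le_one_iff.2 (by nlinarith)

theorem continuous_expWeight (A : ℝ) : Continuous (expWeight A) := by
  unfold expWeight
  fun_prop

theorem hasDerivAt_expWeight (A x : ℝ) : HasDerivAt (expWeight A) (-A * expWeight A x) x :=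
  ((hasDerivAt_id x).const_mul (-A)).exp.congr_deriv (by simp [expWeight, mul_comm])

theorem weakFlux_expWeight (hy : 0 ≤ y) (hf : Continuous f) (hf' : Continuous f')
    (hder : ∀ x ∈ Ioo 0 y, HasDerivAt f (f' x) x) :
    weakFlux (expWeight A) (fun x => -A * expWeight A x) f' y =
      expWeight A y * (f' y + A * f y) - (f' 0 + A * f 0) +
        A ^ 2 * ∫ x in (0 : ℝ)..y, f x * expWeight A x := by
  have hE := continuous_expWeight A
  have parts := intervalIntegral.integral_mul_deriv_eq_deriv_mul_of_hasDerivAt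
    (a := 0) (b := y) hE.continuousOn hf.continuousOn (fun x _ => hasDerivAt_expWeight A x)
    (by simpa only [min_eq_left hy, max_eq_right hy] using hder)
    ((hE.const_mul _).intervalIntegrable _ _) (hf'.intervalIntegrable _ _)
  have tail : ∫ x in (0 : ℝ)..y, -A * expWeight A x * f x =
      -A * ∫ x in (0 : ℝ)..y, f x * expWeight A x := by
    simp only [mul_assoc, mul_comm (expWeight A _), intervalIntegral.integral_const_mul]
  simp only [weakFlux, mul_assoc, intervalIntegral.integral_const_mul]
  rw [parts, tail, expWeight_zero]
  ring

/-- The test function obtained from the regularised sign of `W` and the exponential weight. -/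
def signWeight (A δ : ℝ) (W : ℝ → ℝ) (x : ℝ) : ℝ := smoothSign δ (W x) * expWeight A x

/-- The derivative of `signWeight A δ W` when `Q` is the derivative of `W`. -/
def signWeightDeriv (A δ : ℝ) (W Q : ℝ → ℝ) (x : ℝ) : ℝ :=
  (smoothSignDeriv δ (W x) * Q x - A * smoothSign δ (W x)) * expWeight A x

theorem continuous_signWeight (hδ : 0 < δ) (hW : Continuous W) :
    Continuous (signWeight A δ W) :=
  ((continuous_smoothSign hδ).comp hW).mul (continuous_expWeight A)

theorem continuous_signWeightDeriv (hδ : 0 < δ) (hW : Continuous W) (hQ : Continuous Q) :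
    Continuous (signWeightDeriv A δ W Q) :=
  ((((continuous_smoothSignDeriv hδ).comp hW).mul hQ).sub
    (((continuous_smoothSign hδ).comp hW).const_mul A)).mul (continuous_expWeight A)

theorem hasDerivAt_signWeight {x : ℝ} (hδ : 0 < δ) (hW : HasDerivAt W (Q x) x) :
    HasDerivAt (signWeight A δ W) (signWeightDeriv A δ W Q x) x := by
  refine (((hasDerivAt_smoothSign hδ (W x)).comp x hW).mul
    (hasDerivAt_expWeight A x)).congr_deriv ?_
  simp only [signWeightDeriv, Function.comp_apply]
  ring

theorem weakFlux_signWeight_le_weakFlux_expWeight (hδ : 0 < δ) (hy : 0 ≤ y)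
    (hW : Continuous W) (hQ : Continuous Q) :
    weakFlux (signWeight A δ W) (signWeightDeriv A δ W Q) Q y ≤
      weakFlux (expWeight A) (fun x => -A * expWeight A x)
        (fun x => smoothSign δ (W x) * Q x) y := by
  have hE := continuous_expWeight A
  have drop_square : ∫ x in (0 : ℝ)..y, -A * expWeight A x * (smoothSign δ (W x) * Q x) ≤
      ∫ x in (0 : ℝ)..y, signWeightDeriv A δ W Q x * Q x := by
    refine intervalIntegral.integral_mono_on hy
      (((hE.const_mul _).mul
        (((continuous_smoothSign hδ).comp hW).mul hQ)).intervalIntegrable _ _)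
      (((continuous_signWeightDeriv hδ hW hQ).mul hQ).intervalIntegrable _ _) fun x _ => ?_
    have : 0 ≤ smoothSignDeriv δ (W x) * Q x ^ 2 * expWeight A x :=
      mul_nonneg (mul_nonneg (smoothSignDeriv_nonneg _ _) (sq_nonneg _)) (expWeight_pos _ _).le
    unfold signWeightDeriv
    linarith
  simp only [weakFlux, signWeight] at drop_square ⊢
  linarith

/-- Kato's inequality for the regularised absolute value of `W`. -/
theorem weakFlux_signWeight_le (hδ : 0 < δ) (hy : 0 ≤ y) (hW : Continuous W)
    (hQ : Continuous Q) (hder : ∀ x ∈ Ioo 0 y, HasDerivAt W (Q x) x) :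
    weakFlux (signWeight A δ W) (signWeightDeriv A δ W Q) Q y ≤
      expWeight A y * (smoothSign δ (W y) * Q y + A * smoothAbs δ (W y)) -
        (smoothSign δ (W 0) * Q 0 + A * smoothAbs δ (W 0)) +
        A ^ 2 * ∫ x in (0 : ℝ)..y, smoothAbs δ (W x) * expWeight A x :=
  (weakFlux_signWeight_le_weakFlux_expWeight hδ hy hW hQ).trans_eq <|
    weakFlux_expWeight hy ((continuous_uncurry_smoothAbs.uncurry_left δ).comp hW)
      (((continuous_smoothSign hδ).comp hW).mul hQ)
      fun x hx => (hasDerivAt_smoothAbs hδ (W x)).comp x (hder x hx)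

end ExpWeight

/-! ### Weighted enthalpy distance -/

section EnthalpyDist

/-- The weighted `L¹` distance `∫ |E₁ - E₂| e^{-Ax} dx` of the enthalpies
`E₁ = (1 + U) 1_{x < a}` and `E₂ = (1 + V) 1_{x < b}`, where `|·|` is regularised by
`smoothAbs δ` on the common domain; `δ = 0` gives the distance itself. -/
def enthalpyDist (A δ a b : ℝ) (U V : ℝ → ℝ) : ℝ :=
  (∫ x in (0 : ℝ)..min a b, smoothAbs δ (U x - V x) * expWeight A x) +
    (∫ x in (min a b)..a, (1 + U x) * expWeight A x) +
    ∫ x in (min a b)..b, (1 + V x) * expWeight A x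

variable {A δ a b : ℝ} {U V : ℝ → ℝ}

theorem enthalpyDist_comm (A δ a b : ℝ) (U V : ℝ → ℝ) :
    enthalpyDist A δ a b U V = enthalpyDist A δ b a V U := by
  simp only [enthalpyDist, min_comm b a, ← neg_sub (U _) (V _), smoothAbs_neg]
  exact add_right_comm _ _ _

theorem enthalpyDist_of_le (A δ : ℝ) (hab : a ≤ b) (U V : ℝ → ℝ) :
    enthalpyDist A δ a b U V = (∫ x in (0 : ℝ)..a, smoothAbs δ (U x - V x) * expWeight A x) +
      ∫ x in a..b, (1 + V x) * expWeight A x := by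
  rw [enthalpyDist, min_eq_left hab, intervalIntegral.integral_same, add_zero]

theorem enthalpyDist_eq_zero (A : ℝ) (ha : 0 ≤ a) (hUV : EqOn U V (Icc 0 a)) :
    enthalpyDist A 0 a a U V = 0 := by
  rw [enthalpyDist_of_le A 0 le_rfl, intervalIntegral.integral_same, add_zero]
  refine intervalIntegral.integral_zero_ae (Eventually.of_forall fun x hx => ?_)
  rw [uIoc_of_le ha] at hx
  rw [hUV (Ioc_subset_Icc_self hx), sub_self, smoothAbs_zero_left, abs_zero, zero_mul]

theorem continuous_smoothAbs_sub_mul_expWeight (A δ : ℝ) (hU : Continuous U)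
    (hV : Continuous V) : Continuous fun x => smoothAbs δ (U x - V x) * expWeight A x :=
  ((continuous_uncurry_smoothAbs.uncurry_left δ).comp (hU.sub hV)).mul (continuous_expWeight A)

theorem continuous_one_add_mul_expWeight (A : ℝ) (hV : Continuous V) :
    Continuous fun x => (1 + V x) * expWeight A x :=
  (continuous_const.add hV).mul (continuous_expWeight A)

theorem enthalpyDist_le_enthalpyDist_zero (hδ : 0 ≤ δ) (ha : 0 ≤ a) (hb : 0 ≤ b)
    (hU : Continuous U) (hV : Continuous V) :
    enthalpyDist A δ a b U V ≤ enthalpyDist A 0 a b U V := by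
  unfold enthalpyDist
  gcongr
  refine intervalIntegral.integral_mono_on (le_min ha hb)
    ((continuous_smoothAbs_sub_mul_expWeight A δ hU hV).intervalIntegrable _ _)
    ((continuous_smoothAbs_sub_mul_expWeight A 0 hU hV).intervalIntegrable _ _) fun x _ => ?_
  rw [smoothAbs_zero_left]
  exact mul_le_mul_of_nonneg_right (smoothAbs_le_abs hδ _) (expWeight_pos A x).le

theorem continuous_enthalpyDist_param (A a b : ℝ) (hU : Continuous U) (hV : Continuous V) :
    Continuous fun δ => enthalpyDist A δ a b U V := by
  refine (Continuous.add ?_ continuous_const).add continuous_const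
  refine intervalIntegral.continuous_parametric_intervalIntegral_of_continuous' ?_ _ _
  exact (continuous_uncurry_smoothAbs.comp
    (continuous_fst.prodMk ((hU.sub hV).comp continuous_snd))).mul
    ((continuous_expWeight A).comp continuous_snd)

theorem continuousOn_integral_of_continuous_uncurry {f : ℝ → ℝ → ℝ} {c d : ℝ → ℝ} {S : Set ℝ}
    (hf : Continuous (Function.uncurry f)) (hc : ContinuousOn c S) (hd : ContinuousOn d S) :
    ContinuousOn (fun t => ∫ x in (c t)..(d t), f t x) S := by
  have primitive_continuousOn {e : ℝ → ℝ} (he : ContinuousOn e S) :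
      ContinuousOn (fun t => ∫ x in (0 : ℝ)..(e t), f t x) S :=
    (intervalIntegral.continuous_parametric_primitive_of_continuous
      (a₀ := 0) hf).comp_continuousOn (continuousOn_id.prodMk he)
  refine ((primitive_continuousOn hd).sub (primitive_continuousOn hc)).congr fun t _ => ?_
  exact (intervalIntegral.integral_interval_sub_left
    ((hf.uncurry_left t).intervalIntegrable _ _) ((hf.uncurry_left t).intervalIntegrable _ _)).symm

theorem continuousOn_enthalpyDist {s σ : ℝ → ℝ} {U V : ℝ → ℝ → ℝ} {S : Set ℝ} (A δ : ℝ)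
    (hs : ContinuousOn s S) (hσ : ContinuousOn σ S) (hU : Continuous (Function.uncurry U))
    (hV : Continuous (Function.uncurry V)) :
    ContinuousOn (fun t => enthalpyDist A δ (s t) (σ t) (U t) (V t)) S := by
  have hE : Continuous fun q : ℝ × ℝ => expWeight A q.2 :=
    (continuous_expWeight A).comp continuous_snd
  have hmin : ContinuousOn (fun t => min (s t) (σ t)) S := ContinuousOn.inf hs hσ
  refine ((continuousOn_integral_of_continuous_uncurry ?_ continuousOn_const hmin).add
    (continuousOn_integral_of_continuous_uncurry ?_ hmin hs)).add
    (continuousOn_integral_of_continuous_uncurry ?_ hmin hσ)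
  · exact ((continuous_uncurry_smoothAbs.uncurry_left δ).comp (hU.sub hV)).mul hE
  · exact (continuous_const.add hU).mul hE
  · exact (continuous_const.add hV).mul hE

theorem eq_and_eqOn_of_enthalpyDist_nonpos (ha : 0 < a) (hb : 0 < b) (hU : Continuous U)
    (hV : Continuous V) (hU₀ : ∀ x ∈ Icc 0 a, 0 ≤ U x) (hV₀ : ∀ x ∈ Icc 0 b, 0 ≤ V x)
    (h : enthalpyDist A 0 a b U V ≤ 0) : a = b ∧ EqOn U V (Icc 0 a) := by
  wlog hab : a ≤ b generalizing a b U V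
  · obtain ⟨rfl, hVU⟩ := this hb ha hV hU hV₀ hU₀ (enthalpyDist_comm A 0 a b U V ▸ h)
      (le_of_not_ge hab)
    exact ⟨rfl, hVU.symm⟩
  have integrand_nonneg (x : ℝ) : 0 ≤ |U x - V x| * expWeight A x :=
    mul_nonneg (abs_nonneg _) (expWeight_pos A x).le
  have tail_pos : ∀ x ∈ Icc a b, 0 < (1 + V x) * expWeight A x := fun x hx =>
    mul_pos (by linarith [hV₀ x ⟨ha.le.trans hx.1, hx.2⟩]) (expWeight_pos A x)
  simp only [enthalpyDist_of_le A 0 hab, smoothAbs_zero_left] at h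
  have common_nonneg : 0 ≤ ∫ x in (0 : ℝ)..a, |U x - V x| * expWeight A x :=
    intervalIntegral.integral_nonneg ha.le fun x _ => integrand_nonneg x
  have tail_nonneg : 0 ≤ ∫ x in a..b, (1 + V x) * expWeight A x :=
    intervalIntegral.integral_nonneg hab fun x hx => (tail_pos x hx).le
  constructor
  · by_contra hne
    have : 0 < ∫ x in a..b, (1 + V x) * expWeight A x :=
      intervalIntegral.intervalIntegral_pos_of_pos_on
        ((continuous_one_add_mul_expWeight A hV).intervalIntegrable _ _)
        (fun x hx => tail_pos x (Ioo_subset_Icc_self hx)) (lt_of_le_of_ne hab hne)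
    linarith
  · intro x hx
    by_contra hne
    have : 0 < ∫ x in (0 : ℝ)..a, |U x - V x| * expWeight A x :=
      intervalIntegral.integral_pos ha
        ((hU.sub hV).abs.mul (continuous_expWeight A)).continuousOn (fun x _ => integrand_nonneg x)
        ⟨x, hx, mul_pos (abs_pos.2 (sub_ne_zero.2 hne)) (expWeight_pos A x)⟩
    linarith

end EnthalpyDist

section EnthalpyRate

/-- Upper bound for the rate of change of `enthalpyDist A δ a b U V` along two Stefan flows with
free boundaries `a ≤ b`, temperatures `U`, `V` and gradients `P`, `R`. -/
def enthalpyRate (A δ a b : ℝ) (U P V R : ℝ → ℝ) : ℝ :=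
  weakFlux (signWeight A δ (U - V)) (signWeightDeriv A δ (U - V) (P - R)) (P - R) a +
    (smoothAbs δ (U a - V a) - (1 + V a)) * expWeight A a * -P a +
    (weakFlux (expWeight A) (fun x => -A * expWeight A x) R b -
      weakFlux (expWeight A) (fun x => -A * expWeight A x) R a) +
    (1 + V b) * expWeight A b * -R b

variable {A δ a b : ℝ} {U P V R : ℝ → ℝ}

theorem neg_smoothSign_mul_sub_smoothAbs_le {w q : ℝ} (hA : 0 ≤ A) (hq : |q| ≤ A * |w|) :
    -(smoothSign δ w * q + A * smoothAbs δ w) ≤ A * δ := by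
  have sign_bound : -(smoothSign δ w * q) ≤ |q| := by
    refine (neg_le_abs _).trans ?_
    rw [abs_mul]
    exact mul_le_of_le_one_left (abs_nonneg q) (abs_smoothSign_le_one δ w)
  have abs_bound := mul_le_mul_of_nonneg_left (abs_sub_le_smoothAbs δ w) hA
  linarith

theorem inner_boundary_terms_le {y p r e : ℝ} (hδ : 0 ≤ δ) (hA : 0 ≤ A) (hy : 0 ≤ y)
    (hp : p ≤ 0) (he : 0 ≤ e) (he₁ : e ≤ 1) :
    e * (-smoothSign δ y * (p - r) + A * smoothAbs δ y) - e * (r + A * y) +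
      (smoothAbs δ y - (1 + y)) * e * -p ≤ boundaryDefect δ y (p - r) := by
  have hJ : smoothAbs δ y ≤ y := (smoothAbs_le_abs hδ y).trans_eq (abs_of_nonneg hy)
  have hsign : 0 ≤ 1 - smoothSign δ y := by linarith [(abs_le.1 (abs_smoothSign_le_one δ y)).2]
  calc _ = e * ((1 - smoothSign δ y) * (p - r) + (A - p) * (smoothAbs δ y - y)) := by ring
    _ ≤ e * ((1 - smoothSign δ y) * max 0 (p - r) + 0) := by
        gcongr
        · exact le_max_right _ _
        · exact mul_nonpos_of_nonneg_of_nonpos (by linarith) (by linarith)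
    _ ≤ boundaryDefect δ y (p - r) := by
        rw [add_zero]
        exact mul_le_of_le_one_left (mul_nonneg hsign (le_max_left _ _)) he₁

theorem integral_mul_sub_integral_mul_le (A : ℝ) (hab : a ≤ b) (hV : Continuous V) :
    (∫ x in (0 : ℝ)..b, V x * expWeight A x) - ∫ x in (0 : ℝ)..a, V x * expWeight A x ≤
      ∫ x in a..b, (1 + V x) * expWeight A x := by
  have hVE (c d : ℝ) : IntervalIntegrable (fun x => V x * expWeight A x) volume c d :=
    (hV.mul (continuous_expWeight A)).intervalIntegrable c d
  rw [intervalIntegral.integral_interval_sub_left (hVE _ _) (hVE _ _)]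
  refine intervalIntegral.integral_mono_on hab (hVE a b)
    ((continuous_one_add_mul_expWeight A hV).intervalIntegrable _ _) fun x _ => ?_
  linarith [expWeight_pos A x]

theorem enthalpyRate_le (hδ : 0 < δ) (hA : 0 ≤ A) (ha : 0 ≤ a) (hab : a ≤ b)
    (hU : Continuous U) (hP : Continuous P) (hV : Continuous V) (hR : Continuous R)
    (hUP : ∀ x ∈ Ioo 0 a, HasDerivAt U (P x) x) (hVR : ∀ x ∈ Ioo 0 b, HasDerivAt V (R x) x)
    (hV₀ : 0 ≤ V a) (hUa : U a = 0) (hVb : V b = 0) (hPa : P a ≤ 0)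
    (hflux : |P 0 - R 0| ≤ A * |U 0 - V 0|) :
    enthalpyRate A δ a b U P V R ≤
      A ^ 2 * enthalpyDist A δ a b U V + A * δ + boundaryDefect δ (V a) (P a - R a) := by
  have kato := weakFlux_signWeight_le (A := A) hδ ha (hU.sub hV) (hP.sub hR) fun x hx =>
    (hUP x hx).sub (hVR x ⟨hx.1, hx.2.trans_le hab⟩)
  have flux_inner := weakFlux_expWeight (A := A) ha hV hR fun x hx =>
    hVR x ⟨hx.1, hx.2.trans_le hab⟩
  have flux_outer := weakFlux_expWeight (A := A) (ha.trans hab) hV hR hVR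
  have fixed_boundary := neg_smoothSign_mul_sub_smoothAbs_le (δ := δ) hA hflux
  have inner_boundary := inner_boundary_terms_le (r := R a) hδ.le hA hV₀ hPa
    (expWeight_pos A a).le (expWeight_le_one hA ha)
  have tail := mul_le_mul_of_nonneg_left (integral_mul_sub_integral_mul_le A hab hV) (sq_nonneg A)
  rw [enthalpyRate, flux_inner, flux_outer, enthalpyDist_of_le A δ hab, hUa, hVb, zero_sub,
    smoothAbs_neg]
  simp only [Pi.sub_apply, hUa, zero_sub, smoothAbs_neg, smoothSign_neg] at kato
  linarith

end EnthalpyRate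

/-! ### Growth of the distance along two flows -/

section Increment

variable {A δ a b a₀ b₀ : ℝ} {U V U₀ V₀ : ℝ → ℝ}

theorem integral_smoothAbs_sub_le (A : ℝ) (hδ : 0 < δ) (ha : 0 ≤ a) (hU : Continuous U)
    (hV : Continuous V) (hU₀ : Continuous U₀) (hV₀ : Continuous V₀) :
    (∫ x in (0 : ℝ)..a, smoothAbs δ (U₀ x - V₀ x) * expWeight A x) -
        ∫ x in (0 : ℝ)..a, smoothAbs δ (U x - V x) * expWeight A x ≤
      (∫ x in (0 : ℝ)..a, signWeight A δ (U₀ - V₀) x * (U₀ x - U x)) -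
        ∫ x in (0 : ℝ)..a, signWeight A δ (U₀ - V₀) x * (V₀ x - V x) := by
  have hη : Continuous (signWeight A δ (U₀ - V₀)) := continuous_signWeight hδ (hU₀.sub hV₀)
  have hJ := (continuous_smoothAbs_sub_mul_expWeight A δ hU hV).intervalIntegrable 0 a (μ := volume)
  have hJ₀ :=
    (continuous_smoothAbs_sub_mul_expWeight A δ hU₀ hV₀).intervalIntegrable 0 a (μ := volume)
  have hη_mul {w z : ℝ → ℝ} (hw : Continuous w) (hz : Continuous z) :
      IntervalIntegrable (fun x => signWeight A δ (U₀ - V₀) x * (w x - z x)) volume 0 a :=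
    (hη.mul (hw.sub hz)).intervalIntegrable _ _
  rw [← intervalIntegral.integral_sub hJ₀ hJ,
    ← intervalIntegral.integral_sub (hη_mul hU₀ hU) (hη_mul hV₀ hV)]
  refine intervalIntegral.integral_mono_on ha (hJ₀.sub hJ)
    ((hη_mul hU₀ hU).sub (hη_mul hV₀ hV)) fun x _ => ?_
  have convexity := mul_le_mul_of_nonneg_right
    (smoothAbs_sub_le hδ (U₀ x - V₀ x) (U x - V x)) (expWeight_pos A x).le
  simp only [signWeight, Pi.sub_apply]
  linarith

theorem enthalpyDist_sub_le (A : ℝ) (hδ : 0 < δ) (ha : 0 ≤ a) (hab : a ≤ b) (hab₀ : a₀ ≤ b₀)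
    (hU : Continuous U) (hV : Continuous V) (hU₀ : Continuous U₀) (hV₀ : Continuous V₀) :
    enthalpyDist A δ a₀ b₀ U₀ V₀ - enthalpyDist A δ a b U V ≤
      ((∫ x in (0 : ℝ)..a, signWeight A δ (U₀ - V₀) x * (U₀ x - U x)) -
        ∫ x in (0 : ℝ)..a, signWeight A δ (U₀ - V₀) x * (V₀ x - V x)) +
      (∫ x in a..a₀, (smoothAbs δ (U₀ x - V₀ x) - (1 + V₀ x)) * expWeight A x) +
      ((∫ x in (0 : ℝ)..b, expWeight A x * (V₀ x - V x)) -
        ∫ x in (0 : ℝ)..a, expWeight A x * (V₀ x - V x)) +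
      ∫ x in b..b₀, (1 + V₀ x) * expWeight A x := by
  have hJ₀ (c d : ℝ) :=
    (continuous_smoothAbs_sub_mul_expWeight A δ hU₀ hV₀).intervalIntegrable c d (μ := volume)
  have hT (c d : ℝ) :=
    (continuous_one_add_mul_expWeight A hV).intervalIntegrable c d (μ := volume)
  have hT₀ (c d : ℝ) :=
    (continuous_one_add_mul_expWeight A hV₀).intervalIntegrable c d (μ := volume)
  have tail_increment (c : ℝ) : ∫ x in (0 : ℝ)..c, expWeight A x * (V₀ x - V x) =
      (∫ x in (0 : ℝ)..c, (1 + V₀ x) * expWeight A x) -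
        ∫ x in (0 : ℝ)..c, (1 + V x) * expWeight A x := by
    rw [← intervalIntegral.integral_sub (hT₀ 0 c) (hT 0 c)]
    congr 1 with x
    ring
  have swept : ∫ x in a..a₀, (smoothAbs δ (U₀ x - V₀ x) - (1 + V₀ x)) * expWeight A x =
      (∫ x in a..a₀, smoothAbs δ (U₀ x - V₀ x) * expWeight A x) -
        ∫ x in a..a₀, (1 + V₀ x) * expWeight A x := by
    simp only [sub_mul]
    exact intervalIntegral.integral_sub (hJ₀ a a₀) (hT₀ a a₀)
  have common := integral_smoothAbs_sub_le A hδ ha hU hV hU₀ hV₀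
  rw [enthalpyDist_of_le A δ hab, enthalpyDist_of_le A δ hab₀, tail_increment, tail_increment,
    swept]
  have split_J₀ := intervalIntegral.integral_add_adjacent_intervals (hJ₀ 0 a) (hJ₀ a a₀)
  have split_T := intervalIntegral.integral_add_adjacent_intervals (hT 0 a) (hT a b)
  have split_a := intervalIntegral.integral_add_adjacent_intervals (hT₀ 0 a) (hT₀ a a₀)
  have split_b := intervalIntegral.integral_add_adjacent_intervals (hT₀ 0 b) (hT₀ b b₀)
  have split_ab := intervalIntegral.integral_add_adjacent_intervals (hT₀ 0 a₀) (hT₀ a₀ b₀)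
  linarith

end Increment

theorem weakFlux_sub {θ θ' w z : ℝ → ℝ} (hθ' : Continuous θ') (hw : Continuous w)
    (hz : Continuous z) (y : ℝ) :
    weakFlux θ θ' (w - z) y = weakFlux θ θ' w y - weakFlux θ θ' z y := by
  have hθ'_mul {f : ℝ → ℝ} (hf : Continuous f) :
      IntervalIntegrable (fun x => θ' x * f x) volume 0 y :=
    (hθ'.mul hf).intervalIntegrable _ _
  simp only [weakFlux, Pi.sub_apply, mul_sub]
  rw [intervalIntegral.integral_sub (hθ'_mul hw) (hθ'_mul hz)]
  ring

/-- Two Stefan flows whose fluxes at the fixed boundary `x = 0` depend on the temperature there in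
an `A`-Lipschitz way. -/
structure StefanPair (A a b : ℝ) (s σ : ℝ → ℝ) (U P V R : ℝ → ℝ → ℝ) : Prop where
  nonneg : 0 ≤ A
  left : StefanFlow a b s U P
  right : StefanFlow a b σ V R
  flux_le : ∀ t ∈ Icc a b, |P t 0 - R t 0| ≤ A * |U t 0 - V t 0|

/-- The distance `enthalpyDist` at time `t` of the free boundaries and temperatures of two flows. -/
def flowDist (A δ : ℝ) (s σ : ℝ → ℝ) (U V : ℝ → ℝ → ℝ) (t : ℝ) : ℝ :=
  enthalpyDist A δ (s t) (σ t) (U t) (V t)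

theorem flowDist_comm (A δ : ℝ) (s σ : ℝ → ℝ) (U V : ℝ → ℝ → ℝ) :
    flowDist A δ s σ U V = flowDist A δ σ s V U :=
  funext fun _ => enthalpyDist_comm _ _ _ _ _ _

/-- If `s` is the inner of the two free boundaries at time `t`, then the `boundaryDefect` there is
at most `ε`. -/
def InnerDefectLE (s σ : ℝ → ℝ) (P V R : ℝ → ℝ → ℝ) (δ t ε : ℝ) : Prop :=
  s t ≤ σ t → boundaryDefect δ (V t (s t)) (P t (s t) - R t (s t)) ≤ ε

namespace StefanPair

variable {A K a b c δ ε t₀ t₁ t₂ : ℝ} {s σ : ℝ → ℝ} {U P V R : ℝ → ℝ → ℝ}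

theorem symm (h : StefanPair A a b s σ U P V R) : StefanPair A a b σ s V R U P where
  nonneg := h.nonneg
  left := h.right
  right := h.left
  flux_le t ht := by simpa only [abs_sub_comm] using h.flux_le t ht

theorem continuousOn_flowDist (h : StefanPair A a b s σ U P V R) (δ : ℝ) :
    ContinuousOn (flowDist A δ s σ U V) (Icc a b) :=
  continuousOn_enthalpyDist A δ h.left.boundary_continuousOn h.right.boundary_continuousOn
    h.left.temp_continuous h.right.temp_continuous

theorem tendsto_signWeight_increment_div (h : StefanPair A a b s σ U P V R) (hδ : 0 < δ)
    (ht₀ : t₀ ∈ Ioc a b) (hst₀ : s t₀ ≤ σ t₀) :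
    Tendsto (fun t =>
        (∫ x in (0 : ℝ)..(s t), signWeight A δ (U t₀ - V t₀) x * (U t₀ x - U t x)) / (t₀ - t) -
        (∫ x in (0 : ℝ)..(s t), signWeight A δ (U t₀ - V t₀) x * (V t₀ x - V t x)) / (t₀ - t))
      (𝓝[<] t₀ ⊓ 𝓟 {t | s t ≤ σ t})
      (𝓝 (weakFlux (signWeight A δ (U t₀ - V t₀))
        (signWeightDeriv A δ (U t₀ - V t₀) (P t₀ - R t₀)) (P t₀ - R t₀) (s t₀))) := by
  have ht₀' := Ioc_subset_Icc_self ht₀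
  have hP := h.left.grad_continuous.uncurry_left t₀
  have hR := h.right.grad_continuous.uncurry_left t₀
  have hW := (h.left.temp_continuous.uncurry_left t₀).sub (h.right.temp_continuous.uncurry_left t₀)
  have hη := continuous_signWeight (A := A) hδ hW
  have hη' := continuous_signWeightDeriv (A := A) hδ hW (hP.sub hR)
  have hs : Tendsto s (𝓝[<] t₀ ⊓ 𝓟 {t | s t ≤ σ t}) (𝓝 (s t₀)) :=
    (h.left.hasDerivAt_boundary t₀ ht₀').continuousAt.mono_left
      (inf_le_left.trans nhdsWithin_le_nhds)
  have past : ∀ᶠ t in 𝓝[<] t₀ ⊓ 𝓟 {t | s t ≤ σ t}, t ∈ Ioo a t₀ ∧ s t ≤ σ t :=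
    eventually_inf_principal.2 <| by
      filter_upwards [Ioo_mem_nhdsLT ht₀.1] with t ht hst using ⟨ht, hst⟩
  have deriv_signWeight : ∀ᶠ t in 𝓝[<] t₀ ⊓ 𝓟 {t | s t ≤ σ t}, ∀ x ∈ Ioo 0 (s t),
      HasDerivAt (signWeight A δ (U t₀ - V t₀))
        (signWeightDeriv A δ (U t₀ - V t₀) (P t₀ - R t₀) x) x := by
    filter_upwards [past] with t ht x hx
    have hx₀ : x ∈ Ioo 0 (s t₀) := ⟨hx.1, hx.2.trans_le <|
      h.left.boundary_monotoneOn ⟨ht.1.1.le, ht.1.2.le.trans ht₀.2⟩ ht₀' ht.1.2.le⟩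
    exact hasDerivAt_signWeight hδ ((h.left.hasDerivAt_temp t₀ ht₀' x hx₀).sub
      (h.right.hasDerivAt_temp t₀ ht₀' x ⟨hx₀.1, hx₀.2.trans_le hst₀⟩))
  have pos : ∀ᶠ t in 𝓝[<] t₀ ⊓ 𝓟 {t | s t ≤ σ t}, 0 ≤ s t := by
    filter_upwards [past] with t ht
    exact (h.left.boundary_pos t ⟨ht.1.1.le, ht.1.2.le.trans ht₀.2⟩).le
  rw [weakFlux_sub hη' hP hR]
  refine (h.left.tendsto_integral_mul_sub_div hη hη' ht₀ inf_le_left hs ?_ deriv_signWeight).sub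
    (h.right.tendsto_integral_mul_sub_div hη hη' ht₀ inf_le_left hs ?_ deriv_signWeight)
  · filter_upwards [pos] with t ht using ⟨ht, le_rfl⟩
  · filter_upwards [pos, past] with t ht hst using ⟨ht, hst.2⟩

theorem tendsto_expWeight_increment_div (h : StefanPair A a b s σ U P V R) (ht₀ : t₀ ∈ Ioc a b) :
    Tendsto (fun t =>
        (∫ x in (0 : ℝ)..(σ t), expWeight A x * (V t₀ x - V t x)) / (t₀ - t) -
        (∫ x in (0 : ℝ)..(s t), expWeight A x * (V t₀ x - V t x)) / (t₀ - t))
      (𝓝[<] t₀ ⊓ 𝓟 {t | s t ≤ σ t})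
      (𝓝 (weakFlux (expWeight A) (fun x => -A * expWeight A x) (R t₀) (σ t₀) -
        weakFlux (expWeight A) (fun x => -A * expWeight A x) (R t₀) (s t₀))) := by
  have ht₀' := Ioc_subset_Icc_self ht₀
  have hE' : Continuous fun x => -A * expWeight A x := (continuous_expWeight A).const_mul _
  have hle : 𝓝[<] t₀ ⊓ 𝓟 {t | s t ≤ σ t} ≤ 𝓝 t₀ := inf_le_left.trans nhdsWithin_le_nhds
  have pos : ∀ᶠ t in 𝓝[<] t₀ ⊓ 𝓟 {t | s t ≤ σ t}, 0 < s t ∧ 0 < σ t ∧ s t ≤ σ t :=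
    eventually_inf_principal.2 <| by
      filter_upwards [Ioo_mem_nhdsLT ht₀.1] with t ht hst
      have ht' : t ∈ Icc a b := ⟨ht.1.le, ht.2.le.trans ht₀.2⟩
      exact ⟨h.left.boundary_pos t ht', h.right.boundary_pos t ht', hst⟩
  refine (h.right.tendsto_integral_mul_sub_div (continuous_expWeight A) hE' ht₀ inf_le_left
    ((h.right.hasDerivAt_boundary t₀ ht₀').continuousAt.mono_left hle) ?_
    (Eventually.of_forall fun _ x _ => hasDerivAt_expWeight A x)).sub
    (h.right.tendsto_integral_mul_sub_div (continuous_expWeight A) hE' ht₀ inf_le_left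
    ((h.left.hasDerivAt_boundary t₀ ht₀').continuousAt.mono_left hle) ?_
    (Eventually.of_forall fun _ x _ => hasDerivAt_expWeight A x))
  · filter_upwards [pos] with t ht using ⟨ht.2.1.le, le_rfl⟩
  · filter_upwards [pos] with t ht using ⟨ht.1.le, ht.2.2⟩

theorem eventually_flowDist_sub_le (h : StefanPair A a b s σ U P V R) (hδ : 0 < δ)
    (ht₀ : t₀ ∈ Ioc a b) (hst₀ : s t₀ ≤ σ t₀)
    (hc : enthalpyRate A δ (s t₀) (σ t₀) (U t₀) (P t₀) (V t₀) (R t₀) < c) :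
    ∀ᶠ t in 𝓝[<] t₀, s t ≤ σ t →
      flowDist A δ s σ U V t₀ - flowDist A δ s σ U V t ≤ c * (t₀ - t) := by
  have ht₀' := Ioc_subset_Icc_self ht₀
  have hU (t : ℝ) := h.left.temp_continuous.uncurry_left t
  have hV (t : ℝ) := h.right.temp_continuous.uncurry_left t
  have hswept : Continuous fun x =>
      (smoothAbs δ (U t₀ x - V t₀ x) - (1 + V t₀ x)) * expWeight A x := by
    simp only [sub_mul]
    exact (continuous_smoothAbs_sub_mul_expWeight A δ (hU t₀) (hV t₀)).sub
      (continuous_one_add_mul_expWeight A (hV t₀))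
  have rate_limit := (((h.tendsto_signWeight_increment_div hδ ht₀ hst₀).add
    ((tendsto_integral_div_sub_of_hasDerivAt hswept (h.left.hasDerivAt_boundary t₀ ht₀')).mono_left
      inf_le_left)).add (h.tendsto_expWeight_increment_div ht₀)).add
    ((tendsto_integral_div_sub_of_hasDerivAt (continuous_one_add_mul_expWeight A (hV t₀))
      (h.right.hasDerivAt_boundary t₀ ht₀')).mono_left inf_le_left)
  filter_upwards [eventually_inf_principal.1 (rate_limit.eventually_lt_const hc),
    Ioo_mem_nhdsLT ht₀.1] with t hrate ht hst
  have increment := enthalpyDist_sub_le (A := A) hδ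
    (h.left.boundary_pos t ⟨ht.1.le, ht.2.le.trans ht₀.2⟩).le hst hst₀ (hU t) (hV t) (hU t₀) (hV t₀)
  have hlt := hrate hst
  rw [← sub_div, ← sub_div, ← add_div, ← add_div, ← add_div, div_lt_iff₀ (sub_pos.2 ht.2)] at hlt
  exact increment.trans hlt.le

theorem enthalpyRate_le_of_innerDefectLE (h : StefanPair A a b s σ U P V R) (hδ : 0 < δ)
    (ht₀ : t₀ ∈ Icc a b) (hst₀ : s t₀ ≤ σ t₀) (hε : InnerDefectLE s σ P V R δ t₀ ε) :
    enthalpyRate A δ (s t₀) (σ t₀) (U t₀) (P t₀) (V t₀) (R t₀) ≤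
      A ^ 2 * flowDist A δ s σ U V t₀ + A * δ + ε := by
  have hs := (h.left.boundary_pos t₀ ht₀).le
  exact (enthalpyRate_le hδ h.nonneg hs hst₀ (h.left.temp_continuous.uncurry_left t₀)
    (h.left.grad_continuous.uncurry_left t₀) (h.right.temp_continuous.uncurry_left t₀)
    (h.right.grad_continuous.uncurry_left t₀) (h.left.hasDerivAt_temp t₀ ht₀)
    (h.right.hasDerivAt_temp t₀ ht₀) (h.right.temp_nonneg t₀ ht₀ _ ⟨hs, hst₀⟩)
    (h.left.temp_boundary t₀ ht₀) (h.right.temp_boundary t₀ ht₀)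
    (h.left.grad_boundary_nonpos ht₀) (h.flux_le t₀ ht₀)).trans (add_le_add_right (hε hst₀) _)

theorem upperLeftDiniLE_flowDist (h : StefanPair A a b s σ U P V R) (hδ : 0 < δ)
    (ht₀ : t₀ ∈ Ioc a b) (hs : InnerDefectLE s σ P V R δ t₀ ε)
    (hσ : InnerDefectLE σ s R U P δ t₀ ε) :
    UpperLeftDiniLE (flowDist A δ s σ U V) t₀ (A ^ 2 * flowDist A δ s σ U V t₀ + A * δ + ε) := by
  wlog hst₀ : s t₀ ≤ σ t₀ generalizing s σ U P V R
  · exact flowDist_comm A δ s σ U V ▸ this h.symm hσ hs (le_of_not_ge hst₀)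
  intro c hc
  have ht₀' := Ioc_subset_Icc_self ht₀
  have inner := h.eventually_flowDist_sub_le hδ ht₀ hst₀
    ((h.enthalpyRate_le_of_innerDefectLE hδ ht₀' hst₀ hs).trans_lt hc)
  rcases hst₀.lt_or_eq with hlt | heq
  · have order := ((h.left.hasDerivAt_boundary t₀ ht₀').continuousAt.eventually_lt
      (h.right.hasDerivAt_boundary t₀ ht₀').continuousAt hlt).filter_mono
        (nhdsWithin_le_nhds (s := Iio t₀))
    filter_upwards [inner, order] with t ht hst using ht hst.le
  · rw [flowDist_comm A δ s σ U V] at hc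
    have outer := h.symm.eventually_flowDist_sub_le hδ ht₀ heq.ge
      ((h.symm.enthalpyRate_le_of_innerDefectLE hδ ht₀' heq.ge hσ).trans_lt hc)
    rw [flowDist_comm A δ σ s V U] at outer
    filter_upwards [inner, outer] with t hin hout using (le_total (s t) (σ t)).elim hin hout

theorem flowDist_le_flowDist_zero (h : StefanPair A a b s σ U P V R) (hδ : 0 ≤ δ)
    (ht₀ : t₀ ∈ Icc a b) : flowDist A δ s σ U V t₀ ≤ flowDist A 0 s σ U V t₀ :=
  enthalpyDist_le_enthalpyDist_zero hδ (h.left.boundary_pos t₀ ht₀).le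
    (h.right.boundary_pos t₀ ht₀).le (h.left.temp_continuous.uncurry_left t₀)
    (h.right.temp_continuous.uncurry_left t₀)

theorem tendsto_flowDist_nhdsGT_zero (h : StefanPair A a b s σ U P V R) (t : ℝ) :
    Tendsto (fun δ => flowDist A δ s σ U V t) (𝓝[>] 0) (𝓝 (flowDist A 0 s σ U V t)) :=
  (continuous_enthalpyDist_param A (s t) (σ t) (h.left.temp_continuous.uncurry_left t)
    (h.right.temp_continuous.uncurry_left t)).continuousAt.mono_left nhdsWithin_le_nhds

theorem flowDist_zero_sub_le (h : StefanPair A a b s σ U P V R) (ht : t₁ ≤ t₂) (ht₁ : a ≤ t₁)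
    (ht₂ : t₂ ≤ b) (hs : ∀ᶠ δ in 𝓝[>] 0, ∀ r ∈ Ioo t₁ t₂, InnerDefectLE s σ P V R δ r ε)
    (hσ : ∀ᶠ δ in 𝓝[>] 0, ∀ r ∈ Ioo t₁ t₂, InnerDefectLE σ s R U P δ r ε)
    (hc : ∀ r ∈ Ioo t₁ t₂, A ^ 2 * flowDist A 0 s σ U V r + ε ≤ c) :
    flowDist A 0 s σ U V t₂ - flowDist A 0 s σ U V t₁ ≤ c * (t₂ - t₁) := by
  have regularised : ∀ᶠ δ in 𝓝[>] 0,
      flowDist A δ s σ U V t₂ - flowDist A δ s σ U V t₁ ≤ (c + A * δ) * (t₂ - t₁) := by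
    filter_upwards [hs, hσ, self_mem_nhdsWithin] with δ hsδ hσδ hδ
    refine UpperLeftDiniLE.sub_le ht
      ((h.continuousOn_flowDist δ).mono (Icc_subset_Icc ht₁ ht₂)) fun r hr c' hc' => ?_
    have hr' : r ∈ Ioc a b := ⟨ht₁.trans_lt hr.1, hr.2.le.trans ht₂⟩
    refine h.upperLeftDiniLE_flowDist hδ hr' (hsδ r hr) (hσδ r hr) c' (lt_of_le_of_lt ?_ hc')
    have := mul_le_mul_of_nonneg_left
      (h.flowDist_le_flowDist_zero (le_of_lt hδ) (Ioc_subset_Icc_self hr')) (sq_nonneg A)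
    linarith [hc r hr]
  have bound_limit : Tendsto (fun δ => (c + A * δ) * (t₂ - t₁)) (𝓝[>] 0) (𝓝 (c * (t₂ - t₁))) :=
    (Continuous.tendsto' (by fun_prop) 0 _ (by simp)).mono_left nhdsWithin_le_nhds
  exact le_of_tendsto_of_tendsto
    ((h.tendsto_flowDist_nhdsGT_zero t₂).sub (h.tendsto_flowDist_nhdsGT_zero t₁)) bound_limit
    regularised

/-- Inside the outer domain the outer temperature is positive, or vanishes together with its
gradient; at a common boundary point the gradients are compared by hypothesis. -/
theorem eventually_innerDefectLE (h : StefanPair A a b s σ U P V R) (ht₀ : t₀ ∈ Icc a b)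
    (hgrad : s t₀ = σ t₀ → P t₀ (s t₀) ≤ R t₀ (s t₀)) (hε : 0 < ε) :
    ∀ᶠ r : ℝ × ℝ in 𝓝 0 ×ˢ 𝓝 t₀, InnerDefectLE s σ P V R r.1 r.2 ε := by
  have hs := (h.left.hasDerivAt_boundary t₀ ht₀).continuousAt
  have hσ := (h.right.hasDerivAt_boundary t₀ ht₀).continuousAt
  rcases lt_or_ge (σ t₀) (s t₀) with hlt | hle
  · filter_upwards [tendsto_snd.eventually (hσ.eventually_lt hs hlt)] with r hr hle
    exact absurd hle hr.not_ge
  have along_boundary {f : ℝ → ℝ → ℝ} (hf : Continuous (Function.uncurry f)) :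
      Tendsto (fun t => f t (s t)) (𝓝 t₀) (𝓝 (f t₀ (s t₀))) :=
    (hf.tendsto (t₀, s t₀)).comp (tendsto_id.prodMk_nhds hs)
  have sign_cases : 0 < V t₀ (s t₀) ∨ P t₀ (s t₀) - R t₀ (s t₀) ≤ 0 := by
    have hpos := h.left.boundary_pos t₀ ht₀
    rcases hle.lt_or_eq with hlt | heq
    · refine (h.right.temp_nonneg t₀ ht₀ _ ⟨hpos.le, hle⟩).lt_or_eq.imp_right fun hV => ?_
      rw [h.right.grad_eq_zero ht₀ ⟨hpos, hlt⟩ hV.symm, sub_zero]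
      exact h.left.grad_boundary_nonpos ht₀
    · exact Or.inr (sub_nonpos.2 (hgrad heq))
  have defect_limit := tendsto_boundaryDefect (along_boundary h.right.temp_continuous)
    ((along_boundary h.left.grad_continuous).sub (along_boundary h.right.grad_continuous))
    sign_cases
  filter_upwards [defect_limit.eventually_le_const hε] with r hr _ using hr

theorem eventually_mul_flowDist_lt (h : StefanPair A a b s σ U P V R) (ht₀ : t₀ ∈ Ioc a b)
    (hc : K * flowDist A 0 s σ U V t₀ < c) :
    ∀ᶠ r in 𝓝[<] t₀, K * flowDist A 0 s σ U V r < c := by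
  have hF := ((h.continuousOn_flowDist 0) t₀ (Ioc_subset_Icc_self ht₀)).mono_of_mem_nhdsWithin
    (mem_of_superset (Ioo_mem_nhdsLT ht₀.1) fun r hr => ⟨hr.1.le, hr.2.le.trans ht₀.2⟩)
  exact (hF.tendsto.const_mul K).eventually_lt_const hc

theorem upperLeftDiniLE_flowDist_zero_of_grad_eq (h : StefanPair A a b s σ U P V R)
    (ht₀ : t₀ ∈ Ioc a b) (hgrad : s t₀ = σ t₀ → P t₀ (s t₀) = R t₀ (s t₀)) :
    UpperLeftDiniLE (flowDist A 0 s σ U V) t₀ (A ^ 2 * flowDist A 0 s σ U V t₀) := by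
  intro c hc
  have ht₀' := Ioc_subset_Icc_self ht₀
  obtain ⟨c', hc', hc'c⟩ := exists_between hc
  have hs := h.eventually_innerDefectLE ht₀' (fun heq => (hgrad heq).le) (sub_pos.2 hc'c)
  have hσ := h.symm.eventually_innerDefectLE ht₀' (fun heq => heq ▸ (hgrad heq.symm).ge)
    (sub_pos.2 hc'c)
  obtain ⟨S, hS, N, hN, hSN⟩ := eventually_prod_iff.1 (hs.and hσ)
  have hS' : ∀ᶠ δ in 𝓝[>] 0, S δ := hS.filter_mono nhdsWithin_le_nhds
  filter_upwards [eventually_nhdsLT_forall_Ioo (hN.filter_mono nhdsWithin_le_nhds),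
    eventually_nhdsLT_forall_Ioo (h.eventually_mul_flowDist_lt ht₀ hc'),
    Ioo_mem_nhdsLT ht₀.1] with r hrN hrF hr
  refine h.flowDist_zero_sub_le hr.2.le hr.1.le ht₀.2 (ε := c - c') ?_ ?_ fun x hx => by
    linarith [hrF x hx]
  · filter_upwards [hS'] with δ hδ x hx using (hSN hδ (hrN x hx)).1
  · filter_upwards [hS'] with δ hδ x hx using (hSN hδ (hrN x hx)).2

/-- Times at which the free boundaries meet with different speeds are isolated, so the bound passes
to them from earlier times by continuity. -/
theorem upperLeftDiniLE_flowDist_zero (h : StefanPair A a b s σ U P V R) (ht₀ : t₀ ∈ Ioc a b) :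
    UpperLeftDiniLE (flowDist A 0 s σ U V) t₀ (A ^ 2 * flowDist A 0 s σ U V t₀) := by
  by_cases hgrad : s t₀ = σ t₀ → P t₀ (s t₀) = R t₀ (s t₀)
  · exact h.upperLeftDiniLE_flowDist_zero_of_grad_eq ht₀ hgrad
  obtain ⟨hmeet, hspeed⟩ := Classical.not_imp.1 hgrad
  have ht₀' := Ioc_subset_Icc_self ht₀
  have separated : ∀ᶠ r in 𝓝[<] t₀, s r - σ r ≠ 0 := by
    refine (HasDerivAt.eventually_ne ((h.left.hasDerivAt_boundary t₀ ht₀').sub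
      (h.right.hasDerivAt_boundary t₀ ht₀')) fun hzero => hspeed ?_).filter_mono
      (nhdsWithin_mono _ fun r hr => ne_of_lt hr)
    rw [← hmeet] at hzero
    linarith
  intro c hc
  filter_upwards [eventually_nhdsLT_forall_Ioo separated,
    eventually_nhdsLT_forall_Ioo (h.eventually_mul_flowDist_lt ht₀ hc),
    Ioo_mem_nhdsLT ht₀.1] with r hr_sep hrF hr
  refine UpperLeftDiniLE.sub_le hr.2.le
    ((h.continuousOn_flowDist 0).mono (Icc_subset_Icc hr.1.le ht₀.2)) fun x hx c' hc' => ?_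
  exact h.upperLeftDiniLE_flowDist_zero_of_grad_eq ⟨hr.1.trans hx.1, hx.2.le.trans ht₀.2⟩
    (fun heq => absurd (sub_eq_zero.2 heq) (hr_sep x hx)) c' ((hrF x hx).trans hc')

theorem flowDist_le_exp_mul (h : StefanPair A a b s σ U P V R) (ht₀ : t₀ ∈ Icc a b) :
    flowDist A 0 s σ U V t₀ ≤ exp (A ^ 2 * (t₀ - a)) * flowDist A 0 s σ U V a :=
  UpperLeftDiniLE.le_exp_mul ht₀.1
    ((h.continuousOn_flowDist 0).mono (Icc_subset_Icc_right ht₀.2)) fun _ ht =>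
      h.upperLeftDiniLE_flowDist_zero ⟨ht.1, ht.2.trans ht₀.2⟩

theorem flowDist_nonpos
    (hpair : ∀ a ∈ Ioc 0 T, ∃ P R, StefanPair A a T s σ U P V R)
    (hF : ContinuousOn (flowDist A 0 s σ U V) (Icc 0 T)) (hF₀ : flowDist A 0 s σ U V 0 = 0)
    (ht : t ∈ Icc 0 T) : flowDist A 0 s σ U V t ≤ 0 := by
  rcases ht.1.eq_or_lt with rfl | ht₀
  · exact hF₀.le
  have hF_zero : Tendsto (flowDist A 0 s σ U V) (𝓝[>] 0) (𝓝 0) := by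
    have hlim := (hF 0 ⟨le_rfl, ht.1.trans ht.2⟩).tendsto
    rw [hF₀] at hlim
    exact hlim.mono_left <|
      nhdsWithin_le_iff.2 (mem_of_superset (Ioo_mem_nhdsGT ht₀) fun a ha =>
        ⟨ha.1.le, ha.2.le.trans ht.2⟩)
  have hexp : Tendsto (fun a => exp (A ^ 2 * (t - a))) (𝓝[>] 0) (𝓝 (exp (A ^ 2 * (t - 0)))) :=
    (Continuous.tendsto (by fun_prop) 0).mono_left nhdsWithin_le_nhds
  have bound_limit := hexp.mul hF_zero
  rw [mul_zero] at bound_limit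
  refine ge_of_tendsto bound_limit ?_
  filter_upwards [Ioo_mem_nhdsGT ht₀] with a ha
  obtain ⟨P, R, h⟩ := hpair a ⟨ha.1, ha.2.le.trans ht.2⟩
  exact h.flowDist_le_exp_mul ⟨ha.2.le, ht.2⟩

end StefanPair

/-! ### Solutions of problem (P) -/

theorem exists_continuous_extension {a b : ℝ} {s : ℝ → ℝ} {f : ℝ → ℝ → ℝ} (hab : a ≤ b)
    (hs : ContinuousOn s (Icc a b)) (hpos : ∀ t ∈ Icc a b, 0 ≤ s t)
    (hf : ContinuousOn (Function.uncurry f)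
      {q : ℝ × ℝ | q.1 ∈ Icc a b ∧ q.2 ∈ Icc 0 (s q.1)}) :
    ∃ g : ℝ → ℝ → ℝ, Continuous (Function.uncurry g) ∧
      ∀ t ∈ Icc a b, EqOn (g t) (f t) (Icc 0 (s t)) := by
  have clamp_mem (t : ℝ) : max a (min t b) ∈ Icc a b :=
    ⟨le_max_left _ _, max_le hab (min_le_right _ _)⟩
  have hs_clamp : Continuous fun t => s (max a (min t b)) :=
    hs.comp_continuous (by fun_prop) clamp_mem
  refine ⟨fun t x => f (max a (min t b)) (max 0 (min x (s (max a (min t b))))), ?_, ?_⟩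
  · have clamp_continuous : Continuous fun q : ℝ × ℝ =>
        ((max a (min q.1 b), max 0 (min q.2 (s (max a (min q.1 b))))) : ℝ × ℝ) :=
      Continuous.prodMk (by fun_prop)
        (continuous_const.max (continuous_snd.min (hs_clamp.comp continuous_fst)))
    exact hf.comp_continuous clamp_continuous fun q =>
      ⟨clamp_mem _, le_max_left _ _, max_le (hpos _ (clamp_mem _)) (min_le_right _ _)⟩
  · intro t ht x hx
    simp only [min_eq_left ht.2, max_eq_right ht.1, min_eq_left hx.2, max_eq_right hx.1]

theorem hasDerivAt_integral_of_continuousOn_deriv {f f' : ℝ → ℝ → ℝ} {a b c d x : ℝ}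
    (hab : a ≤ b) (hx : x ∈ Ioo c d) (hf : Continuous (Function.uncurry f))
    (hf' : ContinuousOn (Function.uncurry f') (Icc a b ×ˢ Ioo c d))
    (hff' : ∀ t ∈ Icc a b, ∀ y ∈ Ioo c d, HasDerivAt (f t) (f' t y) y) :
    HasDerivAt (fun y => ∫ t in a..b, f t y) (∫ t in a..b, f' t x) x := by
  obtain ⟨c', hc, hcx⟩ := exists_between hx.1
  obtain ⟨d', hxd, hd⟩ := exists_between hx.2
  have hsub : Icc c' d' ⊆ Ioo c d := fun y hy => ⟨hc.trans_le hy.1, hy.2.trans_lt hd⟩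
  have mem_Icc {t : ℝ} (ht : t ∈ uIoc a b) : t ∈ Icc a b :=
    Ioc_subset_Icc_self (uIoc_of_le hab ▸ ht)
  have slice_continuous : ContinuousOn (fun t => f' t x) (Icc a b) :=
    hf'.comp (f := fun t => (t, x)) (by fun_prop) fun t ht => ⟨ht, hx⟩
  obtain ⟨C, hC⟩ := (isCompact_Icc.prod isCompact_Icc).exists_bound_of_continuousOn
    (hf'.mono (prod_mono_right hsub))
  refine (intervalIntegral.hasDerivAt_integral_of_dominated_loc_of_deriv_le
    (F := fun y t => f t y) (F' := fun y t => f' t y) (s := Ioo c' d') (bound := fun _ => C)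
    (Ioo_mem_nhds hcx hxd)
    (Eventually.of_forall fun y => (hf.uncurry_right y).aestronglyMeasurable)
    ((hf.uncurry_right x).intervalIntegrable a b) ?_ ?_ (by simp) ?_).2
  · exact (slice_continuous.mono fun t => mem_Icc).aestronglyMeasurable measurableSet_uIoc
  · exact Eventually.of_forall fun t ht y hy =>
      hC (t, y) ⟨mem_Icc ht, Ioo_subset_Icc_self hy⟩
  · exact Eventually.of_forall fun t ht y hy =>
      hff' t (mem_Icc ht) y (hsub (Ioo_subset_Icc_self hy))

theorem exists_lipschitzOnWith_rpow {p : ℝ} {K : Set ℝ} (hp : 1 ≤ p) (hK : IsCompact K) :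
    ∃ C, LipschitzOnWith C (fun x : ℝ => x ^ p) K := by
  have smooth : ContDiff ℝ 1 fun x : ℝ => x ^ p := by
    simpa using Real.contDiff_rpow_const_of_le (n := 1) (p := p) (by simpa using hp)
  exact smooth.locallyLipschitz.locallyLipschitzOn.exists_lipschitzOnWith_of_compact hK

namespace IsSolOn

variable {p s₀ T a : ℝ} {φ s : ℝ → ℝ} {u U P : ℝ → ℝ → ℝ}

theorem exists_temp_extension (h : IsSolOn p s₀ φ T s u) :
    ∃ U : ℝ → ℝ → ℝ, Continuous (Function.uncurry U) ∧
      ∀ t ∈ Icc 0 T, EqOn (U t) (u t) (Icc 0 (s t)) :=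
  exists_continuous_extension h.T_pos.le h.s_cont (fun t ht => (h.s_pos t ht).le) h.u_cont

theorem exists_grad_extension (h : IsSolOn p s₀ φ T s u) (ha : 0 < a) (haT : a ≤ T) :
    ∃ P : ℝ → ℝ → ℝ, Continuous (Function.uncurry P) ∧
      ∀ t ∈ Icc a T, EqOn (P t) (deriv (u t)) (Icc 0 (s t)) := by
  have hsub : Icc a T ⊆ Ioc 0 T := fun t ht => ⟨ha.trans_le ht.1, ht.2⟩
  exact exists_continuous_extension haT (h.s_cont.mono (hsub.trans Ioc_subset_Icc_self))
    (fun t ht => (h.s_pos t (Ioc_subset_Icc_self (hsub ht))).le)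
    (h.ux_cont.mono fun q hq => ⟨hsub hq.1, hq.2⟩)

theorem integral_deriv_deriv (h : IsSolOn p s₀ φ T s u) {t t₀ x : ℝ} (ht : 0 < t) (htt₀ : t ≤ t₀)
    (ht₀ : t₀ ≤ T) (hx : ∀ τ ∈ Icc t t₀, x ∈ Ioo 0 (s τ)) :
    ∫ τ in t..t₀, deriv (deriv (u τ)) x = u t₀ x - u t x := by
  have hmem : ∀ τ ∈ uIcc t t₀, τ ∈ Ioc 0 T ∧ x ∈ Ioo 0 (s τ) := fun τ hτ => by
    rw [uIcc_of_le htt₀] at hτ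
    exact ⟨⟨ht.trans_le hτ.1, hτ.2.trans ht₀⟩, hx τ hτ⟩
  have slice_continuous : ContinuousOn (fun τ => deriv (deriv (u τ)) x) (uIcc t t₀) :=
    h.uxx_cont.comp (f := fun τ => (τ, x)) (by fun_prop) hmem
  refine intervalIntegral.integral_eq_sub_of_hasDerivAt (f := fun τ => u τ x) (fun τ hτ => ?_)
    slice_continuous.intervalIntegrable
  obtain ⟨hτT, hxτ⟩ := hmem τ hτ
  exact h.heat τ hτT x hxτ ▸ (h.ut_diff τ hτT x hxτ).hasDerivAt

theorem hasDerivAt_integral_grad (h : IsSolOn p s₀ φ T s u)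
    (hP : Continuous (Function.uncurry P))
    (hPu : ∀ t ∈ Icc a T, EqOn (P t) (deriv (u t)) (Icc 0 (s t))) (ha : 0 < a) {t t₀ x : ℝ}
    (ht : a ≤ t) (htt₀ : t ≤ t₀) (ht₀ : t₀ ≤ T) (hx : ∀ τ ∈ Icc t t₀, x ∈ Ioo 0 (s τ)) :
    HasDerivAt (fun y => ∫ τ in t..t₀, P τ y) (u t₀ x - u t x) x := by
  have hIoc : Icc t t₀ ⊆ Ioc 0 T := fun τ hτ => ⟨ha.trans_le (ht.trans hτ.1), hτ.2.trans ht₀⟩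
  obtain ⟨τ₀, hτ₀, hmin⟩ := isCompact_Icc.exists_isMinOn (nonempty_Icc.2 htt₀)
    (h.s_cont.mono (hIoc.trans Ioc_subset_Icc_self))
  have hmem {τ y : ℝ} (hτ : τ ∈ Icc t t₀) (hy : y ∈ Ioo 0 (s τ₀)) : y ∈ Ioo 0 (s τ) :=
    ⟨hy.1, hy.2.trans_le (hmin hτ)⟩
  rw [← h.integral_deriv_deriv (ha.trans_le ht) htt₀ ht₀ hx]
  refine hasDerivAt_integral_of_continuousOn_deriv (f' := fun τ => deriv (deriv (u τ))) htt₀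
    (hx τ₀ hτ₀) hP (h.uxx_cont.mono fun q hq => ⟨hIoc hq.1, hmem hq.1 hq.2⟩) fun τ hτ y hy => ?_
  have hyτ := hmem hτ hy
  refine (h.uxx_diff τ (hIoc hτ) y hyτ).hasDerivAt.congr_of_eventuallyEq ?_
  exact ((hPu τ ⟨ht.trans hτ.1, hτ.2.trans ht₀⟩).mono Ioo_subset_Icc_self).eventuallyEq_of_mem
    (Ioo_mem_nhds hyτ.1 hyτ.2)

theorem stefanFlow (h : IsSolOn p s₀ φ T s u) (hU : Continuous (Function.uncurry U))
    (hUu : ∀ t ∈ Icc 0 T, EqOn (U t) (u t) (Icc 0 (s t))) (hP : Continuous (Function.uncurry P))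
    (hPu : ∀ t ∈ Icc a T, EqOn (P t) (deriv (u t)) (Icc 0 (s t))) (ha : 0 < a) :
    StefanFlow a T s U P := by
  have hIoc : Icc a T ⊆ Ioc 0 T := fun t ht => ⟨ha.trans_le ht.1, ht.2⟩
  have hIcc : Icc a T ⊆ Icc 0 T := hIoc.trans Ioc_subset_Icc_self
  have right_mem {t : ℝ} (ht : t ∈ Icc a T) : s t ∈ Icc 0 (s t) :=
    ⟨(h.s_pos t (hIcc ht)).le, le_rfl⟩
  refine ⟨hU, hP, fun t ht => h.s_pos t (hIcc ht), fun t ht x hx => ?_, fun t ht x hx => ?_,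
    fun t ht => ?_, fun t ht => ?_, fun t ht t₀ ht₀ htt₀ x hx => ?_⟩
  · rw [hUu t (hIcc ht) hx]
    exact h.u_nonneg t (hIcc ht) x hx
  · rw [hPu t ht (Ioo_subset_Icc_self hx)]
    refine (h.ux_diff t (hIoc ht) x hx).hasDerivAt.congr_of_eventuallyEq ?_
    exact ((hUu t (hIcc ht)).mono Ioo_subset_Icc_self).eventuallyEq_of_mem (Ioo_mem_nhds hx.1 hx.2)
  · rw [hUu t (hIcc ht) (right_mem ht), h.bc_free t (hIoc ht)]
  · rw [hPu t ht (right_mem ht), ← h.stefan t (hIoc ht)]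
    exact (h.s_diff t (hIoc ht)).hasDerivAt
  · rw [hUu t₀ (hIcc ht₀) (Ioo_subset_Icc_self (hx t₀ (right_mem_Icc.2 htt₀))),
      hUu t (hIcc ht) (Ioo_subset_Icc_self (hx t (left_mem_Icc.2 htt₀)))]
    exact h.hasDerivAt_integral_grad hP hPu ha ht.1 htt₀ ht₀.2 hx

theorem grad_fixed_boundary (h : IsSolOn p s₀ φ T s u)
    (hUu : ∀ t ∈ Icc 0 T, EqOn (U t) (u t) (Icc 0 (s t)))
    (hPu : ∀ t ∈ Icc a T, EqOn (P t) (deriv (u t)) (Icc 0 (s t))) (ha : 0 < a) {t : ℝ}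
    (ht : t ∈ Icc a T) : P t 0 = -U t 0 ^ p := by
  have ht₀ : 0 < t := ha.trans_le ht.1
  have hpos := (h.s_pos t ⟨ht₀.le, ht.2⟩).le
  rw [hPu t ht (left_mem_Icc.2 hpos), hUu t ⟨ht₀.le, ht.2⟩ (left_mem_Icc.2 hpos),
    ← h.bc_zero t ⟨ht₀, ht.2⟩, neg_neg]

variable {σ : ℝ → ℝ} {v V : ℝ → ℝ → ℝ} {C : NNReal}

theorem flowDist_initial (h₁ : IsSolOn p s₀ φ T s u) (h₂ : IsSolOn p s₀ φ T σ v)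
    (hUu : ∀ t ∈ Icc 0 T, EqOn (U t) (u t) (Icc 0 (s t)))
    (hVv : ∀ t ∈ Icc 0 T, EqOn (V t) (v t) (Icc 0 (σ t))) (A : ℝ) :
    flowDist A 0 s σ U V 0 = 0 := by
  have h0 : (0 : ℝ) ∈ Icc 0 T := left_mem_Icc.2 h₁.T_pos.le
  have hu := hUu 0 h0
  have hv := hVv 0 h0
  have hs₀ : 0 ≤ s₀ := h₁.init_s ▸ (h₁.s_pos 0 h0).le
  rw [h₁.init_s] at hu
  rw [h₂.init_s] at hv
  rw [flowDist, h₁.init_s, h₂.init_s]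
  exact enthalpyDist_eq_zero A hs₀ fun x hx => by
    rw [hu hx, hv hx, h₁.init x hx, h₂.init x hx]

theorem exists_stefanPair (h₁ : IsSolOn p s₀ φ T s u) (h₂ : IsSolOn p s₀ φ T σ v)
    (hU : Continuous (Function.uncurry U)) (hUu : ∀ t ∈ Icc 0 T, EqOn (U t) (u t) (Icc 0 (s t)))
    (hV : Continuous (Function.uncurry V)) (hVv : ∀ t ∈ Icc 0 T, EqOn (V t) (v t) (Icc 0 (σ t)))
    (hC : LipschitzOnWith C (fun x : ℝ => x ^ p) ((U · 0) '' Icc 0 T ∪ (V · 0) '' Icc 0 T))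
    (ha : 0 < a) (haT : a ≤ T) : ∃ P R, StefanPair C a T s σ U P V R := by
  obtain ⟨P, hP, hPu⟩ := h₁.exists_grad_extension ha haT
  obtain ⟨R, hR, hRv⟩ := h₂.exists_grad_extension ha haT
  refine ⟨P, R, C.2, h₁.stefanFlow hU hUu hP hPu ha, h₂.stefanFlow hV hVv hR hRv ha,
    fun t ht => ?_⟩
  have ht' : t ∈ Icc 0 T := ⟨ha.le.trans ht.1, ht.2⟩
  have hlip := hC.dist_le_mul _ (Or.inl (mem_image_of_mem _ ht')) _
    (Or.inr (mem_image_of_mem _ ht'))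
  rw [h₁.grad_fixed_boundary hUu hPu ha ht, h₂.grad_fixed_boundary hVv hRv ha ht, neg_sub_neg,
    abs_sub_comm]
  exact hlip

end IsSolOn

theorem stmt_8_general {p T s₀ : ℝ} {φ s σ : ℝ → ℝ} {u v : ℝ → ℝ → ℝ} (hp : 1 ≤ p)
    (h₁ : IsSolOn p s₀ φ T s u) (h₂ : IsSolOn p s₀ φ T σ v) :
    ∀ t ∈ Icc 0 T, s t = σ t ∧ EqOn (u t) (v t) (Icc 0 (s t)) := by
  obtain ⟨U, hU, hUu⟩ := h₁.exists_temp_extension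
  obtain ⟨V, hV, hVv⟩ := h₂.exists_temp_extension
  obtain ⟨A, hA⟩ := exists_lipschitzOnWith_rpow hp
    ((isCompact_Icc.image (hU.uncurry_right 0)).union (isCompact_Icc.image (hV.uncurry_right 0)))
  have hF₀ : flowDist A 0 s σ U V 0 = 0 := h₁.flowDist_initial h₂ hUu hVv A
  intro t ht
  have hF : flowDist A 0 s σ U V t ≤ 0 :=
    StefanPair.flowDist_nonpos (fun a ha => h₁.exists_stefanPair h₂ hU hUu hV hVv hA ha.1 ha.2)
      (continuousOn_enthalpyDist A 0 h₁.s_cont h₂.s_cont hU hV) hF₀ ht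
  obtain ⟨hst, hUV⟩ := eq_and_eqOn_of_enthalpyDist_nonpos (h₁.s_pos t ht) (h₂.s_pos t ht)
    (hU.uncurry_left t) (hV.uncurry_left t)
    (fun x hx => (h₁.u_nonneg t ht x hx).trans_eq (hUu t ht hx).symm)
    (fun x hx => (h₂.u_nonneg t ht x hx).trans_eq (hVv t ht hx).symm) hF
  exact ⟨hst, ((hUu t ht).symm.trans hUV).trans (hst ▸ hVv t ht)⟩

/-- Proposition 2.3: uniqueness of solutions of problem (P) on `(0,T]`. -/
theorem stmt_8 (p : ℝ) (hp : 1 < p) (T : ℝ) (hT : 0 < T) (s₀ : ℝ) (φ : ℝ → ℝ)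
    (hW : memW s₀ φ) (s σ : ℝ → ℝ) (u v : ℝ → ℝ → ℝ)
    (h1 : IsSolOn p s₀ φ T s u) (h2 : IsSolOn p s₀ φ T σ v) :
    (∀ t ∈ Icc 0 T, s t = σ t) ∧
    ∀ t ∈ Icc 0 T, ∀ x ∈ Icc 0 (s t), u t x = v t x :=
  ⟨fun t ht => (stmt_8_general hp.le h1 h2 t ht).1,
    fun t ht _ hx => (stmt_8_general hp.le h1 h2 t ht).2 hx⟩
end
end
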